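/- arXiv:0711.3159 — 4 statements merged into one kernel-verified Lean document; each statement's English description precedes it below -/
import Mathlib

section
/- Let G be an arbitrary set of positive integers. Then there exists an infinite set R = {r₁, r₂, …} of positive integers such that for every positive integer k, the set R^k = {r₁^k, r₂^k, …} of k-th powers of elements of R is intersective if and only if k ∈ G. -/
open Filter MeasureTheory

/-- The upper (Banach) density of a set of integers:
`limsup_{N→∞} |Λ ∩ {-N,…,N}| / (2N+1)`. -/
noncomputable def upperDensity (Λ : Set ℤ) : ℝ :=
  letI := Classical.decPred fun x : ℤ => x ∈ Λ
  limsup (fun N : ℕ =>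
    (((Finset.Icc (-(N : ℤ)) (N : ℤ)).filter fun x => x ∈ Λ).card : ℝ) / (2 * N + 1))
    atTop

/-- A set `R` of integers is intersective if every set of integers of positive upper
density contains two elements whose difference is a nonzero element of `R`. -/
def Intersective (R : Set ℤ) : Prop :=
  ∀ Λ : Set ℤ, 0 < upperDensity Λ →
    ∃ r ∈ R, r ≠ 0 ∧ ∃ m : ℤ, m ∈ Λ ∧ m + r ∈ Λ

/-- The character `x ↦ exp (2πix)` of the real line. -/
noncomputable def unitExp (x : ℝ) : ℂ := Complex.exp ((2 * Real.pi * x : ℝ) * Complex.I)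

lemma unitExp_add (x y : ℝ) : unitExp (x + y) = unitExp x * unitExp y := by
  unfold unitExp
  rw [← Complex.exp_add]
  push_cast
  ring_nf

lemma norm_unitExp (x : ℝ) : ‖unitExp x‖ = 1 := Complex.norm_exp_ofReal_mul_I _

lemma unitExp_re (x : ℝ) : (unitExp x).re = Real.cos (2 * Real.pi * x) :=
  Complex.exp_ofReal_mul_I_re _

lemma unitExp_intCast (z : ℤ) : unitExp z = 1 := by
  unfold unitExp
  rw [Complex.exp_eq_one_iff]
  exact ⟨z, by push_cast; ring⟩

lemma unitExp_zero : unitExp 0 = 1 := by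
  simpa using unitExp_intCast 0

lemma unitExp_neg (x : ℝ) : unitExp (-x) = starRingEnd ℂ (unitExp x) := by
  unfold unitExp
  rw [← Complex.exp_conj, map_mul, Complex.conj_ofReal, Complex.conj_I]
  push_cast
  ring_nf

lemma unitExp_eq_one_iff (x : ℝ) : unitExp x = 1 ↔ ∃ z : ℤ, x = z := by
  refine ⟨fun h => ?_, fun ⟨z, hz⟩ => hz ▸ unitExp_intCast z⟩
  unfold unitExp at h
  rw [Complex.exp_eq_one_iff] at h
  obtain ⟨z, hz⟩ := h
  refine ⟨z, ?_⟩
  have h2 := congrArg Complex.im hz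
  simp at h2
  have : (2 * Real.pi) * x = (2 * Real.pi) * z := by linarith
  exact mul_left_cancel₀ (by positivity) this

/-- The average of the first `N` terms of a sequence. -/
noncomputable def cesaro (u : ℕ → ℂ) (N : ℕ) : ℂ := (∑ n ∈ Finset.range N, u n) / N

lemma cesaro_const_mul (c : ℂ) (u : ℕ → ℂ) (N : ℕ) :
    cesaro (fun n => c * u n) N = c * cesaro u N := by
  simp [cesaro, ← Finset.mul_sum, mul_div_assoc]

lemma cesaro_sum {ι : Type*} (s : Finset ι) (u : ι → ℕ → ℂ) (N : ℕ) :
    cesaro (fun n => ∑ i ∈ s, u i n) N = ∑ i ∈ s, cesaro (u i) N := by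
  simp only [cesaro, Finset.sum_div]
  rw [Finset.sum_comm]

lemma norm_cesaro_le {u : ℕ → ℂ} {C : ℝ} (hC : 0 ≤ C) (hu : ∀ n, ‖u n‖ ≤ C) (N : ℕ) :
    ‖cesaro u N‖ ≤ C := by
  unfold cesaro
  rw [norm_div, Complex.norm_natCast]
  refine div_le_of_le_mul₀ (by positivity) hC ?_
  calc _ ≤ ∑ n ∈ Finset.range N, ‖u n‖ := norm_sum_le _ _
    _ ≤ ∑ n ∈ Finset.range N, C := Finset.sum_le_sum fun n _ => hu n
    _ = C * N := by simp [mul_comm]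

lemma tendsto_cesaro_add_one_sub {u : ℕ → ℂ} {C : ℝ} (hu : ∀ n, ‖u n‖ ≤ C) :
    Tendsto (fun N => cesaro (fun n => u (n + 1)) N - cesaro u N) atTop (nhds 0) := by
  have h : Tendsto (fun N : ℕ => (2 * C) / (N : ℝ)) atTop (nhds 0) :=
    tendsto_const_div_atTop_nhds_zero_nat _
  refine squeeze_zero_norm (fun N => ?_) h
  unfold cesaro
  rw [← sub_div, norm_div, Complex.norm_natCast, ← Finset.sum_sub_distrib,
    Finset.sum_range_sub]
  gcongr
  calc _ ≤ ‖u N‖ + ‖u 0‖ := norm_sub_le _ _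
    _ ≤ 2 * C := by linarith [hu N, hu 0]

lemma tendsto_cesaro_shift_sub {u : ℕ → ℂ} {C : ℝ} (hu : ∀ n, ‖u n‖ ≤ C) (h : ℕ) :
    Tendsto (fun N => cesaro (fun n => u (n + h)) N - cesaro u N) atTop (nhds 0) := by
  induction h with
  | zero => simp
  | succ h ih =>
    have := (tendsto_cesaro_add_one_sub (u := fun n => u (n + h)) fun n => hu (n + h)).add ih
    simp only [sub_add_sub_cancel, add_zero] at this
    convert this using 5
    ring_nf

lemma tendsto_cesaro_shift {u : ℕ → ℂ} {C : ℝ} (hu : ∀ n, ‖u n‖ ≤ C) (h : ℕ) {L : ℂ}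
    (hL : Tendsto (cesaro u) atTop (nhds L)) :
    Tendsto (cesaro fun n => u (n + h)) atTop (nhds L) := by
  have := (tendsto_cesaro_shift_sub hu h).add hL
  simpa using this

lemma norm_cesaro_sq_le (u : ℕ → ℂ) (N : ℕ) :
    ‖cesaro u N‖ ^ 2 ≤ ‖cesaro (fun n => u n * starRingEnd ℂ (u n)) N‖ := by
  have h1 : (∑ n ∈ Finset.range N, u n * starRingEnd ℂ (u n))
      = ((∑ n ∈ Finset.range N, ‖u n‖ ^ 2 : ℝ) : ℂ) := by
    push_cast
    exact Finset.sum_congr rfl fun n _ => Complex.mul_conj' _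
  unfold cesaro
  rw [h1, norm_div, norm_div, Complex.norm_real, Complex.norm_natCast, Real.norm_of_nonneg
    (by positivity), div_pow]
  rcases Nat.eq_zero_or_pos N with rfl | hN
  · simp
  have hN' : (0 : ℝ) < N := by exact_mod_cast hN
  rw [div_le_div_iff₀ (by positivity) hN']
  have h2 : ‖∑ n ∈ Finset.range N, u n‖ ^ 2 ≤ N * ∑ n ∈ Finset.range N, ‖u n‖ ^ 2 := by
    calc _ ≤ (∑ n ∈ Finset.range N, ‖u n‖) ^ 2 := by gcongr; exact norm_sum_le _ _
      _ ≤ _ := by simpa using sq_sum_le_card_mul_sum_sq (s := Finset.range N) (f := fun n => ‖u n‖)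
  nlinarith

/-- Van der Corput's trick: a bounded sequence whose nontrivial autocorrelations have mean zero
has mean zero. -/
lemma tendsto_cesaro_of_correlation {u : ℕ → ℂ} (hu : ∀ n, ‖u n‖ ≤ 1)
    (hc : ∀ h : ℕ, 0 < h →
      Tendsto (cesaro fun n => u (n + h) * starRingEnd ℂ (u n)) atTop (nhds 0)) :
    Tendsto (cesaro u) atTop (nhds 0) := by
  have hcorr : ∀ h h' : ℕ, h ≠ h' →
      Tendsto (cesaro fun n => u (n + h) * starRingEnd ℂ (u (n + h'))) atTop (nhds 0) := by
    have key : ∀ h d : ℕ, 0 < d →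
        Tendsto (cesaro fun n => u (n + (h + d)) * starRingEnd ℂ (u (n + h))) atTop (nhds 0) := by
      intro h d hd
      have := tendsto_cesaro_shift (u := fun n => u (n + d) * starRingEnd ℂ (u n)) (C := 1)
        (fun n => by
          rw [norm_mul, RCLike.norm_conj]
          exact mul_le_one₀ (hu _) (norm_nonneg _) (hu _)) h (hc d hd)
      simpa [add_assoc] using this
    intro h h' hne
    rcases lt_or_gt_of_ne hne with hlt | hlt
    · obtain ⟨d, rfl⟩ := Nat.exists_eq_add_of_lt hlt
      have h1 := key h (d + 1) (by omega)
      have h2 := (Complex.continuous_conj.tendsto 0).comp h1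
      rw [map_zero] at h2
      refine h2.congr fun N => ?_
      simp [cesaro, map_sum, mul_comm, add_assoc]
    · obtain ⟨d, rfl⟩ := Nat.exists_eq_add_of_lt hlt
      simpa [add_assoc] using key h' (d + 1) (by omega)
  rw [Metric.tendsto_atTop']
  intro ε hε
  obtain ⟨H, hH⟩ := exists_nat_gt (4 / ε ^ 2 + 2 / ε + 1)
  have hεsq : 0 < 4 / ε ^ 2 := by positivity
  have hε2 : 0 < 2 / ε := by positivity
  have hH1 : (1 : ℝ) < H := by linarith
  set V : ℕ → ℂ := fun n => ∑ h ∈ Finset.range H, u (n + h) with hV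
  have hVu : Tendsto (fun N => cesaro V N - H * cesaro u N) atTop (nhds 0) := by
    have : Tendsto (fun N => ∑ h ∈ Finset.range H, (cesaro (fun n => u (n + h)) N - cesaro u N))
        atTop (nhds (∑ h ∈ Finset.range H, 0)) :=
      tendsto_finsetSum _ fun h _ => tendsto_cesaro_shift_sub hu h
    simp only [Finset.sum_sub_distrib, Finset.sum_const_zero, Finset.sum_const, Finset.card_range,
      nsmul_eq_mul] at this
    refine this.congr fun N => ?_
    rw [hV, cesaro_sum]
  have hVV : ∀ N, cesaro (fun n => V n * starRingEnd ℂ (V n)) N =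
      ∑ h ∈ Finset.range H, ∑ h' ∈ Finset.range H,
        cesaro (fun n => u (n + h) * starRingEnd ℂ (u (n + h'))) N := by
    intro N
    simp only [hV, map_sum, Finset.sum_mul_sum]
    rw [cesaro_sum]
    refine Finset.sum_congr rfl fun h _ => ?_
    rw [cesaro_sum]
  have hoff : Tendsto (fun N => ∑ h ∈ Finset.range H, ∑ h' ∈ (Finset.range H).erase h,
        cesaro (fun n => u (n + h) * starRingEnd ℂ (u (n + h'))) N) atTop (nhds 0) := by
    have : Tendsto (fun N => ∑ h ∈ Finset.range H, ∑ h' ∈ (Finset.range H).erase h,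
        cesaro (fun n => u (n + h) * starRingEnd ℂ (u (n + h'))) N) atTop
        (nhds (∑ h ∈ Finset.range H, ∑ h' ∈ (Finset.range H).erase h, 0)) :=
      tendsto_finsetSum _ fun h _ => tendsto_finsetSum _ fun h' hh' =>
        hcorr h h' (Finset.ne_of_mem_erase hh').symm
    simpa using this
  have e1 := (Metric.tendsto_atTop'.1 hoff) 1 one_pos
  have e2 := (Metric.tendsto_atTop'.1 hVu) 1 one_pos
  obtain ⟨N1, hN1⟩ := e1
  obtain ⟨N2, hN2⟩ := e2
  refine ⟨max N1 N2, fun N hN => ?_⟩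
  have a1 := hN1 N (lt_of_le_of_lt (le_max_left _ _) hN)
  have a2 := hN2 N (lt_of_le_of_lt (le_max_right _ _) hN)
  rw [dist_zero_right] at a1 a2 ⊢
  have b1 : ‖cesaro (fun n => V n * starRingEnd ℂ (V n)) N‖ ≤ H + 1 := by
    rw [hVV]
    have : ∀ h ∈ Finset.range H, ∑ h' ∈ Finset.range H,
        cesaro (fun n => u (n + h) * starRingEnd ℂ (u (n + h'))) N =
        cesaro (fun n => u (n + h) * starRingEnd ℂ (u (n + h))) N +
        ∑ h' ∈ (Finset.range H).erase h,
          cesaro (fun n => u (n + h) * starRingEnd ℂ (u (n + h'))) N :=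
      fun h hh => (Finset.add_sum_erase _ _ hh).symm
    rw [Finset.sum_congr rfl this, Finset.sum_add_distrib]
    refine (norm_add_le _ _).trans (add_le_add ?_ a1.le)
    calc _ ≤ ∑ h ∈ Finset.range H, ‖cesaro (fun n => u (n + h) * starRingEnd ℂ (u (n + h))) N‖ :=
          norm_sum_le _ _
      _ ≤ ∑ h ∈ Finset.range H, 1 := Finset.sum_le_sum fun h _ =>
          norm_cesaro_le zero_le_one (fun n => by
            rw [norm_mul, RCLike.norm_conj]
            exact mul_le_one₀ (hu _) (norm_nonneg _) (hu _)) N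
      _ = H := by simp
  have b2 := (norm_cesaro_sq_le V N).trans b1
  have b3 : H * ‖cesaro u N‖ ≤ ‖cesaro V N‖ + 1 := by
    have : ‖(H : ℂ) * cesaro u N‖ ≤ ‖cesaro V N‖ + ‖cesaro V N - H * cesaro u N‖ := by
      have := norm_sub_le (cesaro V N) (cesaro V N - H * cesaro u N)
      simpa using this
    rw [norm_mul, Complex.norm_natCast] at this
    linarith
  by_contra! hcon
  have hv : H * ε - 1 ≤ ‖cesaro V N‖ := by nlinarith
  have hHε : 2 < H * ε := by
    have : 2 / ε < H := by linarith
    rwa [div_lt_iff₀ hε] at this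
  have hHε2 : 4 < (H - 1) * ε ^ 2 := by
    have : 4 / ε ^ 2 < H - 1 := by linarith
    rwa [div_lt_iff₀ (by positivity)] at this
  have hv2 : H * ε / 2 ≤ ‖cesaro V N‖ := by linarith
  have hv3 : (H * ε / 2) ^ 2 ≤ H + 1 := le_trans (by gcongr) b2
  have hb : ((H : ℝ) * ε / 2) ^ 2 = H * (H * ε ^ 2) / 4 := by ring
  have hc4 : (H : ℝ) * (H * ε ^ 2) ≥ H * (4 + ε ^ 2) := by
    gcongr; linarith
  nlinarith

lemma exists_common_denominator {s : Finset ℕ} {c : ℕ → ℝ}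
    (hc : ∀ j ∈ s, c j ∈ (Rat.castHom ℝ).fieldRange) :
    ∃ v : ℕ, 0 < v ∧ ∀ j ∈ s, ∃ z : ℤ, c j * v = z := by
  induction s using Finset.induction_on with
  | empty => exact ⟨1, one_pos, by simp⟩
  | insert a s ha ih =>
    obtain ⟨v, hv, h⟩ := ih fun j hj => hc j (Finset.mem_insert_of_mem hj)
    obtain ⟨q, hq⟩ := hc a (Finset.mem_insert_self _ _)
    have hq' : (q : ℝ) = c a := hq
    refine ⟨v * q.den, Nat.mul_pos hv q.den_pos, fun j hj => ?_⟩
    rcases Finset.mem_insert.1 hj with rfl | hj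
    · refine ⟨v * q.num, ?_⟩
      rw [← hq']
      have : (q : ℝ) * q.den = q.num := by exact_mod_cast Rat.mul_den_eq_num q
      push_cast
      rw [← this]
      ring
    · obtain ⟨z, hz⟩ := h j hj
      refine ⟨z * q.den, ?_⟩
      push_cast
      rw [← hz]
      ring

lemma tendsto_cesaro_unitExp_of_coeff_one {P : Polynomial ℝ}
    (h1 : P.coeff 1 ∉ (Rat.castHom ℝ).fieldRange)
    (h2 : ∀ j, 1 < j → P.coeff j ∈ (Rat.castHom ℝ).fieldRange) :
    Tendsto (cesaro fun n => unitExp (P.eval (n : ℝ))) atTop (nhds 0) := by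
  obtain ⟨v, hv, hvz⟩ := exists_common_denominator
    (s := (Finset.range (P.natDegree + 1)).filter (1 < ·)) (c := P.coeff)
    (fun j hj => h2 j (Finset.mem_filter.1 hj).2)
  have hper : ∀ n : ℕ, ∃ z : ℤ,
      P.eval ((n + v : ℕ) : ℝ) = P.eval (n : ℝ) + P.coeff 1 * v + z := by
    intro n
    have hterm : ∀ j ∈ Finset.range (P.natDegree + 1), ∃ z : ℤ,
        P.coeff j * ((n + v : ℕ) : ℝ) ^ j = P.coeff j * (n : ℝ) ^ j
          + (if j = 1 then P.coeff 1 * v else 0) + z := by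
      intro j hj
      rcases Nat.lt_trichotomy j 1 with hj1 | rfl | hj1
      · obtain rfl : j = 0 := by omega
        exact ⟨0, by simp⟩
      · exact ⟨0, by push_cast; simp; ring⟩
      · obtain ⟨z, hz⟩ := hvz j (Finset.mem_filter.2 ⟨hj, hj1⟩)
        obtain ⟨t, ht⟩ := sub_dvd_pow_sub_pow ((n : ℤ) + v) n j
        refine ⟨z * t, ?_⟩
        have ht' : ((n : ℝ) + v) ^ j - (n : ℝ) ^ j = v * t := by
          have := congrArg (Int.cast : ℤ → ℝ) ht
          push_cast at this
          rw [this]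
          ring
        rw [if_neg (by omega)]
        push_cast
        rw [← hz]
        linear_combination P.coeff j * ht'
    choose! z hz using hterm
    refine ⟨∑ j ∈ Finset.range (P.natDegree + 1), z j, ?_⟩
    rw [Polynomial.eval_eq_sum_range, Finset.sum_congr rfl hz, Finset.sum_add_distrib,
      Finset.sum_add_distrib, Polynomial.eval_eq_sum_range]
    push_cast
    congr 2
    rw [Finset.sum_ite_eq', if_pos]
    rw [Finset.mem_range]
    by_contra hcon
    exact h1 (by rw [Polynomial.coeff_eq_zero_of_natDegree_lt (by omega)]; exact zero_mem _)
  set c := unitExp (P.coeff 1 * v) with hc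
  have hc1 : c - 1 ≠ 0 := by
    rw [sub_ne_zero, hc, Ne, unitExp_eq_one_iff]
    rintro ⟨z, hz⟩
    refine h1 ⟨z / v, ?_⟩
    have : (v : ℝ) ≠ 0 := by positivity
    simp only [eq_ratCast, Rat.cast_div, Rat.cast_intCast, Rat.cast_natCast]
    rw [← hz]
    field_simp
  have hb : ∀ n : ℕ, ‖unitExp (P.eval (n : ℝ))‖ ≤ 1 := fun n => (norm_unitExp _).le
  have hs := tendsto_cesaro_shift_sub hb v
  have heq : ∀ N, cesaro (fun n => unitExp (P.eval ((n + v : ℕ) : ℝ))) N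
      = c * cesaro (fun n => unitExp (P.eval (n : ℝ))) N := by
    intro N
    rw [← cesaro_const_mul]
    congr 1
    funext n
    obtain ⟨z, hz⟩ := hper n
    rw [hz, unitExp_add, unitExp_add, unitExp_intCast, hc]
    ring
  have h3 := (hs.const_mul (c - 1)⁻¹)
  rw [mul_zero] at h3
  refine h3.congr fun N => ?_
  rw [heq]
  field_simp

lemma coeff_taylor_sub (P : Polynomial ℝ) (h : ℝ) (i : ℕ) :
    (Polynomial.taylor h P - P).coeff i =
      ∑ j ∈ (Finset.range (P.natDegree + 1)).filter (i < ·),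
        (j.choose i : ℝ) * P.coeff j * h ^ (j - i) := by
  rw [Polynomial.coeff_sub, Polynomial.taylor_coeff, Polynomial.hasseDeriv_apply,
    Polynomial.sum_def, Polynomial.eval_finsetSum]
  simp only [Polynomial.eval_monomial]
  rw [Finset.sum_subset (s₂ := Finset.range (P.natDegree + 1))
    (fun x hx => Finset.mem_range.2 (Nat.lt_succ_of_le (Polynomial.le_natDegree_of_mem_supp x hx)))
    (fun x _ hx => by simp [Polynomial.notMem_support_iff.1 hx])]
  rw [← Finset.sum_filter_add_sum_filter_not _ (i < ·), add_sub_assoc, add_eq_left, sub_eq_zero]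
  have : ∀ j ∈ (Finset.range (P.natDegree + 1)).filter (¬ i < ·),
      (j.choose i : ℝ) * P.coeff j * h ^ (j - i) = if j = i then P.coeff i else 0 := by
    intro j hj
    have hj' := (Finset.mem_filter.1 hj).2
    split_ifs with hji
    · subst hji; simp
    · rw [Nat.choose_eq_zero_of_lt (by omega)]; simp
  rw [Finset.sum_congr rfl this, Finset.sum_ite_eq']
  split_ifs with hi
  · rfl
  · simp only [Finset.mem_filter, Finset.mem_range, lt_irrefl, not_false_eq_true, and_true] at hi
    exact (Polynomial.coeff_eq_zero_of_natDegree_lt (by omega)).symm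

lemma tendsto_cesaro_unitExp_of_leading_irrational (i : ℕ) {P : Polynomial ℝ}
    (h1 : P.coeff (i + 1) ∉ (Rat.castHom ℝ).fieldRange)
    (h2 : ∀ j, i + 1 < j → P.coeff j ∈ (Rat.castHom ℝ).fieldRange) :
    Tendsto (cesaro fun n => unitExp (P.eval (n : ℝ))) atTop (nhds 0) := by
  induction i generalizing P with
  | zero => exact tendsto_cesaro_unitExp_of_coeff_one h1 h2
  | succ i ih =>
    refine tendsto_cesaro_of_correlation (fun n => (norm_unitExp _).le) fun h hh => ?_
    have hterm : ∀ l j, i + 1 + 1 < j → (j.choose l : ℝ) * P.coeff j * (h : ℝ) ^ (j - l) ∈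
        (Rat.castHom ℝ).fieldRange := fun l j hj =>
      mul_mem (mul_mem (natCast_mem _ _) (h2 j hj)) (pow_mem (natCast_mem _ _) _)
    have := ih (P := Polynomial.taylor (h : ℝ) P - P) ?_ ?_
    · refine this.congr fun N => ?_
      congr 1
      funext n
      rw [Polynomial.eval_sub, Polynomial.taylor_eval, sub_eq_add_neg, unitExp_add, unitExp_neg]
      push_cast
      rfl
    · rw [coeff_taylor_sub, ← Finset.add_sum_erase _ _ (a := i + 1 + 1)]
      · intro hcon
        have hrest := sum_mem (S := (Rat.castHom ℝ).fieldRange)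
          (t := ((Finset.range (P.natDegree + 1)).filter (i + 1 < ·)).erase (i + 1 + 1))
          (f := fun j => (j.choose (i + 1) : ℝ) * P.coeff j * (h : ℝ) ^ (j - (i + 1)))
          (fun j hj => hterm _ j (by
            have := Finset.mem_erase.1 hj
            have := (Finset.mem_filter.1 this.2).2
            omega))
        have hmain := sub_mem hcon hrest
        rw [add_sub_cancel_right] at hmain
        refine h1 ?_
        have hne1 : ((i + 1 + 1).choose (i + 1) : ℝ) ≠ 0 := by
          exact_mod_cast (Nat.choose_pos (by omega)).ne'
        have hne2 : (h : ℝ) ^ (i + 1 + 1 - (i + 1)) ≠ 0 := by positivity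
        have := div_mem (div_mem hmain (pow_mem (natCast_mem _ h) (i + 1 + 1 - (i + 1))))
          (natCast_mem (Rat.castHom ℝ).fieldRange ((i + 1 + 1).choose (i + 1)))
        rwa [mul_div_cancel_right₀ _ hne2, mul_div_cancel_left₀ _ hne1] at this
      · rw [Finset.mem_filter, Finset.mem_range]
        refine ⟨?_, by omega⟩
        by_contra hcon
        exact h1 (by rw [Polynomial.coeff_eq_zero_of_natDegree_lt (by omega)]; exact zero_mem _)
    · intro j hj
      rw [coeff_taylor_sub]
      exact sum_mem fun l hl => hterm _ l (by have := (Finset.mem_filter.1 hl).2; omega)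

/-- **Weyl's theorem**: the exponential sums of a real polynomial with an irrational nonconstant
coefficient have mean zero. -/
lemma tendsto_cesaro_unitExp {P : Polynomial ℝ} {i : ℕ} (hi : 0 < i)
    (h : Irrational (P.coeff i)) :
    Tendsto (cesaro fun n => unitExp (P.eval (n : ℝ))) atTop (nhds 0) := by
  have hirr : ∀ x : ℝ, Irrational x ↔ x ∉ (Rat.castHom ℝ).fieldRange := fun x => Iff.rfl
  classical
  have hb : ∀ j, Irrational (P.coeff j) → j ≤ P.natDegree := fun j hj => by
    by_contra hcon
    rw [Polynomial.coeff_eq_zero_of_natDegree_lt (by omega)] at hj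
    exact not_irrational_zero hj
  set m := Nat.findGreatest (fun j => Irrational (P.coeff j)) P.natDegree with hm
  have hm1 : Irrational (P.coeff m) := Nat.findGreatest_spec (P := fun j => Irrational (P.coeff j))
    (hb i h) h
  have hm2 : i ≤ m := Nat.le_findGreatest (hb i h) h
  obtain ⟨l, hl⟩ : ∃ l, m = l + 1 := ⟨m - 1, by omega⟩
  rw [hl] at hm1
  refine tendsto_cesaro_unitExp_of_leading_irrational l hm1 fun j hj => ?_
  by_contra hcon
  have := Nat.le_findGreatest (P := fun j => Irrational (P.coeff j)) (hb j hcon) hcon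
  omega

lemma unitExp_natCast_mul (m : ℕ) (x : ℝ) : unitExp (m * x) = unitExp x ^ m := by
  induction m with
  | zero => simp [unitExp_zero]
  | succ m ih => rw [pow_succ, ← ih, ← unitExp_add]; push_cast; ring_nf

lemma sin_sq_eq_unitExp (x : ℝ) :
    ((Real.sin (Real.pi * x) ^ 2 : ℝ) : ℂ) =
      (-1 / 4) * unitExp (-x) * (unitExp x + -1) ^ 2 := by
  have h1 : unitExp x * unitExp (-x) = 1 := by rw [← unitExp_add, add_neg_cancel, unitExp_zero]
  have h2 : unitExp x + unitExp (-x) = 2 * (Real.cos (2 * Real.pi * x) : ℝ) := by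
    rw [unitExp_neg, Complex.add_conj, unitExp_re]
    push_cast; ring
  have h3 : Real.sin (Real.pi * x) ^ 2 = 1 / 2 - Real.cos (2 * Real.pi * x) / 2 := by
    rw [Real.sin_sq_eq_half_sub]; ring_nf
  rw [h3]
  push_cast
  push_cast at h2
  linear_combination (1 / 4 : ℂ) * h2 + (1 / 4) * (unitExp x - 2) * h1

/-- Fourier coefficients of the powers of `sin² (πx)`, shifted by the degree. -/
noncomputable def sinPowCoeff (M j : ℕ) : ℂ :=
  (-1 / 4) ^ M * ((-1) ^ (2 * M - j) * ((2 * M).choose j : ℂ))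

lemma sin_sq_pow_eq_sum (M : ℕ) (x : ℝ) :
    (((Real.sin (Real.pi * x) ^ 2) ^ M : ℝ) : ℂ) =
      ∑ j ∈ Finset.range (2 * M + 1), sinPowCoeff M j * unitExp (((j : ℝ) - M) * x) := by
  rw [Complex.ofReal_pow, sin_sq_eq_unitExp, mul_pow, mul_pow, ← pow_mul, add_pow, Finset.mul_sum]
  refine Finset.sum_congr rfl fun j _ => ?_
  have : ((j : ℝ) - M) * x = (M : ℝ) * (-x) + j * x := by ring
  rw [this, unitExp_add, unitExp_natCast_mul, unitExp_natCast_mul, sinPowCoeff]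
  ring

/-- The mean value of `sin² (πx) ^ M`. -/
noncomputable def sinPowMean (M : ℕ) : ℝ := M.centralBinom / 4 ^ M

lemma sinPowCoeff_self (M : ℕ) : sinPowCoeff M M = sinPowMean M := by
  unfold sinPowCoeff sinPowMean
  have : 2 * M - M = M := by omega
  rw [this, ← mul_assoc, ← mul_pow, Nat.centralBinom_eq_two_mul_choose]
  norm_num
  rw [one_div, inv_pow]
  ring

lemma sinPowMean_lower (M : ℕ) (hM : 0 < M) : 1 / (2 * (M : ℝ)) ≤ sinPowMean M := by
  unfold sinPowMean
  have h := Nat.four_pow_le_two_mul_self_mul_centralBinom M hM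
  have h' : (4 : ℝ) ^ M ≤ 2 * M * M.centralBinom := by exact_mod_cast h
  have hM' : (0 : ℝ) < M := by exact_mod_cast hM
  rw [div_le_div_iff₀ (by positivity) (by positivity)]
  linarith

/-- A nonnegative weight concentrated on the `n` for which `√2 n ^ b` is far from the integers
for all `b ∈ B`. -/
noncomputable def bohrWeight (M : ℕ) (B : Finset ℕ) (n : ℕ) : ℝ :=
  ∏ b ∈ B, (Real.sin (Real.pi * (Real.sqrt 2 * (n : ℝ) ^ b)) ^ 2) ^ M

lemma bohrWeight_nonneg (M : ℕ) (B : Finset ℕ) (n : ℕ) : 0 ≤ bohrWeight M B n :=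
  Finset.prod_nonneg fun _ _ => by positivity

lemma bohrWeight_le_one (M : ℕ) (B : Finset ℕ) (n : ℕ) : bohrWeight M B n ≤ 1 :=
  Finset.prod_le_one (fun _ _ => by positivity) fun _ _ =>
    pow_le_one₀ (by positivity) (Real.sin_sq_le_one _)

lemma bohrWeight_le {M : ℕ} {B : Finset ℕ} {n b : ℕ} (hb : b ∈ B)
    (hs : Real.sin (Real.pi * (Real.sqrt 2 * (n : ℝ) ^ b)) ^ 2 ≤ 1 / 2) :
    bohrWeight M B n ≤ (1 / 2) ^ M := by
  unfold bohrWeight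
  rw [← Finset.mul_prod_erase _ _ hb, ← mul_one ((1 / 2 : ℝ) ^ M)]
  refine mul_le_mul (by gcongr) ?_ (Finset.prod_nonneg fun _ _ => by positivity) (by positivity)
  exact Finset.prod_le_one (fun _ _ => by positivity) fun _ _ =>
    pow_le_one₀ (by positivity) (Real.sin_sq_le_one _)

lemma bohrWeight_insert_mul (M : ℕ) {B : Finset ℕ} {b : ℕ} (hb : b ∉ B) (q n : ℕ)
    (P : Polynomial ℝ) :
    (bohrWeight M (insert b B) (q * n) : ℂ) * unitExp (P.eval (n : ℝ)) =
      ∑ j ∈ Finset.range (2 * M + 1), sinPowCoeff M j * ((bohrWeight M B (q * n) : ℂ) *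
        unitExp ((P + Polynomial.monomial b
          (((j : ℝ) - M) * (Real.sqrt 2 * (q : ℝ) ^ b))).eval (n : ℝ))) := by
  rw [bohrWeight, Finset.prod_insert hb, Complex.ofReal_mul, sin_sq_pow_eq_sum, Finset.sum_mul,
    Finset.sum_mul]
  refine Finset.sum_congr rfl fun j _ => ?_
  rw [Polynomial.eval_add, Polynomial.eval_monomial, unitExp_add, bohrWeight]
  have : ((j : ℝ) - M) * (Real.sqrt 2 * (q : ℝ) ^ b) * (n : ℝ) ^ b =
      ((j : ℝ) - M) * (Real.sqrt 2 * ((q * n : ℕ) : ℝ) ^ b) := by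
    push_cast; ring
  rw [this]
  ring

lemma tendsto_cesaro_bohrWeight_mul (M : ℕ) (B : Finset ℕ) (q : ℕ) {P : Polynomial ℝ}
    (hP : ∀ b ∈ B, P.coeff b = 0) {i : ℕ} (hi : 0 < i) (h : Irrational (P.coeff i)) :
    Tendsto (cesaro fun n => (bohrWeight M B (q * n) : ℂ) * unitExp (P.eval (n : ℝ)))
      atTop (nhds 0) := by
  induction B using Finset.induction_on generalizing P with
  | empty => simpa [bohrWeight] using tendsto_cesaro_unitExp hi h
  | insert b B hb ih =>
    simp only [bohrWeight_insert_mul M hb]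
    have hfun : ∀ j ∈ Finset.range (2 * M + 1), Tendsto (cesaro fun n =>
        sinPowCoeff M j * ((bohrWeight M B (q * n) : ℂ) *
        unitExp ((P + Polynomial.monomial b
          (((j : ℝ) - M) * (Real.sqrt 2 * (q : ℝ) ^ b))).eval (n : ℝ)))) atTop (nhds 0) := by
      intro j _
      have hib : i ≠ b := by
        rintro rfl
        rw [hP i (Finset.mem_insert_self _ _)] at h
        exact not_irrational_zero h
      have := ih (P := P + Polynomial.monomial b (((j : ℝ) - M) * (Real.sqrt 2 * (q : ℝ) ^ b)))
        (fun c hc => by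
          rw [Polynomial.coeff_add, hP c (Finset.mem_insert_of_mem hc),
            Polynomial.coeff_monomial_of_ne _ (by rintro rfl; exact hb hc), add_zero])
        (by rwa [Polynomial.coeff_add, Polynomial.coeff_monomial_of_ne _ hib, add_zero])
      have h2 := this.const_mul (sinPowCoeff M j)
      rw [mul_zero] at h2
      exact h2.congr fun N => (cesaro_const_mul _ _ _).symm
    have := tendsto_finsetSum _ hfun
    rw [Finset.sum_const_zero] at this
    exact this.congr fun N => (cesaro_sum _ _ _).symm

lemma cesaro_one_tendsto : Tendsto (cesaro fun _ => 1) atTop (nhds 1) := by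
  refine tendsto_const_nhds.congr' ?_
  filter_upwards [eventually_gt_atTop 0] with N hN
  have : (N : ℂ) ≠ 0 := by exact_mod_cast hN.ne'
  simp [cesaro, this]

lemma tendsto_cesaro_bohrWeight (M : ℕ) {B : Finset ℕ} (hB : ∀ b ∈ B, 0 < b) {q : ℕ}
    (hq : 0 < q) :
    Tendsto (cesaro fun n => (bohrWeight M B (q * n) : ℂ))
      atTop (nhds ((sinPowMean M ^ B.card : ℝ) : ℂ)) := by
  induction B using Finset.induction_on with
  | empty => simpa [bohrWeight] using cesaro_one_tendsto
  | insert b B hb ih =>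
    have ih := ih fun c hc => hB c (Finset.mem_insert_of_mem hc)
    have heq := fun n => bohrWeight_insert_mul M hb q n 0
    simp only [Polynomial.eval_zero, unitExp_zero, mul_one, zero_add] at heq
    simp only [heq]
    have hfun : ∀ j ∈ Finset.range (2 * M + 1), Tendsto (cesaro fun n =>
        sinPowCoeff M j * ((bohrWeight M B (q * n) : ℂ) *
        unitExp ((Polynomial.monomial b
          (((j : ℝ) - M) * (Real.sqrt 2 * (q : ℝ) ^ b))).eval (n : ℝ)))) atTop
        (nhds (if j = M then ((sinPowMean M ^ (B.card + 1) : ℝ) : ℂ) else 0)) := by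
      intro j _
      split_ifs with hj
      · subst hj
        have h2 := ih.const_mul (sinPowCoeff j j)
        rw [sinPowCoeff_self, ← Complex.ofReal_mul, ← pow_succ'] at h2
        refine h2.congr fun N => ?_
        rw [cesaro_const_mul, sinPowCoeff_self]
        simp [unitExp_zero]
      · have := tendsto_cesaro_bohrWeight_mul M B q
          (P := Polynomial.monomial b (((j : ℝ) - M) * (Real.sqrt 2 * (q : ℝ) ^ b)))
          (fun c hc => Polynomial.coeff_monomial_of_ne _ (by rintro rfl; exact hb hc))
          (hB b (Finset.mem_insert_self _ _)) (by
            rw [Polynomial.coeff_monomial, if_pos rfl]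
            have h1 := (irrational_sqrt_two.mul_natCast (m := q ^ b) (by positivity)).intCast_mul
              (m := (j : ℤ) - M) (by omega)
            exact_mod_cast h1)
        have h2 := this.const_mul (sinPowCoeff M j)
        rw [mul_zero] at h2
        exact h2.congr fun N => (cesaro_const_mul _ _ _).symm
    have := tendsto_finsetSum _ hfun
    rw [Finset.sum_ite_eq', if_pos (Finset.mem_range.2 (by omega)),
      ← Finset.card_insert_of_notMem hb] at this
    exact this.congr fun N => (cesaro_sum _ _ _).symm

lemma exists_sinPow_small (l : ℕ) {ε : ℝ} (hε : 0 < ε) :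
    ∃ M : ℕ, 0 < sinPowMean M ∧ (1 / 2 : ℝ) ^ M < ε * sinPowMean M ^ l := by
  have h1 : Tendsto (fun M : ℕ => 2 ^ l * ((M : ℝ) ^ l * (1 / 2 : ℝ) ^ M)) atTop
      (nhds (2 ^ l * 0)) :=
    (tendsto_pow_const_mul_const_pow_of_abs_lt_one l (by norm_num [abs_of_pos])).const_mul _
  rw [mul_zero] at h1
  obtain ⟨M, hM, hM0⟩ := ((h1.eventually (gt_mem_nhds hε)).and (eventually_gt_atTop 0)).exists
  have hM' : (0 : ℝ) < M := by exact_mod_cast hM0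
  have h2 := sinPowMean_lower M hM0
  have h3 : 0 < sinPowMean M := lt_of_lt_of_le (by positivity) h2
  refine ⟨M, h3, ?_⟩
  have h4 : (1 / (2 * (M : ℝ))) ^ l ≤ sinPowMean M ^ l := by gcongr
  refine lt_of_lt_of_le ?_ (mul_le_mul_of_nonneg_left h4 hε.le)
  rw [one_div (2 * (M : ℝ)), inv_pow, ← div_eq_mul_inv, lt_div_iff₀ (by positivity), mul_pow]
  linarith

lemma exists_measure_of_positive {X : Type*} [TopologicalSpace X] [CompactSpace X] [T2Space X]
    [MeasurableSpace X] [BorelSpace X] (ψ : C(X, ℝ) →ₗ[ℝ] ℝ)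
    (hψ : ∀ f : C(X, ℝ), (∀ x, 0 ≤ f x) → 0 ≤ ψ f) :
    ∃ μ : Measure X, IsFiniteMeasure μ ∧ ∀ f : C(X, ℝ), ∫ x, f x ∂μ = ψ f := by
  let Ψ : CompactlySupportedContinuousMap X ℝ →ₚ[ℝ] ℝ := PositiveLinearMap.mk₀
    { toFun := fun f => ψ f.toContinuousMap
      map_add' := fun f g => ψ.map_add f.toContinuousMap g.toContinuousMap
      map_smul' := fun c f => ψ.map_smul c f.toContinuousMap }
    (fun f hf => hψ _ fun x => hf x)
  refine ⟨RealRMK.rieszMeasure Ψ, inferInstance, fun f => ?_⟩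
  exact RealRMK.integral_rieszMeasure Ψ (CompactlySupportedContinuousMap.continuousMapEquiv f)

/-- If no convex combination of a family of continuous functions exceeds `-δ` everywhere, then
some finite measure gives all members of the family a uniformly negative integral. -/
lemma exists_convexHull_or_exists_measure {X : Type*} [TopologicalSpace X] [CompactSpace X]
    [T2Space X] [MeasurableSpace X] [BorelSpace X] (s : Set C(X, ℝ)) {δ : ℝ} (hδ : 0 < δ) :
    (∃ f ∈ convexHull ℝ s, ∀ x, -δ < f x) ∨
      ∃ μ : Measure X, IsFiniteMeasure μ ∧ ∃ v : ℝ, v < 0 ∧ v < -(δ / 2) * μ.real Set.univ ∧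
        ∀ f ∈ s, ∫ x, f x ∂μ ≤ v := by
  by_cases hex : ∃ f ∈ convexHull ℝ s, ∀ x, -δ < f x
  · exact Or.inl hex
  right
  have hopen : IsOpen {f : C(X, ℝ) | ∀ x, -δ < f x} := by
    have := ContinuousMap.isOpen_setOfPred_mapsTo (X := X) (Y := ℝ) isCompact_univ
      (isOpen_Ioi (a := -δ))
    convert this using 1
    ext f
    simp [Set.MapsTo]
  have hconv : Convex ℝ {f : C(X, ℝ) | ∀ x, -δ < f x} := by
    intro f hf g hg a b ha hb hab x
    have h1 := hf x
    have h2 := hg x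
    simp only [ContinuousMap.add_apply, ContinuousMap.smul_apply, smul_eq_mul]
    rcases ha.eq_or_lt with rfl | ha
    · obtain rfl : b = 1 := by linarith
      linarith
    · nlinarith
  obtain ⟨φ, u, hφ1, hφ2⟩ := geometric_hahn_banach_open hconv hopen (convex_convexHull ℝ s)
    (Set.disjoint_left.2 fun f hf hf' => hex ⟨f, hf', hf⟩)
  have hpos : ∀ f : C(X, ℝ), (∀ x, 0 ≤ f x) → 0 ≤ (-φ.toLinearMap) f := by
    intro f hf
    by_contra! hcon
    have hcon' : 0 < φ f := by simpa using hcon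
    obtain ⟨n, hn⟩ := exists_nat_gt (u / φ f)
    have h1 := hφ1 ((n : ℝ) • f) fun x => by
      have : 0 ≤ (n : ℝ) * f x := mul_nonneg (by positivity) (hf x)
      simp only [ContinuousMap.smul_apply, smul_eq_mul]
      linarith
    rw [div_lt_iff₀ hcon'] at hn
    simp only [map_smul, smul_eq_mul] at h1
    linarith
  obtain ⟨μ, hμ, hintegral⟩ := exists_measure_of_positive _ hpos
  refine ⟨μ, hμ, -u, ?_, ?_, fun f hf => ?_⟩
  · have := hφ1 0 fun x => by simpa using hδ
    simpa using this
  · have h1 := hφ1 (ContinuousMap.const X (-(δ / 2))) fun x => by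
      simp only [ContinuousMap.const_apply]; linarith
    have h2 := hintegral (ContinuousMap.const X (-(δ / 2)))
    simp only [ContinuousMap.const_apply, integral_const, smul_eq_mul, LinearMap.neg_apply,
      ContinuousLinearMap.coe_coe] at h2
    linarith
  · have h1 := hφ2 f (subset_convexHull ℝ s hf)
    rw [hintegral]
    simpa using h1

/-- All the numbers `√2 n ^ b`, `b ∈ B`, are at distance more than `1 / 4` from the integers. -/
def FarFromInt (B : Finset ℕ) (n : ℕ) : Prop :=
  ∀ b ∈ B, 1 / 2 < Real.sin (Real.pi * (Real.sqrt 2 * (n : ℝ) ^ b)) ^ 2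

/-- The function `x ↦ cos (2π n ^ k x)` on the unit interval. -/
noncomputable def cosPow (k n : ℕ) : C(Set.Icc (0 : ℝ) 1, ℝ) :=
  ⟨fun x => Real.cos (2 * Real.pi * ((n : ℝ) ^ k * x)), by fun_prop⟩

/-- Rational points of the unit interval whose denominator does not divide `m !`. -/
def factorialExceptional (m : ℕ) : Set (Set.Icc (0 : ℝ) 1) :=
  {x | ¬ Irrational (x : ℝ) ∧ ¬ ∃ z : ℤ, (m.factorial : ℝ) * x = z}

lemma measurableSet_factorialExceptional (m : ℕ) :
    MeasurableSet (factorialExceptional m) := by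
  refine Set.Countable.measurableSet ?_
  have h : (Set.range ((↑) : ℚ → ℝ)).Countable := Set.countable_range _
  refine (h.preimage (Subtype.val_injective (p := (· ∈ Set.Icc (0 : ℝ) 1)))).mono ?_
  intro x hx
  exact not_not.1 hx.1

lemma antitone_factorialExceptional : Antitone factorialExceptional := by
  intro a b hab x hx
  refine ⟨hx.1, fun ⟨z, hz⟩ => hx.2 ?_⟩
  obtain ⟨c, hc⟩ := Nat.factorial_dvd_factorial hab
  refine ⟨c * z, ?_⟩
  rw [hc]
  push_cast
  rw [← hz]
  ring

lemma iInter_factorialExceptional : ⋂ m, factorialExceptional m = ∅ := by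
  rw [Set.eq_empty_iff_forall_notMem]
  intro x hx
  rw [Set.mem_iInter] at hx
  obtain ⟨q, hq⟩ := not_not.1 (hx 0).1
  refine (hx q.den).2 ?_
  obtain ⟨c, hc⟩ := Nat.dvd_factorial q.den_pos le_rfl
  refine ⟨c * q.num, ?_⟩
  have : (q : ℝ) * q.den = q.num := by exact_mod_cast Rat.mul_den_eq_num q
  rw [hc, ← hq]
  push_cast
  rw [← this]
  ring

lemma tendsto_measure_factorialExceptional (μ : Measure (Set.Icc (0 : ℝ) 1)) [IsFiniteMeasure μ] :
    Tendsto (fun m => μ.real (factorialExceptional m)) atTop (nhds 0) := by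
  have h := tendsto_measure_iInter_atTop (μ := μ)
    (fun m => (measurableSet_factorialExceptional m).nullMeasurableSet)
    antitone_factorialExceptional ⟨0, measure_ne_top _ _⟩
  rw [iInter_factorialExceptional, measure_empty] at h
  exact (ENNReal.tendsto_toReal ENNReal.zero_ne_top).comp h

/-- The weighted averages of `cos (2π (q n) ^ k x)` over `1 ≤ n ≤ N`. -/
noncomputable def weightedCos (M : ℕ) (B : Finset ℕ) (k q N : ℕ) (x : Set.Icc (0 : ℝ) 1) : ℝ :=
  (∑ n ∈ Finset.range N, bohrWeight M B (q * (n + 1)) * cosPow k (q * (n + 1)) x) / N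

lemma abs_weightedCos_le (M : ℕ) (B : Finset ℕ) (k q N : ℕ) (x : Set.Icc (0 : ℝ) 1) :
    |weightedCos M B k q N x| ≤ 1 := by
  unfold weightedCos
  rw [abs_div, Nat.abs_cast]
  refine div_le_of_le_mul₀ (by positivity) zero_le_one ?_
  calc _ ≤ ∑ n ∈ Finset.range N, |bohrWeight M B (q * (n + 1)) * cosPow k (q * (n + 1)) x| :=
        Finset.abs_sum_le_sum_abs _ _
    _ ≤ ∑ n ∈ Finset.range N, 1 := Finset.sum_le_sum fun n _ => by
        rw [abs_mul, abs_of_nonneg (bohrWeight_nonneg _ _ _)]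
        exact mul_le_one₀ (bohrWeight_le_one _ _ _) (abs_nonneg _) (Real.abs_cos_le_one _)
    _ = 1 * N := by simp

lemma continuous_weightedCos (M : ℕ) (B : Finset ℕ) (k q N : ℕ) :
    Continuous (weightedCos M B k q N) := by
  unfold weightedCos
  fun_prop

lemma norm_bohrWeight_mul_unitExp_le (M : ℕ) (B : Finset ℕ) (n : ℕ) (x : ℝ) :
    ‖(bohrWeight M B n : ℂ) * unitExp x‖ ≤ 1 := by
  rw [norm_mul, norm_unitExp, mul_one, Complex.norm_real,
    Real.norm_of_nonneg (bohrWeight_nonneg _ _ _)]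
  exact bohrWeight_le_one _ _ _

lemma weightedCos_eq_re (M : ℕ) (B : Finset ℕ) (k q N : ℕ) (x : Set.Icc (0 : ℝ) 1) :
    weightedCos M B k q N x = (cesaro (fun n => (bohrWeight M B (q * (n + 1)) : ℂ) *
      unitExp ((Polynomial.monomial k ((q : ℝ) ^ k * x)).eval ((n + 1 : ℕ) : ℝ))) N).re := by
  unfold weightedCos cesaro
  rw [Complex.div_natCast_re, Complex.re_sum]
  congr 1
  refine Finset.sum_congr rfl fun n _ => ?_
  rw [Complex.re_ofReal_mul, unitExp_re, Polynomial.eval_monomial]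
  simp only [cosPow, ContinuousMap.coe_mk]
  push_cast
  rw [mul_pow]
  ring_nf

open Classical in
lemma tendsto_weightedCos (M : ℕ) {B : Finset ℕ} (hB : ∀ b ∈ B, 0 < b) {k : ℕ} (hk : 0 < k)
    (hkB : k ∉ B) (m : ℕ) {x : Set.Icc (0 : ℝ) 1} (hx : x ∉ factorialExceptional m) :
    Tendsto (fun N => weightedCos M B k m.factorial N x) atTop
      (nhds (if Irrational (x : ℝ) then 0 else sinPowMean M ^ B.card)) := by
  have hq : 0 < m.factorial := Nat.factorial_pos m
  simp only [weightedCos_eq_re]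
  split_ifs with hirr
  · have h1 := tendsto_cesaro_bohrWeight_mul M B m.factorial
      (P := Polynomial.monomial k ((m.factorial : ℝ) ^ k * x))
      (fun b hb => Polynomial.coeff_monomial_of_ne _ (by rintro rfl; exact hkB hb)) hk (by
        rw [Polynomial.coeff_monomial, if_pos rfl]
        have := hirr.natCast_mul (m := m.factorial ^ k) (by positivity)
        exact_mod_cast this)
    have h2 := tendsto_cesaro_shift (fun n => norm_bohrWeight_mul_unitExp_le M B _ _) 1 h1
    exact (Complex.continuous_re.tendsto _).comp h2
  · have hz : ∃ z : ℤ, (m.factorial : ℝ) * x = z := by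
      by_contra hcon
      exact hx ⟨hirr, hcon⟩
    obtain ⟨z, hz⟩ := hz
    have hone : ∀ n : ℕ,
        unitExp ((Polynomial.monomial k ((m.factorial : ℝ) ^ k * x)).eval (n : ℝ)) = 1 := by
      intro n
      rw [Polynomial.eval_monomial, unitExp_eq_one_iff]
      refine ⟨m.factorial ^ (k - 1) * z * n ^ k, ?_⟩
      push_cast
      rw [← hz]
      obtain ⟨l, rfl⟩ : ∃ l, k = l + 1 := ⟨k - 1, by omega⟩
      simp only [add_tsub_cancel_right]
      ring
    have h1 := tendsto_cesaro_shift (C := 1) (fun n => by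
      simpa [unitExp_zero] using norm_bohrWeight_mul_unitExp_le M B (m.factorial * n) 0) 1
      (tendsto_cesaro_bohrWeight M hB hq)
    simp only [hone, mul_one]
    have h2 := (Complex.continuous_re.tendsto _).comp h1
    rw [Complex.ofReal_re] at h2
    exact h2

lemma integral_weightedCos_le (μ : Measure (Set.Icc (0 : ℝ) 1)) [IsFiniteMeasure μ] (M : ℕ)
    {B : Finset ℕ} {k j q : ℕ} (hq : j < q) {v : ℝ} (hv : v < 0)
    (hμ : ∀ n, j < n → FarFromInt B n → ∫ x, cosPow k n x ∂μ ≤ v) {N : ℕ} (hN : 0 < N) :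
    ∫ x, weightedCos M B k q N x ∂μ ≤
      v * (cesaro (fun n => (bohrWeight M B (q * (n + 1)) : ℂ)) N).re +
        (1 / 2) ^ M * (μ.real Set.univ - v) := by
  have hintegral : ∀ n, Integrable (fun x => cosPow k n x) μ := fun n =>
    (cosPow k n).continuous.integrable_of_hasCompactSupport (HasCompactSupport.of_compactSpace _)
  have hle : ∀ n, ∫ x, cosPow k n x ∂μ ≤ μ.real Set.univ := by
    intro n
    calc _ ≤ ∫ _, (1 : ℝ) ∂μ := integral_mono (hintegral n) (integrable_const _)
          fun x => Real.cos_le_one _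
      _ = _ := by simp
  unfold weightedCos
  rw [integral_div, integral_finsetSum _ fun n _ => (hintegral _).const_mul _]
  simp only [integral_const_mul]
  unfold cesaro
  rw [Complex.div_natCast_re, Complex.re_sum]
  simp only [Complex.ofReal_re]
  have hN' : (0 : ℝ) < N := by exact_mod_cast hN
  rw [div_le_iff₀ hN', add_mul, mul_assoc, div_mul_cancel₀ _ hN'.ne', Finset.mul_sum]
  have : (1 / 2 : ℝ) ^ M * (μ.real Set.univ - v) * N =
      ∑ n ∈ Finset.range N, (1 / 2 : ℝ) ^ M * (μ.real Set.univ - v) := by simp [mul_comm]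
  rw [this, ← Finset.sum_add_distrib]
  refine Finset.sum_le_sum fun n _ => ?_
  have hm : 0 ≤ μ.real Set.univ := measureReal_nonneg
  have hw := bohrWeight_nonneg M B (q * (n + 1))
  have hM : (0 : ℝ) ≤ (1 / 2) ^ M := by positivity
  have hjn : j < q * (n + 1) := by nlinarith
  by_cases hfar : FarFromInt B (q * (n + 1))
  · have h1 := mul_le_mul_of_nonneg_left (hμ _ hjn hfar) hw
    have h2 : 0 ≤ (1 / 2 : ℝ) ^ M * (μ.real Set.univ - v) := mul_nonneg hM (by linarith)
    linarith
  · unfold FarFromInt at hfar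
    push Not at hfar
    obtain ⟨b, hb, hb'⟩ := hfar
    have h1 := mul_le_mul_of_nonneg_left (hle (q * (n + 1))) hw
    have h2 := mul_le_mul_of_nonneg_right (bohrWeight_le (M := M) hb hb')
      (show 0 ≤ μ.real Set.univ - v by linarith)
    linarith

/-- The numbers `n ^ k` with `n > j` far from the integers for the exponents in `B` carry a
probability weight whose cosine transform is almost nonnegative. -/
lemma exists_cosine_sum_gt {B : Finset ℕ} (hB : ∀ b ∈ B, 0 < b) {k : ℕ} (hk : 0 < k) (hkB : k ∉ B)
    (j : ℕ) {δ : ℝ} (hδ : 0 < δ) :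
    ∃ (ι : Type) (_ : Fintype ι) (a : ι → ℝ) (r : ι → ℕ), (∀ i, 0 ≤ a i) ∧ ∑ i, a i = 1 ∧
      (∀ i, j < r i ∧ FarFromInt B (r i)) ∧ ∀ x ∈ Set.Icc (0 : ℝ) 1,
        -δ < ∑ i, a i * Real.cos (2 * Real.pi * ((r i : ℝ) ^ k * x)) := by
  classical
  rcases exists_convexHull_or_exists_measure (cosPow k '' {n | j < n ∧ FarFromInt B n}) hδ with
    ⟨f, hf, hfx⟩ | ⟨μ, hμ, v, hv0, hv, hintegral⟩
  · obtain ⟨ι, hι, a, z, ha, hsum, hz, rfl⟩ := mem_convexHull_iff_exists_fintype.1 hf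
    choose r hr hrz using hz
    refine ⟨ι, hι, a, r, ha, hsum, hr, fun x hx => ?_⟩
    have := hfx ⟨x, hx⟩
    simpa [← hrz, cosPow] using this
  exfalso
  obtain ⟨M, hM, hMs⟩ := exists_sinPow_small B.card (ε := min (1 / 2) (δ / 8)) (by positivity)
  set W := sinPowMean M ^ B.card with hW
  have hW0 : 0 < W := by positivity
  have hε : 0 < -(W * v) / 4 := by nlinarith
  obtain ⟨m, hmμ, hmj⟩ := (((tendsto_measure_factorialExceptional μ).eventually
    (gt_mem_nhds hε)).and (eventually_gt_atTop j)).exists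
  set A := factorialExceptional m with hA
  have hAm : MeasurableSet A := measurableSet_factorialExceptional m
  have hq : j < m.factorial := lt_of_lt_of_le hmj (Nat.self_le_factorial m)
  have hfint : ∀ N, Integrable (weightedCos M B k m.factorial N) μ := fun N =>
    (continuous_weightedCos _ _ _ _ _).integrable_of_hasCompactSupport
      (HasCompactSupport.of_compactSpace _)
  have hlim : Tendsto (fun N => ∫ x in Aᶜ, weightedCos M B k m.factorial N x ∂μ) atTop
      (nhds (∫ x in Aᶜ, (if Irrational (x : ℝ) then 0 else W) ∂μ)) := by
    refine tendsto_integral_of_dominated_convergence (fun _ => 1)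
      (fun N => (hfint N).integrableOn.aestronglyMeasurable) (integrable_const _)
      (fun N => Eventually.of_forall fun x => abs_weightedCos_le _ _ _ _ _ _) ?_
    filter_upwards [ae_restrict_mem hAm.compl] with x hx
    exact tendsto_weightedCos M hB hk hkB m hx
  have hlim0 : 0 ≤ ∫ x in Aᶜ, (if Irrational (x : ℝ) then 0 else W) ∂μ :=
    integral_nonneg fun x => by dsimp only [Pi.zero_apply]; split_ifs <;> positivity
  have hup : Tendsto (fun N => v * (cesaro (fun n =>
      (bohrWeight M B (m.factorial * (n + 1)) : ℂ)) N).re +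
        (1 / 2) ^ M * (μ.real Set.univ - v) + μ.real A) atTop
      (nhds (v * W + (1 / 2) ^ M * (μ.real Set.univ - v) + μ.real A)) := by
    have h1 := tendsto_cesaro_shift (C := 1) (fun n => by
      simpa [unitExp_zero] using norm_bohrWeight_mul_unitExp_le M B (m.factorial * n) 0) 1
      (tendsto_cesaro_bohrWeight M hB (Nat.factorial_pos m))
    have h2 := (Complex.continuous_re.tendsto _).comp h1
    rw [Complex.ofReal_re] at h2
    exact ((h2.const_mul v).add_const _).add_const _
  have hfin := le_of_tendsto_of_tendsto hlim hup (by
    filter_upwards [eventually_gt_atTop 0] with N hN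
    have h1 := integral_weightedCos_le μ M hq hv0
      (fun n hn hn' => hintegral _ ⟨n, ⟨hn, hn'⟩, rfl⟩) hN
    have h2 := integral_add_compl hAm (hfint N)
    have h3 : -μ.real A ≤ ∫ x in A, weightedCos M B k m.factorial N x ∂μ := by
      have := norm_setIntegral_le_of_norm_le_const (μ := μ) (s := A) (C := 1)
        (f := weightedCos M B k m.factorial N) (measure_lt_top _ _)
        (fun x _ => abs_weightedCos_le M B k m.factorial N x)
      rw [one_mul] at this
      exact (abs_le.1 this).1
    linarith)
  have hm0 : 0 ≤ μ.real Set.univ := measureReal_nonneg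
  have hη1 : (1 / 2 : ℝ) ^ M < 1 / 2 * W :=
    hMs.trans_le (mul_le_mul_of_nonneg_right (min_le_left _ _) hW0.le)
  have hη2 : (1 / 2 : ℝ) ^ M < δ / 8 * W :=
    hMs.trans_le (mul_le_mul_of_nonneg_right (min_le_right _ _) hW0.le)
  generalize (1 / 2 : ℝ) ^ M = η at *
  have h1 := mul_lt_mul_of_neg_right hη1 hv0
  have h2 := mul_le_mul_of_nonneg_right hη2.le hm0
  have h3 := mul_lt_mul_of_pos_left hv hW0
  linarith

lemma integral_cos_two_pi_int (m : ℤ) :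
    ∫ x in (0 : ℝ)..1, Real.cos (2 * Real.pi * (m * x)) = if m = 0 then 1 else 0 := by
  split_ifs with hm
  · simp [hm]
  · have hne : 2 * Real.pi * (m : ℝ) ≠ 0 := by
      have : (m : ℝ) ≠ 0 := by exact_mod_cast hm
      positivity
    have : ∀ x : ℝ, Real.cos (2 * Real.pi * (m * x)) = Real.cos ((2 * Real.pi * m) * x) :=
      fun x => by ring_nf
    simp only [this]
    rw [intervalIntegral.integral_comp_mul_left (fun y => Real.cos y) hne, integral_cos]
    have h0 : Real.sin (2 * Real.pi * m * 1) = 0 := by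
      rw [mul_one, show 2 * Real.pi * (m : ℝ) = ((2 * m : ℤ) : ℝ) * Real.pi by push_cast; ring]
      exact Real.sin_int_mul_pi _
    rw [h0]
    simp

/-- The square modulus of the exponential sum with coefficients `g`. -/
noncomputable def expSumSq (I : Finset ℤ) (g : ℤ → ℝ) (θ : ℝ) : ℝ :=
  ∑ x ∈ I, ∑ y ∈ I, g x * g y * Real.cos (2 * Real.pi * (((x - y : ℤ) : ℝ) * θ))

lemma expSumSq_nonneg (I : Finset ℤ) (g : ℤ → ℝ) (θ : ℝ) : 0 ≤ expSumSq I g θ := by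
  have : expSumSq I g θ = (∑ x ∈ I, g x * Real.cos (2 * Real.pi * (x * θ))) ^ 2 +
      (∑ x ∈ I, g x * Real.sin (2 * Real.pi * (x * θ))) ^ 2 := by
    rw [sq, sq, Finset.sum_mul_sum, Finset.sum_mul_sum, ← Finset.sum_add_distrib]
    refine Finset.sum_congr rfl fun x _ => ?_
    rw [← Finset.sum_add_distrib]
    refine Finset.sum_congr rfl fun y _ => ?_
    have h : 2 * Real.pi * (((x - y : ℤ) : ℝ) * θ) =
        2 * Real.pi * (x * θ) - 2 * Real.pi * (y * θ) := by push_cast; ring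
    rw [h, Real.cos_sub]
    ring
  rw [this]
  positivity

lemma continuous_expSumSq (I : Finset ℤ) (g : ℤ → ℝ) : Continuous (expSumSq I g) := by
  unfold expSumSq
  fun_prop

lemma integral_expSumSq_mul_cos {I : Finset ℤ} {g : ℤ → ℝ} (hg : ∀ x ∉ I, g x = 0) (r : ℤ) :
    ∫ θ in (0 : ℝ)..1, expSumSq I g θ * Real.cos (2 * Real.pi * (r * θ)) =
      ∑ x ∈ I, g x * g (x + r) := by
  have hexp : ∀ θ, expSumSq I g θ * Real.cos (2 * Real.pi * (r * θ)) =
      ∑ x ∈ I, ∑ y ∈ I, (g x * g y / 2 * Real.cos (2 * Real.pi * (((x - y + r : ℤ) : ℝ) * θ)) +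
        g x * g y / 2 * Real.cos (2 * Real.pi * (((x - y - r : ℤ) : ℝ) * θ))) := by
    intro θ
    unfold expSumSq
    rw [Finset.sum_mul]
    refine Finset.sum_congr rfl fun x _ => ?_
    rw [Finset.sum_mul]
    refine Finset.sum_congr rfl fun y _ => ?_
    have h1 : 2 * Real.pi * (((x - y + r : ℤ) : ℝ) * θ) =
        2 * Real.pi * (((x - y : ℤ) : ℝ) * θ) + 2 * Real.pi * (r * θ) := by push_cast; ring
    have h2 : 2 * Real.pi * (((x - y - r : ℤ) : ℝ) * θ) =
        2 * Real.pi * (((x - y : ℤ) : ℝ) * θ) - 2 * Real.pi * (r * θ) := by push_cast; ring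
    rw [h1, h2, Real.cos_add, Real.cos_sub]
    ring
  simp only [hexp]
  have hintegral : ∀ (c : ℝ) (m : ℤ), IntervalIntegrable
      (fun θ => c * Real.cos (2 * Real.pi * ((m : ℝ) * θ))) volume 0 1 := fun c m =>
    Continuous.intervalIntegrable (by fun_prop) _ _
  rw [intervalIntegral.integral_finsetSum fun x _ =>
    Continuous.intervalIntegrable (by fun_prop) _ _]
  have hinner : ∀ x ∈ I, ∫ θ in (0 : ℝ)..1, ∑ y ∈ I,
      (g x * g y / 2 * Real.cos (2 * Real.pi * (((x - y + r : ℤ) : ℝ) * θ)) +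
        g x * g y / 2 * Real.cos (2 * Real.pi * (((x - y - r : ℤ) : ℝ) * θ))) =
      g x * g (x + r) / 2 + ∑ y ∈ I, if x = y + r then g (y + r) * g y / 2 else 0 := by
    intro x _
    rw [intervalIntegral.integral_finsetSum fun y _ => (hintegral _ _).add (hintegral _ _)]
    simp only [intervalIntegral.integral_add (hintegral _ _) (hintegral _ _),
      intervalIntegral.integral_const_mul, integral_cos_two_pi_int, Finset.sum_add_distrib]
    congr 1
    · have : ∀ y ∈ I, g x * g y / 2 * (if x - y + r = 0 then (1 : ℝ) else 0) =
          if y = x + r then g x * g (x + r) / 2 else 0 := by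
        intro y _
        by_cases h : y = x + r
        · rw [if_pos h, if_pos (by omega), h, mul_one]
        · rw [if_neg h, if_neg (by omega), mul_zero]
      rw [Finset.sum_congr rfl this, Finset.sum_ite_eq']
      split_ifs with h
      · rfl
      · simp [hg _ h]
    · refine Finset.sum_congr rfl fun y _ => ?_
      by_cases h : x = y + r
      · rw [if_pos h, if_pos (by omega), h, mul_one]
      · rw [if_neg h, if_neg (by omega), mul_zero]
  rw [Finset.sum_congr rfl hinner, Finset.sum_add_distrib, Finset.sum_comm (s := I) (t := I),
    ← Finset.sum_add_distrib]
  refine Finset.sum_congr rfl fun y _ => ?_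
  rw [Finset.sum_ite_eq' I (y + r) fun _ => g (y + r) * g y / 2]
  split_ifs with h
  · ring
  · simp [hg _ h]

lemma correlation_sum_nonneg {ι : Type*} [Fintype ι] {a : ι → ℝ} {r : ι → ℤ} {δ : ℝ}
    (hcos : ∀ x ∈ Set.Icc (0 : ℝ) 1, -δ < ∑ i, a i * Real.cos (2 * Real.pi * ((r i : ℝ) * x)))
    {I : Finset ℤ} {g : ℤ → ℝ} (hg : ∀ x ∉ I, g x = 0) :
    0 ≤ δ * ∑ x ∈ I, g x ^ 2 + ∑ i, a i * ∑ x ∈ I, g x * g (x + r i) := by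
  have hc := continuous_expSumSq I g
  have h0 : 0 ≤ ∫ θ in (0 : ℝ)..1, (δ * (expSumSq I g θ * Real.cos (2 * Real.pi * ((0 : ℤ) * θ))) +
      ∑ i, a i * (expSumSq I g θ * Real.cos (2 * Real.pi * (r i * θ)))) := by
    refine intervalIntegral.integral_nonneg zero_le_one fun θ hθ => ?_
    have h1 := mul_nonneg (expSumSq_nonneg I g θ) (by linarith [hcos θ hθ] :
      0 ≤ δ + ∑ i, a i * Real.cos (2 * Real.pi * ((r i : ℝ) * θ)))
    rw [mul_add, Finset.mul_sum] at h1
    have h2 : ∀ i, a i * (expSumSq I g θ * Real.cos (2 * Real.pi * (r i * θ))) =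
        expSumSq I g θ * (a i * Real.cos (2 * Real.pi * (r i * θ))) := fun i => by ring
    simp only [h2]
    simpa [mul_comm δ] using h1
  rw [intervalIntegral.integral_add (Continuous.intervalIntegrable (by fun_prop) _ _)
    (Continuous.intervalIntegrable (by fun_prop) _ _), intervalIntegral.integral_const_mul,
    intervalIntegral.integral_finsetSum fun i _ =>
      Continuous.intervalIntegrable (by fun_prop) _ _] at h0
  simp only [intervalIntegral.integral_const_mul, integral_expSumSq_mul_cos hg, add_zero] at h0
  simpa [sq] using h0

lemma card_filter_add_notMem_le (A : Finset ℤ) (N : ℕ) (r : ℤ)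
    (hA : A ⊆ Finset.Icc (-(N : ℤ)) N) :
    (A.filter fun x => x + r ∉ Finset.Icc (-(N : ℤ)) N).card ≤ r.natAbs := by
  rcases le_total 0 r with hr | hr
  · calc _ ≤ (Finset.Ioc ((N : ℤ) - r) N).card := Finset.card_le_card fun x hx => by
          have h1 := (Finset.mem_filter.1 hx)
          have h2 := Finset.mem_Icc.1 (hA h1.1)
          have h3 := h1.2
          rw [Finset.mem_Icc] at h3
          rw [Finset.mem_Ioc]
          omega
      _ = _ := by rw [Int.card_Ioc]; omega
  · calc _ ≤ (Finset.Ico (-(N : ℤ)) (-N - r)).card := Finset.card_le_card fun x hx => by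
          have h1 := (Finset.mem_filter.1 hx)
          have h2 := Finset.mem_Icc.1 (hA h1.1)
          have h3 := h1.2
          rw [Finset.mem_Icc] at h3
          rw [Finset.mem_Ico]
          omega
      _ = _ := by rw [Int.card_Ico]; omega

open Classical in
lemma card_le_of_no_difference {ι : Type*} [Fintype ι] {a : ι → ℝ} {r : ι → ℤ} {δ : ℝ}
    (ha : ∀ i, 0 ≤ a i) (hsum : ∑ i, a i = 1) (hδ : 0 < δ)
    (hcos : ∀ x ∈ Set.Icc (0 : ℝ) 1, -δ < ∑ i, a i * Real.cos (2 * Real.pi * ((r i : ℝ) * x)))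
    {D : ℕ} (hD : ∀ i, (r i).natAbs ≤ D) {N : ℕ} {A : Finset ℤ}
    (hA : A ⊆ Finset.Icc (-(N : ℤ)) N) (hno : ∀ i, ∀ x ∈ A, x + r i ∉ A) :
    (A.card : ℝ) / (2 * N + 1) ≤ δ + 2 * D / (2 * N + 1) := by
  set I := Finset.Icc (-(N : ℤ)) N with hI
  have hIc : (I.card : ℝ) = 2 * N + 1 := by
    rw [hI, Int.card_Icc]
    have : ((N : ℤ) + 1 - -(N : ℤ)).toNat = 2 * N + 1 := by omega
    rw [this]; push_cast; ring
  have hpos : (0 : ℝ) < 2 * N + 1 := by positivity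
  set t : ℝ := (A.card : ℝ) / (2 * N + 1) with ht
  have ht0 : 0 ≤ t := by positivity
  have htc : (A.card : ℝ) = t * (2 * N + 1) := by rw [ht]; field_simp
  let u : ℤ → ℝ := fun x => if x ∈ A then 1 else 0
  let w : ℤ → ℝ := fun x => if x ∈ I then 1 else 0
  have hmain := correlation_sum_nonneg hcos (I := I) (g := fun x => u x - t * w x) (by
    intro x hx
    have : x ∉ A := fun h => hx (hA h)
    simp [u, w, hx, this])
  have hsumu : ∑ x ∈ I, u x = A.card := by
    simp only [u, Finset.sum_ite_mem, Finset.inter_eq_right.2 hA]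
    simp
  have hsq : ∑ x ∈ I, (u x - t * w x) ^ 2 = A.card * (1 - 2 * t) + t ^ 2 * (2 * N + 1) := by
    have : ∀ x ∈ I, (u x - t * w x) ^ 2 = u x * (1 - 2 * t) + t ^ 2 := by
      intro x hx
      by_cases h : x ∈ A
      · simp [u, w, hx, h]; ring
      · simp [u, w, hx, h]
    rw [Finset.sum_congr rfl this, Finset.sum_add_distrib, ← Finset.sum_mul, hsumu]
    simp [hIc, mul_comm]
  have hcor : ∀ i, ∑ x ∈ I, (u x - t * w x) * (u (x + r i) - t * w (x + r i)) ≤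
      -(2 * t * (A.card - D)) + t ^ 2 * (2 * N + 1) := by
    intro i
    have h1 : (A.card : ℝ) - D ≤ ∑ x ∈ I, u x * w (x + r i) := by
      have e1 : ∑ x ∈ I, u x * w (x + r i) = ((A.filter fun x => x + r i ∈ I).card : ℝ) := by
        have : ∀ x ∈ I, u x * w (x + r i) = if x ∈ A then w (x + r i) else 0 := by
          intro x _
          simp [u]
        rw [Finset.sum_congr rfl this, Finset.sum_ite_mem, Finset.inter_eq_right.2 hA]
        simp [w]
      have e2 := Finset.card_filter_add_card_filter_not (s := A) (fun x => x + r i ∈ I)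
      have e3 := (card_filter_add_notMem_le A N (r i) hA).trans (hD i)
      rw [e1]
      have e4 : A.card ≤ (A.filter fun x => x + r i ∈ I).card + D := by
        rw [← e2]; exact Nat.add_le_add_left e3 _
      have : (A.card : ℝ) ≤ (A.filter fun x => x + r i ∈ I).card + D := by exact_mod_cast e4
      linarith
    have h2 : (A.card : ℝ) - D ≤ ∑ x ∈ I, u (x + r i) := by
      have e1 : ∑ x ∈ I, u (x + r i) = ((A.filter fun x => x + -r i ∈ I).card : ℝ) := by
        simp only [u, Finset.sum_boole]
        congr 1
        refine Finset.card_bij (fun x _ => x + r i) ?_ ?_ ?_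
        · intro x hx
          have := Finset.mem_filter.1 hx
          exact Finset.mem_filter.2 ⟨this.2, by simpa using this.1⟩
        · intro x _ y _ hxy
          simpa using hxy
        · intro y hy
          have := Finset.mem_filter.1 hy
          exact ⟨y + -r i, Finset.mem_filter.2 ⟨this.2, by simpa using this.1⟩, by simp⟩
      have e2 := Finset.card_filter_add_card_filter_not (s := A) (fun x => x + -r i ∈ I)
      have e3 := (card_filter_add_notMem_le A N (-r i) hA).trans (by simpa using hD i)
      rw [e1]
      have e4 : A.card ≤ (A.filter fun x => x + -r i ∈ I).card + D := by
        rw [← e2]; exact Nat.add_le_add_left e3 _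
      have : (A.card : ℝ) ≤ (A.filter fun x => x + -r i ∈ I).card + D := by exact_mod_cast e4
      linarith
    have h3 : ∀ x ∈ I, (u x - t * w x) * (u (x + r i) - t * w (x + r i)) ≤
        -t * (u x * w (x + r i)) - t * u (x + r i) + t ^ 2 := by
      intro x hx
      have hw : w x = 1 := by simp [w, hx]
      have huu : u x * u (x + r i) = 0 := by
        by_cases h : x ∈ A
        · simp [u, hno i x h]
        · simp [u, h]
      have hw1 : w (x + r i) ≤ 1 := by simp only [w]; split_ifs <;> norm_num
      rw [hw]
      nlinarith [sq_nonneg t]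
    calc _ ≤ ∑ x ∈ I, (-t * (u x * w (x + r i)) - t * u (x + r i) + t ^ 2) :=
          Finset.sum_le_sum h3
      _ = -t * ∑ x ∈ I, u x * w (x + r i) - t * ∑ x ∈ I, u (x + r i) + t ^ 2 * (2 * N + 1) := by
          rw [Finset.sum_add_distrib, Finset.sum_sub_distrib, ← Finset.mul_sum, ← Finset.mul_sum]
          simp [hIc, mul_comm]
      _ ≤ _ := by nlinarith
  have hcs : ∑ i, a i * ∑ x ∈ I, (u x - t * w x) * (u (x + r i) - t * w (x + r i)) ≤
      -(2 * t * (A.card - D)) + t ^ 2 * (2 * N + 1) := by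
    calc _ ≤ ∑ i, a i * (-(2 * t * (A.card - D)) + t ^ 2 * (2 * N + 1)) :=
          Finset.sum_le_sum fun i _ => mul_le_mul_of_nonneg_left (hcor i) (ha i)
      _ = _ := by rw [← Finset.sum_mul, hsum, one_mul]
  rw [hsq, htc] at hmain
  rw [htc] at hcs
  have hfin : 0 ≤ t * (δ * (1 - t) * (2 * N + 1) - t * (2 * N + 1) + 2 * D) := by nlinarith
  rcases ht0.eq_or_lt with h0 | h0
  · have h4 : 0 ≤ δ + 2 * (D : ℝ) / (2 * N + 1) := by positivity
    linarith
  · have h4 := nonneg_of_mul_nonneg_right hfin h0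
    rw [← sub_le_iff_le_add', le_div_iff₀ hpos]
    have h5 : 0 ≤ δ * t * (2 * N + 1) := mul_nonneg (mul_nonneg hδ.le ht0) hpos.le
    linarith

open Classical in
lemma upperDensity_eq (Λ : Set ℤ) :
    upperDensity Λ = limsup (fun N : ℕ =>
      (((Finset.Icc (-(N : ℤ)) (N : ℤ)).filter fun x => x ∈ Λ).card : ℝ) / (2 * N + 1)) atTop := by
  unfold upperDensity
  congr!

open Classical in
lemma density_le_one (Λ : Set ℤ) (N : ℕ) :
    (((Finset.Icc (-(N : ℤ)) (N : ℤ)).filter fun x => x ∈ Λ).card : ℝ) / (2 * N + 1) ≤ 1 := by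
  rw [div_le_one (by positivity)]
  have h1 := Finset.card_filter_le (Finset.Icc (-(N : ℤ)) (N : ℤ)) fun x => x ∈ Λ
  rw [Int.card_Icc] at h1
  have h2 : ((Finset.Icc (-(N : ℤ)) (N : ℤ)).filter fun x => x ∈ Λ).card ≤ 2 * N + 1 := by omega
  exact_mod_cast h2

lemma exists_difference_of_lt_upperDensity {ι : Type*} [Fintype ι] {a : ι → ℝ} {r : ι → ℤ} {δ : ℝ}
    (ha : ∀ i, 0 ≤ a i) (hsum : ∑ i, a i = 1) (hδ : 0 < δ)
    (hcos : ∀ x ∈ Set.Icc (0 : ℝ) 1, -δ < ∑ i, a i * Real.cos (2 * Real.pi * ((r i : ℝ) * x)))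
    {Λ : Set ℤ} (hΛ : δ < upperDensity Λ) :
    ∃ i, ∃ m ∈ Λ, m + r i ∈ Λ := by
  classical
  by_contra! hcon
  obtain ⟨D, hD⟩ : ∃ D : ℕ, ∀ i, (r i).natAbs ≤ D :=
    ⟨∑ i, (r i).natAbs, fun i => Finset.single_le_sum (f := fun i => (r i).natAbs)
      (fun _ _ => Nat.zero_le _) (Finset.mem_univ i)⟩
  have hb : ∀ N : ℕ, (((Finset.Icc (-(N : ℤ)) (N : ℤ)).filter fun x => x ∈ Λ).card : ℝ) /
      (2 * N + 1) ≤ δ + 2 * D / (2 * N + 1) := fun N =>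
    card_le_of_no_difference ha hsum hδ hcos hD (Finset.filter_subset _ _) fun i x hx hx' =>
      hcon i x (Finset.mem_filter.1 hx).2 (Finset.mem_filter.1 hx').2
  have hlim : Tendsto (fun N : ℕ => δ + 2 * (D : ℝ) / (2 * N + 1)) atTop (nhds δ) := by
    have h1 : Tendsto (fun N : ℕ => 2 * (N : ℝ) + 1) atTop atTop :=
      tendsto_atTop_add_const_right _ _
        (tendsto_natCast_atTop_atTop.const_mul_atTop (by norm_num))
    simpa using (h1.const_div_atTop (2 * (D : ℝ))).const_add δ
  rw [upperDensity_eq, ← hlim.limsup_eq] at hΛ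
  refine absurd hΛ (not_lt.2 (limsup_le_limsup (Eventually.of_forall hb) ?_ ?_))
  · exact IsBoundedUnder.isCoboundedUnder_le
      (isBoundedUnder_of ⟨0, fun N => by positivity⟩)
  · exact hlim.isBoundedUnder_le

lemma exists_finite_intersective {B : Finset ℕ} (hB : ∀ b ∈ B, 0 < b) {k : ℕ} (hk : 0 < k)
    (hkB : k ∉ B) (j : ℕ) {δ : ℝ} (hδ : 0 < δ) :
    ∃ F : Finset ℕ, F.Nonempty ∧ (∀ n ∈ F, j < n ∧ FarFromInt B n) ∧
      ∀ Λ : Set ℤ, δ < upperDensity Λ → ∃ n ∈ F, ∃ m ∈ Λ, m + (n : ℤ) ^ k ∈ Λ := by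
  classical
  obtain ⟨ι, hι, a, r, ha, hsum, hr, hcos⟩ := exists_cosine_sum_gt hB hk hkB j hδ
  refine ⟨Finset.univ.image r, ?_, ?_, fun Λ hΛ => ?_⟩
  · have : (Finset.univ : Finset ι).Nonempty := by
      rw [Finset.nonempty_iff_ne_empty]
      intro h
      rw [h, Finset.sum_empty] at hsum
      exact zero_ne_one hsum
    exact this.image r
  · intro n hn
    obtain ⟨i, -, rfl⟩ := Finset.mem_image.1 hn
    exact hr i
  · obtain ⟨i, m, hm, hm'⟩ := exists_difference_of_lt_upperDensity (r := fun i => (r i : ℤ) ^ k)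
      ha hsum hδ (by push_cast; exact hcos) hΛ
    exact ⟨r i, Finset.mem_image_of_mem _ (Finset.mem_univ i), m, hm, hm'⟩

lemma exists_fiber_upperDensity_pos {κ : Type*} [Fintype κ] (c : ℤ → κ) :
    ∃ i, 0 < upperDensity (c ⁻¹' {i}) := by
  classical
  by_contra! hcon
  set ε : ℝ := 1 / ((Fintype.card κ : ℝ) + 1) with hε
  have hε0 : 0 < ε := by positivity
  have hev : ∀ i, ∀ᶠ N : ℕ in atTop,
      (((Finset.Icc (-(N : ℤ)) (N : ℤ)).filter fun x => x ∈ c ⁻¹' {i}).card : ℝ) / (2 * N + 1)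
        < ε := by
    intro i
    have h := hcon i
    rw [upperDensity_eq] at h
    exact eventually_lt_of_limsup_lt (h.trans_lt hε0) (isBoundedUnder_of ⟨1, density_le_one _⟩)
  obtain ⟨N, hN⟩ := (eventually_all.2 hev).exists
  have hcard := Finset.card_eq_sum_card_fiberwise (f := c) (s := Finset.Icc (-(N : ℤ)) (N : ℤ))
    (t := Finset.univ) (fun x _ => Finset.mem_coe.2 (Finset.mem_univ _))
  have hIc : ((Finset.Icc (-(N : ℤ)) (N : ℤ)).card : ℝ) = 2 * N + 1 := by
    rw [Int.card_Icc]
    have : ((N : ℤ) + 1 - -(N : ℤ)).toNat = 2 * N + 1 := by omega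
    rw [this]; push_cast; ring
  have hpos : (0 : ℝ) < 2 * N + 1 := by positivity
  have hsum : ∑ i, (((Finset.Icc (-(N : ℤ)) (N : ℤ)).filter
      fun x => x ∈ c ⁻¹' {i}).card : ℝ) / (2 * N + 1) = 1 := by
    rw [← Finset.sum_div, div_eq_one_iff_eq hpos.ne', ← hIc, hcard]
    push_cast
    rfl
  have hle : (1 : ℝ) ≤ ∑ _i : κ, ε := by
    rw [← hsum]
    exact Finset.sum_le_sum fun i _ => (hN i).le
  have : ∑ _i : κ, ε < 1 := by
    simp only [Finset.sum_const, Finset.card_univ, nsmul_eq_mul, hε]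
    rw [mul_one_div, div_lt_one (by positivity)]
    linarith
  linarith

lemma sin_sq_le_of_near_int {x : ℝ} {z : ℤ} (h : |x - z| < 1 / 8) :
    Real.sin (Real.pi * x) ^ 2 ≤ 1 / 2 := by
  have h1 : Real.sin (Real.pi * x) ^ 2 = Real.sin (Real.pi * (x - z)) ^ 2 := by
    rw [Real.sin_sq_eq_half_sub, Real.sin_sq_eq_half_sub]
    have : 2 * (Real.pi * x) = 2 * (Real.pi * (x - z)) + z * (2 * Real.pi) := by ring
    rw [this, Real.cos_add_int_mul_two_pi]
  have h2 : |Real.sin (Real.pi * (x - z))| ≤ 1 / 2 := by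
    calc _ ≤ |Real.pi * (x - z)| := Real.abs_sin_le_abs
      _ = Real.pi * |x - z| := by rw [abs_mul, abs_of_pos Real.pi_pos]
      _ ≤ 4 * (1 / 8) := by gcongr; exact Real.pi_le_four
      _ = 1 / 2 := by norm_num
  rw [h1, ← sq_abs]
  calc _ ≤ (1 / 2 : ℝ) ^ 2 := by gcongr
    _ ≤ _ := by norm_num

/-- A set of positive integers, all but finitely many of whose elements `s` have `√2 s` far from
the integers, is not intersective. -/
lemma not_intersective_of_far {S : Set ℤ} {L : ℕ} (hpos : ∀ s ∈ S, 0 < s)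
    (hS : ∀ s ∈ S, s < L ∨ 1 / 2 < Real.sin (Real.pi * (Real.sqrt 2 * s)) ^ 2) :
    ¬ Intersective S := by
  intro hintegral
  have hlt : ∀ x : ℤ, ⌊8 * Int.fract (Real.sqrt 2 * x)⌋₊ < 8 := fun x => by
    rw [Nat.floor_lt (by have := Int.fract_nonneg (Real.sqrt 2 * x); positivity)]
    have := Int.fract_lt_one (Real.sqrt 2 * x)
    push_cast
    linarith
  obtain ⟨i, hi⟩ := exists_fiber_upperDensity_pos
    (fun x : ℤ => ((x : ZMod (L + 1)), (⟨_, hlt x⟩ : Fin 8)))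
  obtain ⟨s, hs, -, m, hm, hms⟩ := hintegral _ hi
  have heq := hm.trans hms.symm
  simp only [Prod.mk.injEq, Fin.mk.injEq] at heq
  obtain ⟨h1, h2⟩ := heq
  rcases hS s hs with hsL | hfar
  · have h3 : ((s : ℤ) : ZMod (L + 1)) = 0 := by
      push_cast at h1
      simpa using h1
    rw [ZMod.intCast_zmod_eq_zero_iff_dvd] at h3
    have := Int.le_of_dvd (hpos s hs) h3
    push_cast at this
    linarith
  · refine absurd hfar (not_lt.2 (sin_sq_le_of_near_int
      (z := ⌊Real.sqrt 2 * (m + s : ℤ)⌋ - ⌊Real.sqrt 2 * m⌋) ?_))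
    have ha := Int.fract_nonneg (Real.sqrt 2 * m)
    have hb := Int.fract_nonneg (Real.sqrt 2 * (m + s : ℤ))
    have a1 := Nat.floor_le (show 0 ≤ 8 * Int.fract (Real.sqrt 2 * m) by positivity)
    have a2 := Nat.lt_floor_add_one (8 * Int.fract (Real.sqrt 2 * m))
    have b1 := Nat.floor_le (show 0 ≤ 8 * Int.fract (Real.sqrt 2 * (m + s : ℤ)) by positivity)
    have b2 := Nat.lt_floor_add_one (8 * Int.fract (Real.sqrt 2 * (m + s : ℤ)))
    rw [h2] at a1 a2
    have hd : Real.sqrt 2 * s - ((⌊Real.sqrt 2 * (m + s : ℤ)⌋ - ⌊Real.sqrt 2 * m⌋ : ℤ) : ℝ) =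
        Int.fract (Real.sqrt 2 * (m + s : ℤ)) - Int.fract (Real.sqrt 2 * m) := by
      unfold Int.fract
      push_cast
      ring
    rw [hd, abs_lt]
    constructor <;> linarith

theorem statement0 (G : Set ℕ) (hG : ∀ g ∈ G, 0 < g) :
    ∃ R : Set ℕ, R.Infinite ∧ (∀ r ∈ R, 0 < r) ∧
      ∀ k : ℕ, 0 < k → (Intersective ((fun r : ℕ => (r : ℤ) ^ k) '' R) ↔ k ∈ G) := by
  classical
  let B : ℕ → Finset ℕ := fun j => (Finset.Icc 1 j).filter (· ∉ G)
  have hB : ∀ j, ∀ b ∈ B j, 0 < b := fun j b hb =>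
    (Finset.mem_Icc.1 (Finset.mem_filter.1 hb).1).1
  have hex : ∀ j k : ℕ, 0 < k ∧ k ∉ B j → ∃ F : Finset ℕ, F.Nonempty ∧
      (∀ n ∈ F, j < n ∧ FarFromInt (B j) n) ∧
      ∀ Λ : Set ℤ, 1 / ((j : ℝ) + 1) < upperDensity Λ → ∃ n ∈ F, ∃ m ∈ Λ, m + (n : ℤ) ^ k ∈ Λ :=
    fun j k hk => exists_finite_intersective (hB j) hk.1 hk.2 j (by positivity)
  choose! F hFne hF hFint using hex
  let R : Set ℕ := {n | ∃ j k, (0 < k ∧ k ∉ B j) ∧ k ≤ j + 1 ∧ n ∈ F j k}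
  have hRpos : ∀ r ∈ R, 0 < r := by
    rintro r ⟨j, k, hk, -, hr⟩
    exact (Nat.zero_le j).trans_lt (hF j k hk r hr).1
  refine ⟨R, ?_, hRpos, fun k hk => ⟨?_, fun hkG => ?_⟩⟩
  · refine Set.infinite_of_forall_exists_gt fun j => ?_
    have hj : 0 < j + 1 ∧ j + 1 ∉ B j := ⟨by omega, fun h => by
      have := (Finset.mem_Icc.1 (Finset.mem_filter.1 h).1).2
      omega⟩
    obtain ⟨n, hn⟩ := hFne j (j + 1) hj
    exact ⟨n, ⟨j, j + 1, hj, le_rfl, hn⟩, (hF j _ hj n hn).1⟩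
  · contrapose!
    intro hkG
    let T : Finset ℕ := (Finset.range k).biUnion fun j => (Finset.range (j + 2)).biUnion (F j)
    refine not_intersective_of_far (L := (T.sup id + 1) ^ k) ?_ ?_
    · rintro _ ⟨r, hr, rfl⟩
      have := hRpos r hr
      positivity
    · rintro _ ⟨r, ⟨j, k', hk', hle, hr⟩, rfl⟩
      by_cases hjk : j < k
      · left
        have hrT : r ∈ T := Finset.mem_biUnion.2 ⟨j, Finset.mem_range.2 hjk,
          Finset.mem_biUnion.2 ⟨k', Finset.mem_range.2 (by omega), hr⟩⟩
        have h1 : r ≤ T.sup id := Finset.le_sup (f := id) hrT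
        have h2 : r ^ k < (T.sup id + 1) ^ k := Nat.pow_lt_pow_left (by omega) hk.ne'
        beta_reduce
        exact_mod_cast h2
      · right
        have := (hF j k' hk' r hr).2 k
          (Finset.mem_filter.2 ⟨Finset.mem_Icc.2 ⟨hk, by omega⟩, hkG⟩)
        push_cast
        exact this
  · intro Λ hΛ
    obtain ⟨n, hn⟩ := exists_nat_one_div_lt hΛ
    set j := max n k with hj
    have hkj : 0 < k ∧ k ∉ B j := ⟨hk, fun h => (Finset.mem_filter.1 h).2 hkG⟩
    have hlt : 1 / ((j : ℝ) + 1) < upperDensity Λ := by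
      refine lt_of_le_of_lt ?_ hn
      have : (n : ℝ) ≤ j := by exact_mod_cast le_max_left n k
      gcongr
    obtain ⟨r, hr, m, hm, hm'⟩ := hFint j k hkj Λ hlt
    have hrR : r ∈ R := ⟨j, k, hkj, (le_max_right n k).trans (Nat.le_succ _), hr⟩
    have := hRpos r hrR
    exact ⟨(r : ℤ) ^ k, ⟨r, hrR, rfl⟩, by positivity, m, hm, hm'⟩
end

section
/- Let G be an arbitrary set of positive integers. Then there exists an infinite set R = {r₁, r₂, …} of positive integers such that for every positive integer k, the set R^k = {r₁^k, r₂^k, …} of k-th powers of elements of R is a set of recurrence if and only if k ∈ G. -/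
open Filter MeasureTheory

/-- A set `R` of integers is a set of `ℓ`-recurrence if for every invertible measure
preserving system `(X, ℬ, μ, T)` and every measurable set `A` with `μ(A) > 0` there is a
nonzero `r ∈ R` with `μ(A ∩ T^{-r}A ∩ T^{-2r}A ∩ … ∩ T^{-ℓr}A) > 0`. -/
def IsSetOfMultRecurrence (ℓ : ℕ) (R : Set ℤ) : Prop :=
  ∀ (X : Type) (_ : MeasurableSpace X) (μ : Measure X),
    IsProbabilityMeasure μ →
    ∀ T : X ≃ᵐ X, MeasurePreserving (⇑T) μ μ →
    ∀ A : Set X, MeasurableSet A → 0 < μ A →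
      ∃ r ∈ R, r ≠ 0 ∧
        0 < μ (⋂ i ∈ Finset.range (ℓ + 1), (⇑(T.toEquiv ^ ((i : ℤ) * r))) ⁻¹' A)

open scoped Topology ComplexConjugate Polynomial

namespace PowerRecurrence

/-- The sequence `u` has Cesàro mean `l`. -/
def HasMean (u : ℕ → ℂ) (l : ℂ) : Prop :=
  Tendsto (fun N : ℕ => (∑ n ∈ Finset.range N, u n) / (N : ℂ)) atTop (𝓝 l)

lemma norm_sum_div_le {u : ℕ → ℂ} {C : ℝ} (hu : ∀ n, ‖u n‖ ≤ C) (hC : 0 ≤ C) (N : ℕ) :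
    ‖(∑ n ∈ Finset.range N, u n) / (N : ℂ)‖ ≤ C := by
  rw [norm_div, Complex.norm_natCast]
  apply div_le_of_le_mul₀ (Nat.cast_nonneg _) hC
  calc ‖∑ n ∈ Finset.range N, u n‖ ≤ ∑ n ∈ Finset.range N, ‖u n‖ := norm_sum_le _ _
    _ ≤ ∑ n ∈ Finset.range N, C := Finset.sum_le_sum fun n _ => hu n
    _ = C * N := by simp [mul_comm]

lemma HasMean.add {u v : ℕ → ℂ} {a b : ℂ} (hu : HasMean u a) (hv : HasMean v b) :
    HasMean (fun n => u n + v n) (a + b) := by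
  refine (Tendsto.add hu hv).congr fun N => ?_
  rw [Finset.sum_add_distrib, add_div]

lemma HasMean.const_mul {u : ℕ → ℂ} {a : ℂ} (c : ℂ) (hu : HasMean u a) :
    HasMean (fun n => c * u n) (c * a) := by
  refine (Tendsto.const_mul c hu).congr fun N => ?_
  rw [← Finset.mul_sum, mul_div_assoc]

lemma hasMean_of_norm_sum_le {u : ℕ → ℂ} (C : ℝ)
    (hu : ∀ N, ‖∑ n ∈ Finset.range N, u n‖ ≤ C) : HasMean u 0 := by
  refine squeeze_zero_norm (a := fun N : ℕ => C / N) (fun N => ?_)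
    (tendsto_const_div_atTop_nhds_zero_nat C)
  rw [norm_div, Complex.norm_natCast]
  exact div_le_div_of_nonneg_right (hu N) (Nat.cast_nonneg _)

/-- A sequence that is uniformly approximable by sequences whose means are close to `l`
has mean `l`. -/
lemma hasMean_of_approx {u : ℕ → ℂ} {l : ℂ}
    (h : ∀ ε > 0, ∃ (v : ℕ → ℂ) (m : ℂ), HasMean v m ∧ ‖m - l‖ ≤ ε ∧ ∀ n, ‖u n - v n‖ ≤ ε) :
    HasMean u l := by
  refine Metric.tendsto_nhds.2 fun ε hε => ?_
  obtain ⟨v, m, hv, hm, huv⟩ := h (ε / 4) (by positivity)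
  filter_upwards [Metric.tendsto_nhds.1 hv (ε / 4) (by positivity)] with N hN
  rw [dist_eq_norm] at hN ⊢
  have h1 := norm_sum_div_le (u := fun n => u n - v n) huv (by positivity) N
  rw [Finset.sum_sub_distrib, sub_div] at h1
  set a := (∑ n ∈ Finset.range N, u n) / (N : ℂ)
  set b := (∑ n ∈ Finset.range N, v n) / (N : ℂ)
  calc ‖a - l‖ = ‖(a - b) + (b - m) + (m - l)‖ := by congr 1; ring
    _ ≤ ‖a - b‖ + ‖b - m‖ + ‖m - l‖ := norm_add₃_le
    _ < ε := by linarith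

lemma norm_sum_shift_sub_le {u : ℕ → ℂ} (hu : ∀ n, ‖u n‖ ≤ 1) (N h : ℕ) :
    ‖∑ n ∈ Finset.range N, u (n + h) - ∑ n ∈ Finset.range N, u n‖ ≤ 2 * h := by
  have h1 : ∑ n ∈ Finset.range N, u (n + h) - ∑ n ∈ Finset.range N, u n
      = ∑ n ∈ Finset.range h, u (N + n) - ∑ n ∈ Finset.range h, u n := by
    have e1 := Finset.sum_range_add u N h
    have e2 := Finset.sum_range_add u h N
    rw [add_comm h N] at e2
    simp_rw [add_comm h] at e2
    rw [e1] at e2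
    linear_combination -e2
  have hb : ∀ v : ℕ → ℂ, (∀ n, ‖v n‖ ≤ 1) → ‖∑ n ∈ Finset.range h, v n‖ ≤ h := fun v hv =>
    (norm_sum_le _ _).trans ((Finset.sum_le_sum fun n _ => hv n).trans (by simp))
  rw [h1]
  calc _ ≤ ‖∑ n ∈ Finset.range h, u (N + n)‖ + ‖∑ n ∈ Finset.range h, u n‖ := norm_sub_le _ _
    _ ≤ h + h := add_le_add (hb _ fun n => hu _) (hb _ hu)
    _ = 2 * h := by ring

/-- A finite form of van der Corput's inequality. -/
lemma norm_sum_le_vanDerCorput {u : ℕ → ℂ} (hu : ∀ n, ‖u n‖ ≤ 1) (N H : ℕ) :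
    H * ‖∑ n ∈ Finset.range N, u n‖ ≤ 2 * H ^ 2 + √(N * ‖∑ a ∈ Finset.range H,
      ∑ b ∈ Finset.range H, ∑ n ∈ Finset.range N, u (n + a) * conj (u (n + b))‖) := by
  set v : ℕ → ℂ := fun n => ∑ h ∈ Finset.range H, u (n + h) with hv
  have h1 : ‖(H : ℂ) * ∑ n ∈ Finset.range N, u n - ∑ n ∈ Finset.range N, v n‖ ≤ 2 * H ^ 2 := by
    have : (H : ℂ) * ∑ n ∈ Finset.range N, u n - ∑ n ∈ Finset.range N, v n
        = -∑ h ∈ Finset.range H,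
          (∑ n ∈ Finset.range N, u (n + h) - ∑ n ∈ Finset.range N, u n) := by
      rw [hv, Finset.sum_comm, Finset.sum_sub_distrib]
      simp
    rw [this, norm_neg]
    calc _ ≤ ∑ h ∈ Finset.range H, ‖∑ n ∈ Finset.range N, u (n + h) -
          ∑ n ∈ Finset.range N, u n‖ := norm_sum_le _ _
      _ ≤ ∑ h ∈ Finset.range H, (2 * H : ℝ) := Finset.sum_le_sum fun h hh => by
          refine (norm_sum_shift_sub_le hu N h).trans ?_
          have : (h : ℝ) ≤ H := by exact_mod_cast (Finset.mem_range.1 hh).le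
          linarith
      _ = 2 * H ^ 2 := by simp; ring
  have h2 : ‖∑ n ∈ Finset.range N, v n‖ ^ 2 ≤ N * ‖∑ a ∈ Finset.range H,
      ∑ b ∈ Finset.range H, ∑ n ∈ Finset.range N, u (n + a) * conj (u (n + b))‖ := by
    have e : ∑ a ∈ Finset.range H, ∑ b ∈ Finset.range H, ∑ n ∈ Finset.range N,
        u (n + a) * conj (u (n + b)) = ((∑ n ∈ Finset.range N, ‖v n‖ ^ 2 : ℝ) : ℂ) := by
      push_cast
      simp_rw [← Complex.mul_conj', hv, map_sum, Finset.sum_mul_sum]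
      rw [Finset.sum_comm]
      rw [Finset.sum_congr rfl fun a _ => Finset.sum_comm, Finset.sum_comm]
      exact Finset.sum_congr rfl fun n _ => Finset.sum_comm
    rw [e, Complex.norm_real, Real.norm_of_nonneg (by positivity)]
    calc _ ≤ (∑ n ∈ Finset.range N, ‖v n‖) ^ 2 := by gcongr; exact norm_sum_le _ _
      _ ≤ _ := by simpa using sq_sum_le_card_mul_sum_sq (s := Finset.range N) (f := fun n => ‖v n‖)
  have h3 := Real.le_sqrt_of_sq_le h2
  calc _ = ‖(H : ℂ) * ∑ n ∈ Finset.range N, u n‖ := by simp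
    _ = ‖((H : ℂ) * ∑ n ∈ Finset.range N, u n - ∑ n ∈ Finset.range N, v n)
        + ∑ n ∈ Finset.range N, v n‖ := by rw [sub_add_cancel]
    _ ≤ _ := (norm_add_le _ _).trans (add_le_add h1 h3)

/-- Van der Corput's lemma: a bounded sequence whose shifts are pairwise asymptotically
orthogonal has mean zero. -/
lemma hasMean_zero_of_correlations {u : ℕ → ℂ} (hu : ∀ n, ‖u n‖ ≤ 1)
    (h : ∀ a b : ℕ, a ≠ b → HasMean (fun n => u (n + a) * conj (u (n + b))) 0) :
    HasMean u 0 := by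
  refine Metric.tendsto_nhds.2 fun ε hε => ?_
  obtain ⟨H, hH⟩ := exists_nat_gt (8 / ε ^ 2)
  have hH0 : (0 : ℝ) < H := lt_of_le_of_lt (by positivity) hH
  have hcorr : ∀ᶠ N : ℕ in atTop, ∀ a ∈ Finset.range H, ∀ b ∈ Finset.range H, a ≠ b →
      ‖(∑ n ∈ Finset.range N, u (n + a) * conj (u (n + b))) / (N : ℂ)‖ ≤ 1 / H := by
    simp_rw [Finset.eventually_all]
    intro a _ b _
    by_cases hab : a = b
    · simp [hab]
    · filter_upwards [(h a b hab).norm.eventually_le_const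
        (show ‖(0 : ℂ)‖ < 1 / (H : ℝ) by simpa using hH0)] with N hN _
      exact hN
  have hlin : ∀ᶠ N : ℕ in atTop, 2 * (H : ℝ) / N < ε / 2 :=
    (tendsto_const_div_atTop_nhds_zero_nat (2 * (H : ℝ))).eventually_lt_const (by positivity)
  filter_upwards [hcorr, hlin, eventually_gt_atTop 0] with N hN hN' hN0
  have hN0' : (0 : ℝ) < N := by exact_mod_cast hN0
  have hsum : ‖∑ a ∈ Finset.range H, ∑ b ∈ Finset.range H,
      ∑ n ∈ Finset.range N, u (n + a) * conj (u (n + b))‖ ≤ 2 * H * N := by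
    have hab : ∀ a ∈ Finset.range H, ∀ b ∈ Finset.range H,
        ‖∑ n ∈ Finset.range N, u (n + a) * conj (u (n + b))‖ ≤
          (if a = b then (N : ℝ) else 0) + N / H := by
      intro a ha b hb
      split_ifs with hab
      · calc _ ≤ ∑ n ∈ Finset.range N, ‖u (n + a) * conj (u (n + b))‖ := norm_sum_le _ _
          _ ≤ ∑ n ∈ Finset.range N, (1 : ℝ) := Finset.sum_le_sum fun n _ => by
              rw [norm_mul, RCLike.norm_conj]
              exact mul_le_one₀ (hu _) (norm_nonneg _) (hu _)
          _ ≤ _ := by simp; positivity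
      · have := hN a ha b hb hab
        rw [norm_div, Complex.norm_natCast, div_le_div_iff₀ hN0' hH0] at this
        rw [zero_add, le_div_iff₀ hH0]
        linarith
    calc _ ≤ ∑ a ∈ Finset.range H, ∑ b ∈ Finset.range H,
        ((if a = b then (N : ℝ) else 0) + N / H) :=
          (norm_sum_le _ _).trans (Finset.sum_le_sum fun a ha =>
            (norm_sum_le _ _).trans (Finset.sum_le_sum fun b hb => hab a ha b hb))
      _ = 2 * H * N := by
          simp_rw [Finset.sum_add_distrib]
          rw [Finset.sum_congr rfl fun a ha => Finset.sum_ite_eq (Finset.range H) a _]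
          rw [Finset.sum_congr rfl fun a ha => if_pos ha]
          simp
          field_simp
          ring
  have hmain := norm_sum_le_vanDerCorput hu N H
  have hsq : √(N * ‖∑ a ∈ Finset.range H, ∑ b ∈ Finset.range H,
      ∑ n ∈ Finset.range N, u (n + a) * conj (u (n + b))‖) ≤ H * N * (ε / 2) := by
    apply Real.sqrt_le_iff.2 ⟨by positivity, ?_⟩
    have : 8 < H * ε ^ 2 := by rwa [div_lt_iff₀ (by positivity)] at hH
    calc _ ≤ (N * (2 * H * N) : ℝ) := by gcongr
      _ = (8 * H * N ^ 2 : ℝ) / 4 := by ring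
      _ ≤ (H * ε ^ 2 * H * N ^ 2) / 4 := by gcongr
      _ = _ := by ring
  rw [dist_zero_right, norm_div, Complex.norm_natCast, div_lt_iff₀ hN0']
  rw [div_lt_iff₀ hN0'] at hN'
  have : H * ‖∑ n ∈ Finset.range N, u n‖ < H * (ε * N) := by nlinarith
  exact lt_of_mul_lt_mul_left this hH0.le

/-- The character `x ↦ exp (2πix)` of the real line, with complex values. -/
noncomputable def expo (x : ℝ) : ℂ := (Real.fourierChar x : ℂ)

lemma expo_add (x y : ℝ) : expo (x + y) = expo x * expo y := by
  simp [expo, AddChar.map_add_eq_mul]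

lemma norm_expo (x : ℝ) : ‖expo x‖ = 1 := Circle.norm_coe _

lemma conj_expo (x : ℝ) : conj (expo x) = expo (-x) := by
  simp [expo, AddChar.map_neg_eq_inv]

lemma expo_eq_one_iff {x : ℝ} : expo x = 1 ↔ ∃ n : ℤ, x = n := by
  rw [expo, Real.fourierChar_apply, Complex.exp_eq_one_iff]
  refine exists_congr fun n => ?_
  have h : (2 * Real.pi * Complex.I : ℂ) ≠ 0 := Complex.two_pi_I_ne_zero
  constructor
  · intro hx
    have : (2 * Real.pi * Complex.I : ℂ) * x = (2 * Real.pi * Complex.I : ℂ) * n := by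
      push_cast at hx
      linear_combination hx
    exact_mod_cast mul_left_cancel₀ h this
  · rintro rfl
    push_cast
    ring

lemma fourier_coe_eq_expo (m : ℤ) (x : ℝ) : fourier m (x : UnitAddCircle) = expo (m * x) := by
  rw [fourier_coe_apply, expo, Real.fourierChar_apply]
  congr 1
  push_cast
  ring

/-- The rational numbers inside the reals. -/
noncomputable def ratReals : Subring ℝ := (Rat.castHom ℝ).range

lemma irrational_iff_notMem {x : ℝ} : Irrational x ↔ x ∉ ratReals := Iff.rfl

/-- A sequence of reals that is periodic modulo the integers. -/
def PeriodicModInt (f : ℕ → ℝ) : Prop :=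
  ∃ q : ℕ, 0 < q ∧ ∀ n m, q ∣ m → ∃ z : ℤ, f (n + m) - f n = z

lemma PeriodicModInt.sum {ι : Type*} {f : ι → ℕ → ℝ} {s : Finset ι}
    (hf : ∀ i ∈ s, PeriodicModInt (f i)) : PeriodicModInt fun n => ∑ i ∈ s, f i n := by
  classical
  induction s using Finset.induction_on with
  | empty => exact ⟨1, one_pos, fun n m _ => ⟨0, by simp⟩⟩
  | insert i s hi ih =>
    obtain ⟨q, hq, h⟩ := hf i (Finset.mem_insert_self i s)
    obtain ⟨q', hq', h'⟩ := ih fun j hj => hf j (Finset.mem_insert_of_mem hj)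
    refine ⟨q * q', Nat.mul_pos hq hq', fun n m hm => ?_⟩
    obtain ⟨z, hz⟩ := h n m (dvd_of_mul_right_dvd hm)
    obtain ⟨z', hz'⟩ := h' n m (dvd_of_mul_left_dvd hm)
    refine ⟨z + z', ?_⟩
    simp only [Finset.sum_insert hi]
    push_cast
    rw [← hz, ← hz']
    ring

lemma periodicModInt_monomial {a : ℝ} (ha : a ∈ ratReals) (i : ℕ) :
    PeriodicModInt fun n => a * (n : ℝ) ^ i := by
  obtain ⟨r, rfl⟩ := ha
  refine ⟨r.den, r.den_pos, fun n m hm => ?_⟩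
  have hdvd : (m : ℤ) ∣ ((n + m : ℕ) : ℤ) ^ i - (n : ℤ) ^ i := by
    have := sub_dvd_pow_sub_pow ((n + m : ℕ) : ℤ) (n : ℤ) i
    simpa using this
  obtain ⟨c, hc⟩ := hdvd
  obtain ⟨d, rfl⟩ := hm
  refine ⟨r.num * d * c, ?_⟩
  have hc' : ((n + r.den * d : ℕ) : ℝ) ^ i - (n : ℝ) ^ i = r.den * d * c := by
    exact_mod_cast congrArg (Int.cast (R := ℝ)) hc
  have hr : (r : ℝ) * r.den = r.num := by exact_mod_cast Rat.mul_den_eq_num r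
  simp only [Rat.coe_castHom]
  rw [← mul_sub, hc']
  push_cast
  rw [← hr]
  ring

lemma hasMean_expo_of_linear_irrational {p : ℝ[X]} (h1 : p.coeff 1 ∉ ratReals)
    (h2 : ∀ i > 1, p.coeff i ∈ ratReals) : HasMean (fun n => expo (p.eval (n : ℝ))) 0 := by
  have hper : PeriodicModInt fun n => p.eval (n : ℝ) - p.coeff 1 * n := by
    have : (fun n : ℕ => p.eval (n : ℝ) - p.coeff 1 * n) = fun n : ℕ =>
        ∑ i ∈ Finset.range (p.natDegree + 2), (if i = 1 then 0 else p.coeff i) * (n : ℝ) ^ i := by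
      funext n
      have hsplit : ∀ i, p.coeff i * (n : ℝ) ^ i = (if i = 1 then 0 else p.coeff i) * (n : ℝ) ^ i +
          if i = 1 then p.coeff 1 * n else 0 := by
        intro i
        split_ifs with hi
        · simp [hi]
        · simp
      rw [Polynomial.eval_eq_sum_range' (n := p.natDegree + 2) (by omega), sub_eq_iff_eq_add,
        Finset.sum_congr rfl fun i _ => hsplit i, Finset.sum_add_distrib, Finset.sum_ite_eq',
        if_pos (by simp)]
    rw [this]
    refine PeriodicModInt.sum fun i _ => ?_
    rcases lt_trichotomy i 1 with hi | rfl | hi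
    · obtain rfl : i = 0 := by omega
      exact ⟨1, one_pos, fun n m _ => ⟨0, by simp⟩⟩
    · exact ⟨1, one_pos, fun n m _ => ⟨0, by simp⟩⟩
    · rw [if_neg (by omega)]
      exact periodicModInt_monomial (h2 i hi) i
  obtain ⟨q, hq, hper⟩ := hper
  set z := expo (p.coeff 1 * q) with hz
  have hz1 : z ≠ 1 := fun h => by
    obtain ⟨m, hm⟩ := expo_eq_one_iff.1 h
    refine h1 ⟨m / q, ?_⟩
    have : (q : ℝ) ≠ 0 := by exact_mod_cast hq.ne'
    simp only [Rat.coe_castHom]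
    push_cast
    rw [← hm]
    field_simp
  have hshift : ∀ n : ℕ, expo (p.eval ((n + q : ℕ) : ℝ)) = z * expo (p.eval (n : ℝ)) := by
    intro n
    obtain ⟨m, hm⟩ := hper n q dvd_rfl
    have : p.eval ((n + q : ℕ) : ℝ) = m + p.coeff 1 * q + p.eval (n : ℝ) := by
      push_cast at hm ⊢
      linarith
    rw [this, expo_add, expo_add, expo_eq_one_iff.2 ⟨m, rfl⟩, one_mul]
  refine hasMean_of_norm_sum_le (2 * q / ‖z - 1‖) fun N => ?_
  have := norm_sum_shift_sub_le (u := fun n => expo (p.eval (n : ℝ)))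
    (fun n => (norm_expo _).le) N q
  simp only [hshift] at this
  rw [← Finset.mul_sum, ← sub_one_mul, norm_mul] at this
  rwa [le_div_iff₀ (norm_pos_iff.2 (sub_ne_zero.2 hz1)), mul_comm]

lemma eval_sub_eval_mem_ratReals {g : ℝ[X]} (hg : ∀ i ≥ 1, g.coeff i ∈ ratReals) (a b : ℕ) :
    g.eval (a : ℝ) - g.eval (b : ℝ) ∈ ratReals := by
  rw [Polynomial.eval_eq_sum_range, Polynomial.eval_eq_sum_range, ← Finset.sum_sub_distrib]
  refine sum_mem fun i _ => ?_
  rcases Nat.eq_zero_or_pos i with rfl | hi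
  · simp
  · rw [← mul_sub]
    exact mul_mem (hg i hi) (sub_mem (pow_mem (natCast_mem _ a) i) (pow_mem (natCast_mem _ b) i))

lemma hasMean_expo_of_last_irrational (k : ℕ) : ∀ p : ℝ[X], p.coeff (k + 1) ∉ ratReals →
    (∀ i > k + 1, p.coeff i ∈ ratReals) → HasMean (fun n => expo (p.eval (n : ℝ))) 0 := by
  induction k with
  | zero => exact fun p h1 h2 => hasMean_expo_of_linear_irrational h1 h2
  | succ k ih =>
    intro p h1 h2
    refine hasMean_zero_of_correlations (fun n => (norm_expo _).le) fun a b hab => ?_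
    have hdiff : ∀ n : ℕ, expo (p.eval ((n + a : ℕ) : ℝ)) * conj (expo (p.eval ((n + b : ℕ) : ℝ)))
        = expo ((Polynomial.taylor (a : ℝ) p - Polynomial.taylor (b : ℝ) p).eval (n : ℝ)) := by
      intro n
      rw [conj_expo, ← expo_add, Polynomial.eval_sub, Polynomial.taylor_eval,
        Polynomial.taylor_eval, sub_eq_add_neg]
      push_cast
      rfl
    simp only [hdiff]
    refine ih _ ?_ ?_
    · set g := Polynomial.hasseDeriv (k + 1) p with hg
      have hg1 : g.coeff 1 = (k + 2) * p.coeff (k + 2) := by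
        rw [hg, Polynomial.hasseDeriv_coeff, add_comm 1 (k + 1), Nat.choose_succ_self_right]
        push_cast
        ring
      have hmem : (g - Polynomial.C (g.coeff 1) * Polynomial.X).eval (a : ℝ) -
          (g - Polynomial.C (g.coeff 1) * Polynomial.X).eval (b : ℝ) ∈ ratReals := by
        refine eval_sub_eval_mem_ratReals (fun i hi => ?_) a b
        rcases hi.eq_or_lt with rfl | hi
        · simp
        · rw [Polynomial.coeff_sub, Polynomial.coeff_C_mul, Polynomial.coeff_X_of_ne_one (by omega),
            mul_zero, sub_zero, hg, Polynomial.hasseDeriv_coeff]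
          exact mul_mem (natCast_mem _ _) (h2 _ (by omega))
      rw [Polynomial.coeff_sub, Polynomial.taylor_coeff, Polynomial.taylor_coeff]
      intro hcoeff
      have hprod := sub_mem hcoeff hmem
      simp only [Polynomial.eval_sub, Polynomial.eval_mul, Polynomial.eval_C, Polynomial.eval_X]
        at hprod
      have hprod' : ((((k + 2 : ℕ) : ℤ) * ((a : ℤ) - b) : ℤ) : ℝ) * p.coeff (k + 2)
          ∈ ratReals := by
        convert hprod using 1
        rw [hg1]
        push_cast
        ring
      have hne : (((k + 2 : ℕ) : ℤ) * ((a : ℤ) - b) : ℤ) ≠ 0 :=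
        mul_ne_zero (by positivity) (sub_ne_zero.2 (by exact_mod_cast hab))
      exact irrational_iff_notMem.1 ((irrational_iff_notMem.2 h1).intCast_mul hne) hprod'
    · intro i hi
      rw [Polynomial.coeff_sub, Polynomial.taylor_coeff, Polynomial.taylor_coeff]
      refine eval_sub_eval_mem_ratReals (fun j hj => ?_) a b
      rw [Polynomial.hasseDeriv_coeff]
      exact mul_mem (natCast_mem _ _) (h2 _ (by omega))

/-- Weyl's theorem on exponential sums along polynomials. -/
theorem hasMean_expo_polynomial {p : ℝ[X]} {k : ℕ} (hk : 0 < k) (hp : Irrational (p.coeff k)) :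
    HasMean (fun n => expo (p.eval (n : ℝ))) 0 := by
  classical
  set m := Nat.findGreatest (fun i => p.coeff i ∉ ratReals) p.natDegree with hm
  have hkdeg : k ≤ p.natDegree := Polynomial.le_natDegree_of_ne_zero hp.ne_zero
  have hm1 : p.coeff m ∉ ratReals :=
    Nat.findGreatest_spec (P := fun i => p.coeff i ∉ ratReals) hkdeg hp
  have hkm : k ≤ m := Nat.le_findGreatest hkdeg hp
  obtain ⟨j, hj⟩ : ∃ j, m = j + 1 := ⟨m - 1, by omega⟩
  rw [hj] at hm1
  refine hasMean_expo_of_last_irrational j p hm1 fun i hi => ?_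
  by_contra hcon
  rcases le_or_gt i p.natDegree with h | h
  · exact Nat.findGreatest_is_greatest (show m < i by omega) h hcon
  · exact hcon (by rw [Polynomial.coeff_eq_zero_of_natDegree_lt h]; exact zero_mem _)

lemma hasMean_comp_mul_of_fourier {v : ℕ → ℂ} {C : ℝ} (hv : ∀ n, ‖v n‖ ≤ C)
    (x : ℕ → UnitAddCircle) (L : C(UnitAddCircle, ℂ) →L[ℂ] ℂ)
    (h : ∀ m : ℤ, HasMean (fun n => fourier m (x n) * v n) (L (fourier m)))
    (f : C(UnitAddCircle, ℂ)) : HasMean (fun n => f (x n) * v n) (L f) := by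
  have hspan : ∀ g ∈ Submodule.span ℂ (Set.range (fourier (T := 1))),
      HasMean (fun n => g (x n) * v n) (L g) := by
    intro g hg
    induction hg using Submodule.span_induction with
    | mem g hg =>
      obtain ⟨m, rfl⟩ := hg
      exact h m
    | zero => simp [HasMean]
    | add g g' _ _ hg hg' =>
      rw [map_add]
      simpa [add_mul] using hg.add hg'
    | smul c g _ hg =>
      rw [map_smul]
      simpa [mul_assoc] using hg.const_mul c
  refine hasMean_of_approx fun ε hε => ?_
  have hC : 0 ≤ C := (norm_nonneg _).trans (hv 0)
  set δ := ε / (C + ‖L‖ + 1) with hδ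
  have hden : 0 < C + ‖L‖ + 1 := by positivity
  have hδ0 : 0 < δ := by positivity
  have hδε : δ * (C + ‖L‖ + 1) = ε := div_mul_cancel₀ _ hden.ne'
  have hf : f ∈ closure (Submodule.span ℂ (Set.range (fourier (T := 1))) :
      Set C(UnitAddCircle, ℂ)) := by
    rw [← Submodule.topologicalClosure_coe, span_fourier_closure_eq_top]
    trivial
  obtain ⟨g, hg, hfg⟩ := Metric.mem_closure_iff.1 hf δ hδ0
  rw [dist_eq_norm] at hfg
  refine ⟨_, _, hspan g hg, ?_, fun n => ?_⟩
  · rw [← map_sub, norm_sub_rev f g] at *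
    calc ‖L (g - f)‖ ≤ ‖L‖ * ‖g - f‖ := L.le_opNorm _
      _ ≤ ‖L‖ * δ := by gcongr
      _ ≤ ε := by nlinarith
  · rw [← sub_mul, norm_mul]
    calc ‖f (x n) - g (x n)‖ * ‖v n‖ ≤ δ * C := by
          gcongr
          · exact ((f - g).norm_coe_le_norm (x n)).trans hfg.le
          · exact hv n
      _ ≤ ε := by nlinarith [norm_nonneg L]

lemma norm_prod_comp_le (S : Finset ℕ) (f : ℕ → C(UnitAddCircle, ℂ)) (x : ℕ → UnitAddCircle) :
    ‖∏ j ∈ S, f j (x j)‖ ≤ ∏ j ∈ S, ‖f j‖ := by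
  rw [norm_prod]
  exact Finset.prod_le_prod (fun _ _ => norm_nonneg _) fun j _ => (f j).norm_coe_le_norm _

lemma fourier_monomial_eq_expo (m : ℤ) (b : ℝ) (j n : ℕ) :
    fourier m ((b * n ^ j : ℝ) : UnitAddCircle) =
      expo ((Polynomial.C (m * b) * Polynomial.X ^ j : ℝ[X]).eval (n : ℝ)) := by
  rw [fourier_coe_eq_expo]
  simp [mul_assoc]

/-- Monomial sequences weighted by a polynomial phase whose degree-`k` coefficient is
irrational, where `k` is not the degree of any of the monomials, have mean zero. -/
lemma hasMean_prod_mul_expo (f : ℕ → C(UnitAddCircle, ℂ)) (b : ℕ → ℝ) {k : ℕ} (hk : 0 < k)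
    (S : Finset ℕ) (hS : k ∉ S) : ∀ p : ℝ[X], Irrational (p.coeff k) →
    HasMean (fun n => (∏ j ∈ S, f j ((b j * n ^ j : ℝ) : UnitAddCircle)) *
      expo (p.eval (n : ℝ))) 0 := by
  induction S using Finset.induction_on with
  | empty =>
    intro p hp
    simpa using hasMean_expo_polynomial hk hp
  | insert i S hi ih =>
    intro p hp
    rw [Finset.mem_insert, not_or] at hS
    have hbound : ∀ n : ℕ, ‖(∏ j ∈ S, f j ((b j * n ^ j : ℝ) : UnitAddCircle)) *
        expo (p.eval (n : ℝ))‖ ≤ ∏ j ∈ S, ‖f j‖ := fun n => by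
      rw [norm_mul, norm_expo, mul_one]
      exact norm_prod_comp_le S f _
    have := hasMean_comp_mul_of_fourier hbound (fun n => ((b i * n ^ i : ℝ) : UnitAddCircle)) 0
      (fun m => ?_) (f i)
    · simpa [Finset.prod_insert hi, mul_assoc] using this
    · have hq : Irrational ((p + Polynomial.C (m * b i) * Polynomial.X ^ i).coeff k) := by
        rwa [Polynomial.coeff_add, Polynomial.coeff_C_mul_X_pow, if_neg hS.1, add_zero]
      refine Eq.mp ?_ (ih hS.2 _ hq)
      simp only [Polynomial.eval_add, expo_add, ← fourier_monomial_eq_expo]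
      congr 1
      funext n
      ring

/-- Integration over the circle as a functional on continuous functions. -/
noncomputable def circleMean : C(UnitAddCircle, ℂ) →L[ℂ] ℂ :=
  LinearMap.mkContinuous
    { toFun := fun f => ∫ x, f x ∂AddCircle.haarAddCircle
      map_add' := fun f g => integral_add
        (f.continuous.integrable_of_hasCompactSupport (HasCompactSupport.of_compactSpace _))
        (g.continuous.integrable_of_hasCompactSupport (HasCompactSupport.of_compactSpace _))
      map_smul' := fun c f => integral_smul c _ } 1 fun f => by
    simpa using norm_integral_le_of_norm_le_const (μ := AddCircle.haarAddCircle)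
      (Eventually.of_forall fun x => f.norm_coe_le_norm x)

lemma circleMean_apply (f : C(UnitAddCircle, ℂ)) :
    circleMean f = ∫ x, f x ∂AddCircle.haarAddCircle := rfl

lemma circleMean_fourier (m : ℤ) : circleMean (fourier m) = if m = 0 then 1 else 0 := by
  have h := congrFun (fourierCoeff_fourier (T := 1) m) 0
  rw [fourierCoeff] at h
  simp only [neg_zero, fourier_zero, one_smul, Pi.single_apply, eq_comm (a := (0 : ℤ))] at h
  rw [circleMean_apply, h]

/-- Joint equidistribution of the monomial sequences `b j * n ^ j` with `b j` irrational. -/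
lemma hasMean_prod (f : ℕ → C(UnitAddCircle, ℂ)) {b : ℕ → ℝ} (S : Finset ℕ)
    (hS : ∀ j ∈ S, 0 < j) (hb : ∀ j ∈ S, Irrational (b j)) :
    HasMean (fun n => ∏ j ∈ S, f j ((b j * n ^ j : ℝ) : UnitAddCircle))
      (∏ j ∈ S, circleMean (f j)) := by
  induction S using Finset.induction_on with
  | empty =>
    refine tendsto_const_nhds.congr' ?_
    filter_upwards [eventually_gt_atTop 0] with N hN
    have : (N : ℂ) ≠ 0 := by exact_mod_cast hN.ne'
    simp [this]
  | insert i S hi ih =>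
    have ih := ih (fun j hj => hS j (Finset.mem_insert_of_mem hj))
      (fun j hj => hb j (Finset.mem_insert_of_mem hj))
    have := hasMean_comp_mul_of_fourier (fun n => norm_prod_comp_le S f
        fun j => ((b j * n ^ j : ℝ) : UnitAddCircle)) (fun n => ((b i * n ^ i : ℝ) : UnitAddCircle))
      ((∏ j ∈ S, circleMean (f j)) • circleMean) (fun m => ?_) (f i)
    · simpa [Finset.prod_insert hi, mul_comm] using this
    · by_cases hm : m = 0
      · simpa [hm, circleMean_fourier, -fourier_apply, fourier_zero] using ih
      · have hirr : Irrational ((Polynomial.C (m * b i) * Polynomial.X ^ i : ℝ[X]).coeff i) := by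
          rw [Polynomial.coeff_C_mul_X_pow, if_pos rfl]
          exact (hb i (Finset.mem_insert_self i S)).intCast_mul hm
        have := hasMean_prod_mul_expo f b (hS i (Finset.mem_insert_self i S)) S hi _ hirr
        simp only [← fourier_monomial_eq_expo] at this
        simpa [hm, circleMean_fourier, -fourier_apply, mul_comm] using this

/-- A continuous nonnegative function on the circle that vanishes outside the half circle
around `1 / 2`. -/
noncomputable def bump (x : UnitAddCircle) : ℝ := max 0 (-(fourier 1 x).re)

lemma continuous_bump : Continuous bump :=
  continuous_const.max (Complex.continuous_re.comp (fourier 1).continuous).neg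

lemma bump_nonneg (x : UnitAddCircle) : 0 ≤ bump x := le_max_left _ _

lemma bump_le_one (x : UnitAddCircle) : bump x ≤ 1 := by
  refine max_le zero_le_one ?_
  have h1 := Complex.abs_re_le_norm (fourier 1 x)
  have h2 : ‖fourier 1 x‖ = 1 := Circle.norm_coe _
  rw [h2] at h1
  linarith [neg_abs_le (fourier 1 x).re]

lemma expo_re_neg_of_bump_ne_zero {t : ℝ} (ht : bump (t : UnitAddCircle) ≠ 0) :
    (expo t).re < 0 := by
  by_contra h
  refine ht (max_eq_left ?_)
  rw [fourier_coe_eq_expo]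
  simpa using h

/-- The function `bump` as a bundled complex-valued map. -/
noncomputable def bumpMap : C(UnitAddCircle, ℂ) :=
  ⟨fun x => (bump x : ℂ), Complex.continuous_ofReal.comp continuous_bump⟩

lemma exists_circleMean_bumpMap : ∃ m : ℝ, 0 < m ∧ circleMean bumpMap = m := by
  refine ⟨∫ x, bump x ∂AddCircle.haarAddCircle, ?_, integral_ofReal⟩
  refine continuous_bump.integral_pos_of_hasCompactSupport_nonneg_nonzero
    (HasCompactSupport.of_compactSpace _) bump_nonneg (x := ((1 / 2 : ℝ) : UnitAddCircle)) ?_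
  have h : expo (1 / 2) = -1 := by
    rw [expo, Real.fourierChar_apply]
    convert Complex.exp_pi_mul_I using 2
    push_cast
    ring
  rw [bump, fourier_coe_eq_expo]
  norm_num [h]

/-- The torsion subset of the circle, filtered by the factorials. -/
def factorialTorsion (D : ℕ) : Set UnitAddCircle := {x | D.factorial • x = 0}

lemma monotone_factorialTorsion : Monotone factorialTorsion := by
  intro a b hab x hx
  obtain ⟨c, hc⟩ := Nat.factorial_dvd_factorial hab
  simp only [factorialTorsion, Set.mem_ofPred_eq] at hx ⊢
  rw [hc, mul_comm, mul_smul, hx, smul_zero]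

lemma measurableSet_factorialTorsion (D : ℕ) : MeasurableSet (factorialTorsion D) :=
  (AddCircle.finite_torsion (1 : ℝ) D.factorial_pos).measurableSet

lemma irrational_of_notMem_torsion {t : ℝ}
    (ht : (t : UnitAddCircle) ∉ ⋃ D, factorialTorsion D) : Irrational t := by
  rintro ⟨r, rfl⟩
  refine ht (Set.mem_iUnion.2 ⟨r.den, ?_⟩)
  obtain ⟨c, hc⟩ := Nat.dvd_factorial r.den_pos le_rfl
  have hr : (r : ℝ) * r.den = r.num := by exact_mod_cast Rat.mul_den_eq_num r
  simp only [factorialTorsion, Set.mem_ofPred_eq]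
  rw [← AddCircle.coe_nsmul, AddCircle.coe_eq_zero_iff]
  refine ⟨r.num * c, ?_⟩
  rw [hc]
  simp only [zsmul_eq_mul, nsmul_eq_mul]
  push_cast
  rw [← hr]
  ring

lemma fourier_eq_one_of_mem_factorialTorsion {D k : ℕ} (hk : 0 < k) {x : UnitAddCircle}
    (hx : x ∈ factorialTorsion D) (n : ℕ) :
    fourier (((D.factorial * n) ^ k : ℕ) : ℤ) x = 1 := by
  obtain ⟨j, rfl⟩ : ∃ j, k = j + 1 := ⟨k - 1, by omega⟩
  have : ((D.factorial * n) ^ (j + 1) : ℕ) • x = 0 := by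
    rw [pow_succ, mul_comm D.factorial n, ← mul_assoc, mul_smul]
    rw [show D.factorial • x = 0 from hx, smul_zero]
  rw [fourier_apply, natCast_zsmul, this]
  simp

lemma integrable_fourier (σ : Measure UnitAddCircle) [IsFiniteMeasure σ] (m : ℤ) :
    Integrable (fun x => fourier m x) σ :=
  (fourier m).continuous.integrable_of_hasCompactSupport (HasCompactSupport.of_compactSpace _)

/-- Away from the torsion points, weighted averages of `fourier ((M * n) ^ k)` tend to zero
in mean. -/
lemma hasMean_weight_mul_integral (σ : Measure UnitAddCircle) [IsFiniteMeasure σ] {M k : ℕ}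
    (hM : 0 < M) (hk : 0 < k) {S : Finset ℕ} (hkS : k ∉ S) :
    HasMean (fun n => (∏ j ∈ S, bumpMap ((√2 * M ^ j * n ^ j : ℝ) : UnitAddCircle)) *
      ∫ x in (⋃ D, factorialTorsion D)ᶜ, fourier (((M * n) ^ k : ℕ) : ℤ) x ∂σ) 0 := by
  set E := (⋃ D, factorialTorsion D)ᶜ with hE
  have hEm : MeasurableSet E := (MeasurableSet.iUnion measurableSet_factorialTorsion).compl
  set w : ℕ → ℂ := fun n => ∏ j ∈ S, bumpMap ((√2 * M ^ j * n ^ j : ℝ) : UnitAddCircle) with hw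
  have hw1 : ∀ n, ‖w n‖ ≤ 1 := fun n => by
    rw [hw, norm_prod]
    refine Finset.prod_le_one (fun _ _ => norm_nonneg _) fun j _ => ?_
    rw [show bumpMap _ = (bump _ : ℂ) from rfl, Complex.norm_real,
      Real.norm_of_nonneg (bump_nonneg _)]
    exact bump_le_one _
  have hnorm : ∀ (m : ℤ) (x : UnitAddCircle), ‖fourier m x‖ = 1 := fun m x => Circle.norm_coe _
  have hlim := tendsto_integral_of_dominated_convergence (μ := σ.restrict E)
    (F := fun (N : ℕ) x =>
      (∑ n ∈ Finset.range N, w n * fourier (((M * n) ^ k : ℕ) : ℤ) x) / (N : ℂ))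
    (f := fun _ => 0) (fun _ => 1) (fun N => ?_) (integrable_const _)
    (fun N => Eventually.of_forall fun x => ?_) ?_
  · rw [integral_zero] at hlim
    refine hlim.congr fun N => ?_
    rw [integral_div, integral_finsetSum]
    · simp_rw [integral_const_mul]
      rfl
    · exact fun n _ => (integrable_fourier _ _).const_mul _
  · refine Continuous.aestronglyMeasurable ?_
    exact (continuous_finsetSum _ fun n _ =>
      continuous_const.mul (fourier _).continuous).div_const _
  · refine norm_sum_div_le (fun n => ?_) zero_le_one N
    rw [norm_mul, hnorm, mul_one]
    exact hw1 n
  · filter_upwards [ae_restrict_mem hEm] with x hx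
    obtain ⟨t, rfl⟩ := QuotientAddGroup.mk_surjective x
    have ht : Irrational t := irrational_of_notMem_torsion hx
    have hirr : Irrational ((Polynomial.C (((M ^ k : ℕ) : ℝ) * t) *
        Polynomial.X ^ k : ℝ[X]).coeff k) := by
      rw [Polynomial.coeff_C_mul_X_pow, if_pos rfl]
      exact ht.natCast_mul (pow_pos hM k).ne'
    refine Eq.mp ?_ (hasMean_prod_mul_expo (fun _ => bumpMap) (fun j => √2 * M ^ j) hk S hkS _ hirr)
    rw [HasMean]
    congr 1
    funext N
    congr 1
    refine Finset.sum_congr rfl fun n _ => ?_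
    congr 1
    rw [show (QuotientAddGroup.mk t : UnitAddCircle) = (t : UnitAddCircle) from rfl,
      fourier_coe_eq_expo]
    congr 1
    simp
    ring

/-- Every finite measure on the circle has Fourier coefficients with real part at least `-c`
along the `k`-th powers of suitable `r` for which `√2 * r ^ j`, `j ∈ S`, stays away from the
integers. -/
theorem exists_integral_fourier_gt (σ : Measure UnitAddCircle) [IsFiniteMeasure σ] {k : ℕ}
    (hk : 0 < k) {S : Finset ℕ} (hS : ∀ j ∈ S, 0 < j) (hkS : k ∉ S) (L : ℕ) {c : ℝ} (hc : 0 < c) :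
    ∃ r : ℕ, L ≤ r ∧ 0 < r ∧ (∀ j ∈ S, (expo (√2 * r ^ j)).re < 0) ∧
      -c < ∫ x, (fourier ((r ^ k : ℕ) : ℤ) x).re ∂σ := by
  by_contra! hcon
  set E := ⋃ D, factorialTorsion D with hE
  have hEm : MeasurableSet E := MeasurableSet.iUnion measurableSet_factorialTorsion
  obtain ⟨D, hDL, hD⟩ : ∃ D ≥ L, σ.real E - σ.real (factorialTorsion D) < c / 2 := by
    have h1 : Tendsto (fun D => σ.real (factorialTorsion D)) atTop (𝓝 (σ.real E)) :=
      (ENNReal.tendsto_toReal (measure_ne_top σ E)).comp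
        (tendsto_measure_iUnion_atTop monotone_factorialTorsion)
    obtain ⟨D, hD1, hD2⟩ := ((eventually_ge_atTop L).and
      (h1.eventually_const_lt (show σ.real E - c / 2 < σ.real E by linarith))).exists
    exact ⟨D, hD1, by linarith⟩
  set M := D.factorial with hM
  have hM0 : 0 < M := D.factorial_pos
  have hLM : L ≤ M := hDL.trans D.self_le_factorial
  set w : ℕ → ℝ := fun n => ∏ j ∈ S, bump ((√2 * M ^ j * n ^ j : ℝ) : UnitAddCircle) with hw
  have hw0 : ∀ n, 0 ≤ w n := fun n => Finset.prod_nonneg fun _ _ => bump_nonneg _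
  have hwC : ∀ n, (w n : ℂ) = ∏ j ∈ S, bumpMap ((√2 * M ^ j * n ^ j : ℝ) : UnitAddCircle) :=
    fun n => by rw [hw]; push_cast; rfl
  set J : ℕ → ℂ := fun n => ∫ x in Eᶜ, fourier (((M * n) ^ k : ℕ) : ℤ) x ∂σ with hJ
  have hint : ∀ m : ℤ, Integrable (fun x => (fourier m x).re) σ := fun m =>
    (integrable_fourier σ m).re
  have hlower : ∀ n, -(c / 2) + (J n).re ≤ ∫ x, (fourier (((M * n) ^ k : ℕ) : ℤ) x).re ∂σ := by
    intro n
    have hsub : factorialTorsion D ⊆ E := Set.subset_iUnion _ D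
    rw [← integral_add_compl hEm (hint _)]
    refine add_le_add ?_ ?_
    · rw [← integral_inter_add_sdiff (measurableSet_factorialTorsion D) (hint _).integrableOn,
        Set.inter_eq_self_of_subset_right hsub]
      have h1 : 0 ≤ ∫ x in factorialTorsion D, (fourier (((M * n) ^ k : ℕ) : ℤ) x).re ∂σ :=
        setIntegral_nonneg (measurableSet_factorialTorsion D) fun x hx => by
          rw [fourier_eq_one_of_mem_factorialTorsion hk hx n]
          simp
      have h2 : ‖∫ x in E \ factorialTorsion D, (fourier (((M * n) ^ k : ℕ) : ℤ) x).re ∂σ‖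
          ≤ 1 * σ.real (E \ factorialTorsion D) :=
        norm_setIntegral_le_of_norm_le_const (measure_lt_top _ _) fun x _ =>
          (Complex.abs_re_le_norm _).trans (Circle.norm_coe _).le
      rw [one_mul, measureReal_sdiff hsub (measurableSet_factorialTorsion D)] at h2
      have h3 := neg_abs_le
        (∫ x in E \ factorialTorsion D, (fourier (((M * n) ^ k : ℕ) : ℤ) x).re ∂σ)
      rw [Real.norm_eq_abs] at h2
      linarith
    · exact (RCLike.reCLM (K := ℂ)).integral_comp_comm (integrable_fourier _ _) |>.symm.le
  have hupper : ∀ n, 0 < n → w n * (c / 2 + (J n).re) ≤ 0 := by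
    intro n hn
    rcases eq_or_ne (w n) 0 with h0 | h0
    · simp [h0]
    · have hr := hcon (M * n) (hLM.trans (Nat.le_mul_of_pos_right M hn)) (Nat.mul_pos hM0 hn)
        fun j hj => by
          have := expo_re_neg_of_bump_ne_zero (Finset.prod_ne_zero_iff.1 h0 j hj)
          convert this using 3
          push_cast
          ring
      exact mul_nonpos_of_nonneg_of_nonpos (hw0 n) (by linarith [hlower n])
  obtain ⟨m, hm, hmean⟩ := exists_circleMean_bumpMap
  have hmw : HasMean (fun n => (w n : ℂ)) (∏ j ∈ S, circleMean bumpMap) := by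
    simp only [hwC]
    exact hasMean_prod (fun _ => bumpMap) S hS fun j _ => by
      exact_mod_cast irrational_sqrt_two.mul_natCast (pow_pos hM0 j).ne'
  have hmJ : HasMean (fun n => (w n : ℂ) * J n) 0 := by
    simp only [hwC]
    exact hasMean_weight_mul_integral σ hM0 hk hkS
  have htot := (hmw.const_mul ((c / 2 : ℝ) : ℂ)).add hmJ
  have hre := (Complex.continuous_re.tendsto _).comp htot
  have hK : Tendsto (fun N : ℕ => (w 0 * (c / 2 + (J 0).re)) / N) atTop (𝓝 0) :=
    tendsto_const_div_atTop_nhds_zero_nat _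
  have hle := le_of_tendsto_of_tendsto hre hK ?_
  · rw [hmean, Finset.prod_const, add_zero] at hle
    have : 0 < c / 2 * m ^ S.card := by positivity
    have h2 : (((c / 2 : ℝ) : ℂ) * (m : ℂ) ^ S.card).re = c / 2 * m ^ S.card := by
      rw [← Complex.ofReal_pow, ← Complex.ofReal_mul, Complex.ofReal_re]
    linarith
  · filter_upwards [eventually_gt_atTop 0] with N hN
    obtain ⟨N, rfl⟩ : ∃ N', N = N' + 1 := ⟨N - 1, by omega⟩
    have : ((∑ n ∈ Finset.range (N + 1), (((c / 2 : ℝ) : ℂ) * w n + w n * J n)) /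
        ((N + 1 : ℕ) : ℂ)).re =
        (∑ n ∈ Finset.range (N + 1), w n * (c / 2 + (J n).re)) / ((N + 1 : ℕ) : ℝ) := by
      rw [Complex.div_natCast_re, Complex.re_sum]
      congr 1
      refine Finset.sum_congr rfl fun n _ => ?_
      rw [Complex.add_re, Complex.re_ofReal_mul, Complex.re_ofReal_mul, Complex.ofReal_re]
      ring
    simp only [Function.comp_apply]
    rw [this, Finset.sum_range_succ']
    gcongr
    have := Finset.sum_nonpos fun n (_ : n ∈ Finset.range N) => hupper (n + 1) n.succ_pos
    linarith

/-- If every finite measure integrates some function of `s` to more than any given negative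
number, then some convex combination of functions of `s` is almost nonnegative everywhere. -/
theorem exists_mem_convexHull_gt {X : Type*} [TopologicalSpace X] [CompactSpace X] [T2Space X]
    [MeasurableSpace X] [BorelSpace X] (s : Set C(X, ℝ))
    (hs : ∀ (σ : Measure X) [IsFiniteMeasure σ], ∀ c > 0, ∃ g ∈ s, -c < ∫ x, g x ∂σ)
    {ε : ℝ} (hε : 0 < ε) : ∃ g ∈ convexHull ℝ s, ∀ x, -ε < g x := by
  by_contra! hcon
  set U : Set C(X, ℝ) := {f | ∀ x, -ε < f x} with hU
  have hUopen : IsOpen U := by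
    have := ContinuousMap.isOpen_setOfPred_mapsTo (X := X) (isCompact_univ) (isOpen_Ioi (a := -ε))
    simpa [Set.MapsTo, hU] using this
  have hUconv : Convex ℝ U := by
    intro f hf g hg a b ha hb hab x
    have h := (convex_Ioi (-ε)) (hf x) (hg x) ha hb hab
    simpa using h
  have hdisj : Disjoint U (convexHull ℝ s) := Set.disjoint_left.2 fun f hf hf' => by
    obtain ⟨x, hx⟩ := hcon f hf'
    exact (hf x).not_ge hx
  obtain ⟨Φ, u, hΦU, hΦs⟩ := geometric_hahn_banach_open hUconv hUopen (convex_convexHull ℝ s) hdisj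
  have hu : 0 < u := by
    have := hΦU 0 fun x => by simpa using hε
    simpa using this
  have hpos : ∀ f : C(X, ℝ), (∀ x, 0 ≤ f x) → Φ f ≤ 0 := by
    intro f hf
    by_contra! hf0
    have := hΦU ((u / Φ f) • f) fun x => by
      have : 0 ≤ u / Φ f * f x := mul_nonneg (div_nonneg hu.le hf0.le) (hf x)
      simp only [ContinuousMap.smul_apply, smul_eq_mul]
      linarith
    rw [map_smul, smul_eq_mul, div_mul_cancel₀ _ hf0.ne'] at this
    exact lt_irrefl _ this
  set Λ : CompactlySupportedContinuousMap X ℝ →ₚ[ℝ] ℝ := PositiveLinearMap.mk₀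
    { toFun := fun f => -Φ f.toContinuousMap
      map_add' := fun f g => by
        rw [← neg_add, ← map_add]
        rfl
      map_smul' := fun c f => by
        rw [RingHom.id_apply, smul_neg, ← map_smul]
        rfl }
    (fun f hf => neg_nonneg.2 (hpos _ fun x => hf x)) with hΛ
  obtain ⟨g, hgs, hg⟩ := hs (RealRMK.rieszMeasure Λ) u hu
  have h1 := RealRMK.integral_rieszMeasure Λ
    (CompactlySupportedContinuousMap.continuousMapEquiv g)
  have h2 : ∫ x, g x ∂(RealRMK.rieszMeasure Λ) = -Φ g := h1
  have h3 := hΦs g (subset_convexHull ℝ s hgs)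
  linarith

/-- The set `F` carries a probability weight for which the trigonometric polynomial with
frequencies the `k`-th powers of its elements is bounded below by `-ε`. -/
def HasAlmostPositiveSum (k : ℕ) (ε : ℝ) (F : Set ℕ) : Prop :=
  ∃ (ι : Type) (_ : Fintype ι) (w : ι → ℝ) (r : ι → ℕ), (∀ i, 0 ≤ w i) ∧ ∑ i, w i = 1 ∧
    (∀ i, r i ∈ F) ∧ ∀ x : UnitAddCircle, -ε < ∑ i, w i * (fourier ((r i ^ k : ℕ) : ℤ) x).re

lemma HasAlmostPositiveSum.mono {k : ℕ} {ε : ℝ} {F F' : Set ℕ} (h : HasAlmostPositiveSum k ε F)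
    (hF : F ⊆ F') : HasAlmostPositiveSum k ε F' := by
  obtain ⟨ι, _, w, r, hw, hw1, hr, hx⟩ := h
  exact ⟨ι, inferInstance, w, r, hw, hw1, fun i => hF (hr i), hx⟩

lemma HasAlmostPositiveSum.nonempty {k : ℕ} {ε : ℝ} {F : Set ℕ}
    (h : HasAlmostPositiveSum k ε F) : F.Nonempty := by
  obtain ⟨ι, _, w, r, hw, hw1, hr, hx⟩ := h
  rcases isEmpty_or_nonempty ι with hι | ⟨⟨i⟩⟩
  · simp at hw1
  · exact ⟨r i, hr i⟩

theorem exists_finite_hasAlmostPositiveSum {k : ℕ} (hk : 0 < k) {S : Finset ℕ}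
    (hS : ∀ j ∈ S, 0 < j) (hkS : k ∉ S) (L : ℕ) {ε : ℝ} (hε : 0 < ε) :
    ∃ F : Set ℕ, F.Finite ∧ (∀ r ∈ F, L ≤ r ∧ 0 < r ∧ ∀ j ∈ S, (expo (√2 * r ^ j)).re < 0) ∧
      HasAlmostPositiveSum k ε F := by
  set g : ℕ → C(UnitAddCircle, ℝ) := fun r =>
    ⟨fun x => (fourier ((r ^ k : ℕ) : ℤ) x).re,
      Complex.continuous_re.comp (fourier _).continuous⟩ with hg
  obtain ⟨f, hf, hfx⟩ := exists_mem_convexHull_gt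
    (g '' {r | L ≤ r ∧ 0 < r ∧ ∀ j ∈ S, (expo (√2 * r ^ j)).re < 0})
    (fun σ _ c hc => by
      obtain ⟨r, h1, h2, h3, h4⟩ := exists_integral_fourier_gt σ hk hS hkS L hc
      exact ⟨g r, ⟨r, ⟨h1, h2, h3⟩, rfl⟩, h4⟩) hε
  obtain ⟨ι, _, w, z, hw, hw1, hz, rfl⟩ := mem_convexHull_iff_exists_fintype.1 hf
  choose r hr hrz using hz
  refine ⟨Set.range r, Set.finite_range r, ?_, ι, inferInstance, w, r, hw, hw1,
    Set.mem_range_self, fun x => ?_⟩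
  · rintro _ ⟨i, rfl⟩
    exact hr i
  · have := hfx x
    simp only [← hrz] at this
    simpa [ContinuousMap.sum_apply, -fourier_apply, hg] using this

lemma integral_normSq_mul_fourier_re (u : ℕ → ℝ) (N m : ℕ) :
    ∫ x : UnitAddCircle, ‖∑ i ∈ Finset.range N, (u i : ℂ) * fourier (i : ℤ) x‖ ^ 2 *
      (fourier (m : ℤ) x).re ∂AddCircle.haarAddCircle =
    ∑ i ∈ Finset.range N, ∑ j ∈ Finset.range N, if j = i + m then u i * u j else 0 := by
  set h : C(UnitAddCircle, ℂ) := ∑ i ∈ Finset.range N, ∑ j ∈ Finset.range N,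
    ((u i * u j : ℝ) : ℂ) • fourier ((i : ℤ) + -(j : ℤ) + (m : ℤ)) with hh
  have hpt : ∀ x : UnitAddCircle, ‖∑ i ∈ Finset.range N, (u i : ℂ) * fourier (i : ℤ) x‖ ^ 2 *
      (fourier (m : ℤ) x).re = (h x).re := by
    intro x
    rw [← Complex.re_ofReal_mul]
    congr 1
    push_cast
    rw [← Complex.mul_conj', map_sum, Finset.sum_mul_sum, Finset.sum_mul, hh,
      ContinuousMap.sum_apply]
    refine Finset.sum_congr rfl fun i _ => ?_
    rw [Finset.sum_mul, ContinuousMap.sum_apply]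
    refine Finset.sum_congr rfl fun j _ => ?_
    rw [ContinuousMap.smul_apply, fourier_add, fourier_add, fourier_neg, map_mul,
      Complex.conj_ofReal, smul_eq_mul]
    push_cast
    ring
  have hint : ∫ x, (h x).re ∂AddCircle.haarAddCircle = (circleMean h).re :=
    (RCLike.reCLM (K := ℂ)).integral_comp_comm
      (h.continuous.integrable_of_hasCompactSupport (HasCompactSupport.of_compactSpace _))
  simp_rw [hpt]
  rw [hint, hh, map_sum, Complex.re_sum]
  refine Finset.sum_congr rfl fun i _ => ?_
  rw [map_sum, Complex.re_sum]
  refine Finset.sum_congr rfl fun j _ => ?_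
  rw [map_smul, circleMean_fourier, smul_eq_mul]
  have : ((i : ℤ) + -(j : ℤ) + (m : ℤ) = 0) ↔ j = i + m := by omega
  simp only [this]
  split_ifs
  · simp
  · simp

lemma sum_correlations_ge {ι : Type} [Fintype ι] {w : ι → ℝ} {m : ι → ℕ} {ε : ℝ}
    (h : ∀ x : UnitAddCircle, -ε < ∑ a, w a * (fourier (m a : ℤ) x).re) (u : ℕ → ℝ) (N : ℕ) :
    -ε * ∑ i ∈ Finset.range N, u i ^ 2 ≤ ∑ a, w a * ∑ i ∈ Finset.range N,
      ∑ j ∈ Finset.range N, if j = i + m a then u i * u j else 0 := by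
  set G : UnitAddCircle → ℝ := fun x =>
    ‖∑ i ∈ Finset.range N, (u i : ℂ) * fourier (i : ℤ) x‖ ^ 2 with hG
  have hGc : Continuous G := by
    refine (Continuous.norm ?_).pow 2
    exact continuous_finsetSum _ fun i _ => continuous_const.mul (fourier _).continuous
  have hre : ∀ n : ℤ, Continuous fun x : UnitAddCircle => (fourier n x).re := fun n =>
    Complex.continuous_re.comp (fourier n).continuous
  have hint : ∀ f : UnitAddCircle → ℝ, Continuous f → Integrable f AddCircle.haarAddCircle :=
    fun f hf => hf.integrable_of_hasCompactSupport (HasCompactSupport.of_compactSpace _)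
  have h0 : ∫ x, G x ∂AddCircle.haarAddCircle = ∑ i ∈ Finset.range N, u i ^ 2 := by
    have h1 := integral_normSq_mul_fourier_re u N 0
    simp only [Nat.cast_zero, fourier_zero, Complex.one_re, mul_one, add_zero] at h1
    rw [hG, h1]
    refine Finset.sum_congr rfl fun i hi => ?_
    rw [Finset.sum_ite_eq', if_pos hi, sq]
  have hmono : ∫ x, -ε * G x ∂AddCircle.haarAddCircle ≤
      ∫ x, ∑ a, w a * (G x * (fourier (m a : ℤ) x).re) ∂AddCircle.haarAddCircle := by
    refine integral_mono (hint _ (continuous_const.mul hGc))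
      (hint _ (continuous_finsetSum _ fun a _ => continuous_const.mul (hGc.mul (hre _))))
      fun x => ?_
    have := mul_le_mul_of_nonneg_right (h x).le (show 0 ≤ G x by positivity)
    refine this.trans_eq ?_
    rw [Finset.sum_mul]
    exact Finset.sum_congr rfl fun a _ => by ring
  have hI : ∀ a ∈ Finset.univ, Integrable (fun x => w a * (G x * (fourier (m a : ℤ) x).re))
      AddCircle.haarAddCircle := fun a _ =>
    hint _ (continuous_const.mul (hGc.mul (hre _)))
  rw [integral_const_mul, h0, integral_finsetSum _ hI] at hmono
  simpa only [integral_const_mul, hG, integral_normSq_mul_fourier_re] using hmono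

/-- An almost nonnegative trigonometric polynomial is almost nonnegative when its frequencies
are replaced by the autocorrelations of a function along a measure preserving map. -/
theorem sum_autocorrelation_ge {ι : Type} [Fintype ι] {w : ι → ℝ} {m : ι → ℕ} {ε : ℝ}
    (h : ∀ x : UnitAddCircle, -ε < ∑ a, w a * (fourier (m a : ℤ) x).re)
    {X : Type} [MeasurableSpace X] {μ : Measure X} [IsProbabilityMeasure μ] {T : X → X}
    (hT : MeasurePreserving T μ μ) {f : X → ℝ} (hf : Measurable f) {C : ℝ}
    (hC : ∀ x, ‖f x‖ ≤ C) :
    -ε * ∫ x, f x ^ 2 ∂μ ≤ ∑ a, w a * ∫ x, f x * f (T^[m a] x) ∂μ := by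
  set b : ℕ → ℝ := fun n => ∫ x, f x * f (T^[n] x) ∂μ with hb
  have hC0 : 0 ≤ C := by
    obtain ⟨x⟩ := μ.nonempty_of_neZero
    exact (norm_nonneg _).trans (hC x)
  have hint : ∀ i j : ℕ, Integrable (fun x => f (T^[i] x) * f (T^[j] x)) μ := fun i j => by
    refine Integrable.of_bound ((hf.comp (hT.iterate i).measurable).mul
      (hf.comp (hT.iterate j).measurable)).aestronglyMeasurable (C * C)
      (Eventually.of_forall fun x => ?_)
    rw [norm_mul]
    exact mul_le_mul (hC _) (hC _) (norm_nonneg _) hC0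
  have hcorr : ∀ i n : ℕ, ∫ x, f (T^[i] x) * f (T^[i + n] x) ∂μ = b n := by
    intro i n
    have hmeas : AEStronglyMeasurable (fun x => f x * f (T^[n] x)) (μ.map T^[i]) :=
      (hf.mul (hf.comp (hT.iterate n).measurable)).aestronglyMeasurable
    have h1 := integral_map (hT.iterate i).measurable.aemeasurable hmeas
    rw [(hT.iterate i).map_eq] at h1
    refine Eq.trans ?_ h1.symm
    refine integral_congr_ae (Eventually.of_forall fun x => ?_)
    simp only [add_comm i n, Function.iterate_add_apply]
  have hfin : ∀ N : ℕ, -ε * (N * ∫ x, f x ^ 2 ∂μ) ≤ ∑ a, w a * ((N - m a : ℕ) * b (m a)) := by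
    intro N
    have hpt := fun x => sum_correlations_ge h (fun i => f (T^[i] x)) N
    have hite : ∀ (n i j : ℕ), Integrable
        (fun x => if j = i + n then f (T^[i] x) * f (T^[j] x) else 0) μ := fun n i j => by
      split_ifs
      · exact hint i j
      · exact integrable_zero _ _ _
    have hI1 : ∀ i : ℕ, Integrable (fun x => f (T^[i] x) ^ 2) μ := fun i => by
      simpa only [sq] using hint i i
    have hsum : ∀ n : ℕ, Integrable (fun x => ∑ i ∈ Finset.range N, ∑ j ∈ Finset.range N,
        if j = i + n then f (T^[i] x) * f (T^[j] x) else 0) μ := fun n =>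
      integrable_finsetSum _ fun i _ => integrable_finsetSum _ fun j _ => hite n i j
    have hmono := integral_mono ((integrable_finsetSum _ fun i _ => hI1 i).const_mul (-ε))
      (integrable_finsetSum _ fun a _ => (hsum (m a)).const_mul (w a)) hpt
    rw [integral_const_mul, integral_finsetSum _ fun i _ => hI1 i,
      integral_finsetSum _ fun a _ => (hsum (m a)).const_mul (w a)] at hmono
    have hL : ∑ i ∈ Finset.range N, ∫ x, f (T^[i] x) ^ 2 ∂μ = N * ∫ x, f x ^ 2 ∂μ := by
      have : ∀ i : ℕ, ∫ x, f (T^[i] x) ^ 2 ∂μ = ∫ x, f x ^ 2 ∂μ := fun i => by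
        have h1 := hcorr i 0
        simp only [add_zero, hb, Function.iterate_zero, id] at h1
        simpa only [sq] using h1
      simp [this]
    rw [hL] at hmono
    refine hmono.trans_eq (Finset.sum_congr rfl fun a _ => ?_)
    rw [integral_const_mul, integral_finsetSum _ fun i _ =>
      integrable_finsetSum _ fun j _ => hite (m a) i j]
    congr 1
    have hi : ∀ i ∈ Finset.range N, ∫ x, ∑ j ∈ Finset.range N,
        (if j = i + m a then f (T^[i] x) * f (T^[j] x) else 0) ∂μ =
        if i < N - m a then b (m a) else 0 := by
      intro i _
      simp only [Finset.sum_ite_eq', Finset.mem_range]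
      by_cases hlt : i + m a < N
      · simp only [if_pos hlt, if_pos (show i < N - m a by omega)]
        exact hcorr i (m a)
      · simp only [if_neg hlt, if_neg (show ¬ i < N - m a by omega), integral_zero]
    rw [Finset.sum_congr rfl hi, ← Finset.sum_filter,
      show (Finset.range N).filter (fun i => i < N - m a) = Finset.range (N - m a) by
        ext i; simp; omega]
    simp
  have hlim : Tendsto (fun N : ℕ => ∑ a, w a * (((N - m a : ℕ) : ℝ) / N * b (m a))) atTop
      (𝓝 (∑ a, w a * (1 * b (m a)))) := by
    refine tendsto_finsetSum _ fun a _ => (Tendsto.mul_const _ ?_).const_mul _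
    have h1 : Tendsto (fun N : ℕ => 1 - (m a : ℝ) / N) atTop (𝓝 (1 - 0)) :=
      tendsto_const_nhds.sub (tendsto_const_div_atTop_nhds_zero_nat _)
    rw [sub_zero] at h1
    refine h1.congr' ?_
    filter_upwards [eventually_gt_atTop (m a)] with N hN
    have hN0 : (N : ℝ) ≠ 0 := by
      have : 0 < N := by omega
      exact_mod_cast this.ne'
    rw [Nat.cast_sub hN.le, sub_div, div_self hN0]
  simp only [one_mul] at hlim
  refine ge_of_tendsto hlim ?_
  filter_upwards [eventually_gt_atTop 0] with N hN
  have hN0 : (0 : ℝ) < N := by exact_mod_cast hN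
  refine le_of_mul_le_mul_left ?_ hN0
  rw [Finset.mul_sum]
  calc _ = -ε * (N * ∫ x, f x ^ 2 ∂μ) := by ring
    _ ≤ _ := hfin N
    _ = _ := Finset.sum_congr rfl fun a _ => by field_simp

/-- A finite set of times whose powers are the frequencies of an almost nonnegative trigonometric
polynomial contains a return time to every set that is not too small. -/
theorem HasAlmostPositiveSum.exists_measure_inter_pos {k : ℕ} {ε : ℝ} {F : Set ℕ}
    (h : HasAlmostPositiveSum k ε F) {X : Type} [MeasurableSpace X] {μ : Measure X}
    [IsProbabilityMeasure μ] {T : X → X} (hT : MeasurePreserving T μ μ) {A : Set X}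
    (hA : MeasurableSet A) (hε : 0 < ε) (hεA : ε < μ.real A) :
    ∃ r ∈ F, 0 < μ (A ∩ T^[r ^ k] ⁻¹' A) := by
  obtain ⟨ι, _, w, r, hw, hw1, hr, hx⟩ := h
  by_contra! hcon
  set c := μ.real A with hc
  have hc1 : c ≤ 1 := measureReal_le_one
  set f : X → ℝ := fun x => A.indicator 1 x - c with hf
  have hfm : Measurable f := (measurable_one.indicator hA).sub_const c
  have hfC : ∀ x, ‖f x‖ ≤ 1 := fun x => by
    have hc0 : 0 ≤ c := measureReal_nonneg
    rw [Real.norm_eq_abs, abs_le]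
    by_cases hxA : x ∈ A <;> simp [hf, hxA] <;> grind
  have hcorr : ∀ n : ℕ, ∫ x, f x * f (T^[n] x) ∂μ = μ.real (A ∩ T^[n] ⁻¹' A) - c ^ 2 := by
    intro n
    have hTn := hT.iterate n
    have hAn : MeasurableSet (T^[n] ⁻¹' A) := hTn.measurable hA
    have hpt : ∀ x, f x * f (T^[n] x) = (A ∩ T^[n] ⁻¹' A).indicator 1 x -
        c * A.indicator 1 x - c * (T^[n] ⁻¹' A).indicator 1 x + c ^ 2 := by
      intro x
      by_cases h1 : x ∈ A <;> by_cases h2 : T^[n] x ∈ A <;> simp [hf, h1, h2] <;> ring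
    have hi : ∀ B : Set X, MeasurableSet B → Integrable (B.indicator (1 : X → ℝ)) μ :=
      fun B hB => (integrable_const (1 : ℝ)).indicator hB
    simp_rw [hpt]
    have hI1 := hi _ (hA.inter hAn)
    have hI2 := (hi _ hA).const_mul c
    have hI3 := (hi _ hAn).const_mul c
    have hI12 : Integrable (fun x => (A ∩ T^[n] ⁻¹' A).indicator 1 x -
        c * A.indicator 1 x) μ := hI1.sub hI2
    have hI123 : Integrable (fun x => (A ∩ T^[n] ⁻¹' A).indicator 1 x -
        c * A.indicator 1 x - c * (T^[n] ⁻¹' A).indicator 1 x) μ := hI12.sub hI3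
    rw [integral_add hI123 (integrable_const _), integral_sub hI12 hI3,
      integral_sub hI1 hI2, integral_const_mul,
      integral_const_mul, integral_indicator_one (hA.inter hAn), integral_indicator_one hA,
      integral_indicator_one hAn, hTn.measureReal_preimage hA.nullMeasurableSet]
    simp
    ring
  have hge := sum_autocorrelation_ge hx hT hfm hfC
  have hsq : ∫ x, f x ^ 2 ∂μ = c - c ^ 2 := by
    have := hcorr 0
    simp only [Function.iterate_zero, id, Set.preimage_id_eq, Set.inter_self] at this
    simpa only [sq] using this
  have hz : ∀ i, μ.real (A ∩ T^[r i ^ k] ⁻¹' A) = 0 := fun i => by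
    rw [measureReal_def, nonpos_iff_eq_zero.1 (hcon _ (hr i)), ENNReal.toReal_zero]
  simp only [hcorr, hz, hsq, zero_sub, ← Finset.sum_mul, hw1, one_mul] at hge
  nlinarith

lemma iInter_range_two_zpow_preimage {X : Type} [MeasurableSpace X] (T : X ≃ᵐ X) (m : ℕ)
    (A : Set X) :
    (⋂ i ∈ Finset.range (1 + 1), (⇑(T.toEquiv ^ ((i : ℤ) * (m : ℤ)))) ⁻¹' A) =
      A ∩ T^[m] ⁻¹' A := by
  have h1 : (⇑(T.toEquiv ^ m) : X → X) = T^[m] := Equiv.Perm.iterate_eq_pow T.toEquiv m |>.symm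
  ext x
  simp [Finset.range_add_one, h1, and_comm]

lemma norm_expo_sub_one_of_re_neg {x : ℝ} (hx : (expo x).re < 0) : 1 ≤ ‖expo x - 1‖ := by
  have h := Complex.abs_re_le_norm (expo x - 1)
  rw [Complex.sub_re, Complex.one_re, abs_of_neg (by linarith)] at h
  linarith

lemma expo_sqrt_two_mul_ne_one {m : ℕ} (hm : 0 < m) : expo (√2 * m) ≠ 1 := by
  rw [Ne, expo_eq_one_iff]
  rintro ⟨n, hn⟩
  exact (irrational_sqrt_two.mul_natCast hm.ne').ne_int n hn

/-- If the multiples of `√2` by the elements of a set stay away from the integers, then the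
rotation by `√2` witnesses that the set is not a set of recurrence. -/
theorem exists_rotation_inter_eq_empty {M : Set ℕ} {δ : ℝ} (hδ : 0 < δ)
    (hM : ∀ m ∈ M, δ ≤ ‖expo (√2 * m) - 1‖) :
    ∃ (T : UnitAddCircle ≃ᵐ UnitAddCircle) (A : Set UnitAddCircle),
      MeasurePreserving T AddCircle.haarAddCircle AddCircle.haarAddCircle ∧ MeasurableSet A ∧
      0 < AddCircle.haarAddCircle A ∧ ∀ m ∈ M, A ∩ T^[m] ⁻¹' A = ∅ := by
  set A : Set UnitAddCircle := {x | ‖fourier 1 x - 1‖ < δ / 2} with hA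
  have hAo : IsOpen A :=
    isOpen_lt ((fourier (T := (1 : ℝ)) 1).continuous.sub continuous_const).norm continuous_const
  refine ⟨MeasurableEquiv.addLeft ((√2 : ℝ) : UnitAddCircle), A, ?_,
    hAo.measurableSet, hAo.measure_pos _ ⟨0, ?_⟩, fun m hm => ?_⟩
  · rw [MeasurableEquiv.coe_addLeft]
    exact measurePreserving_add_left (AddCircle.haarAddCircle (T := (1 : ℝ)))
      ((√2 : ℝ) : UnitAddCircle)
  · rw [hA, Set.mem_ofPred_eq, fourier_eval_zero]
    simpa using hδ
  · refine Set.eq_empty_iff_forall_notMem.2 fun x ⟨hx1, hx2⟩ => ?_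
    have hit : (MeasurableEquiv.addLeft ((√2 : ℝ) : UnitAddCircle))^[m] x =
        ((√2 * m : ℝ) : UnitAddCircle) + x := by
      rw [MeasurableEquiv.coe_addLeft, add_left_iterate, mul_comm, ← nsmul_eq_mul,
        AddCircle.coe_nsmul]
    rw [Set.mem_preimage, hit, hA, Set.mem_ofPred_eq] at hx2
    have hmul : fourier 1 (((√2 * m : ℝ) : UnitAddCircle) + x) =
        expo (√2 * m) * fourier 1 x := by
      have h1 := fourier_coe_eq_expo 1 (√2 * m)
      rw [Int.cast_one, one_mul] at h1
      rw [← h1]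
      simp [AddCircle.toCircle_add]
    have hn : ‖(fourier 1 x : ℂ)‖ = 1 := Circle.norm_coe _
    have heq : ‖expo (√2 * m) - 1‖ = ‖expo (√2 * m) * fourier 1 x - fourier 1 x‖ := by
      rw [← sub_one_mul, norm_mul, hn, mul_one]
    have htri := norm_sub_le_norm_sub_add_norm_sub (expo (√2 * m) * fourier 1 x) 1 (fourier 1 x)
    rw [norm_sub_rev 1, ← heq, ← hmul] at htri
    have := hM m hm
    have hx1' : ‖(fourier 1 x : ℂ) - 1‖ < δ / 2 := hx1
    linarith

/-- Finitely many exceptions do not affect the distance of the multiples of `√2` to `ℤ`. -/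
lemma exists_le_norm_expo_sub_one {M E : Set ℕ} (hE : E.Finite) (hpos : ∀ m ∈ M, 0 < m)
    (hM : ∀ m ∈ M, m ∉ E → (expo (√2 * m)).re < 0) :
    ∃ δ > 0, ∀ m ∈ M, δ ≤ ‖expo (√2 * m) - 1‖ := by
  obtain ⟨δ, hδ, h⟩ : ∃ δ > 0, ∀ m ∈ M ∩ E, δ ≤ ‖expo (√2 * m) - 1‖ := by
    have hfin : (M ∩ E).Finite := hE.inter_of_right M
    rcases (M ∩ E).eq_empty_or_nonempty with h0 | hne
    · exact ⟨1, one_pos, by simp [h0]⟩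
    · obtain ⟨a, ha, hmin⟩ := hfin.exists_minimalFor (fun m => ‖expo (√2 * (m : ℕ)) - 1‖) _ hne
      refine ⟨_, norm_pos_iff.2 (sub_ne_zero.2 (expo_sqrt_two_mul_ne_one (hpos a ha.1))),
        fun m hm => ?_⟩
      exact (le_total _ _).elim id (hmin hm)
  refine ⟨min δ 1, lt_min hδ one_pos, fun m hm => ?_⟩
  by_cases hmE : m ∈ E
  · exact (min_le_left _ _).trans (h m ⟨hm, hmE⟩)
  · exact (min_le_right _ _).trans (norm_expo_sub_one_of_re_neg (hM m hm hmE))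

/-- The positive integers up to `n` outside `G`. -/
noncomputable def badExponents (G : Set ℕ) (n : ℕ) : Finset ℕ :=
  open Classical in (Finset.Icc 1 n).filter (· ∉ G)

lemma mem_badExponents {G : Set ℕ} {n j : ℕ} :
    j ∈ badExponents G n ↔ (1 ≤ j ∧ j ≤ n) ∧ j ∉ G := by
  simp [badExponents]

theorem exists_set_powers (G : Set ℕ) :
    ∃ R : Set ℕ, R.Infinite ∧ (∀ r ∈ R, 0 < r) ∧
      (∀ k ∈ G, 0 < k → ∀ ε > 0, ∃ ε' > 0, ε' < ε ∧ HasAlmostPositiveSum k ε' R) ∧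
      ∀ j ∉ G, 0 < j → ∃ E : Set ℕ, E.Finite ∧ ∀ r ∈ R, r ∉ E → (expo (√2 * r ^ j)).re < 0 := by
  have hex : ∀ n k : ℕ, ∃ F : Set ℕ, 0 < k → k ∉ badExponents G n → F.Finite ∧
      (∀ r ∈ F, n ≤ r ∧ 0 < r ∧ ∀ j ∈ badExponents G n, (expo (√2 * r ^ j)).re < 0) ∧
      HasAlmostPositiveSum k (1 / ((n : ℝ) + 1)) F := by
    intro n k
    by_cases h : 0 < k ∧ k ∉ badExponents G n
    · obtain ⟨F, hF⟩ := exists_finite_hasAlmostPositiveSum h.1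
        (fun j hj => (mem_badExponents.1 hj).1.1) h.2 n (Nat.one_div_pos_of_nat (α := ℝ) (n := n))
      exact ⟨F, fun _ _ => hF⟩
    · exact ⟨∅, fun h1 h2 => (h ⟨h1, h2⟩).elim⟩
  choose F hF using hex
  set R : Set ℕ := {r | ∃ n k, 0 < k ∧ k ≤ n + 1 ∧ k ∉ badExponents G n ∧ r ∈ F n k} with hR
  have hsub : ∀ {n k : ℕ}, 0 < k → k ≤ n + 1 → k ∉ badExponents G n → F n k ⊆ R :=
    fun hk hkn hkB r hr => ⟨_, _, hk, hkn, hkB, hr⟩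
  refine ⟨R, ?_, ?_, ?_, ?_⟩
  · refine Set.infinite_of_forall_exists_gt fun N => ?_
    have hB : N + 2 ∉ badExponents G (N + 1) := fun h => by
      have := (mem_badExponents.1 h).1.2
      omega
    obtain ⟨-, h1, h2⟩ := hF (N + 1) (N + 2) N.succ.succ_pos hB
    obtain ⟨r, hr⟩ := h2.nonempty
    exact ⟨r, hsub N.succ.succ_pos le_rfl hB hr, (h1 r hr).1⟩
  · rintro r ⟨n, k, hk, -, hkB, hr⟩
    exact ((hF n k hk hkB).2.1 r hr).2.1
  · intro k hkG hk ε hε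
    obtain ⟨n, hn⟩ := exists_nat_one_div_lt hε
    have hB : k ∉ badExponents G (max n k) := fun h => (mem_badExponents.1 h).2 hkG
    refine ⟨1 / (((max n k : ℕ) : ℝ) + 1), Nat.one_div_pos_of_nat,
      (Nat.one_div_le_one_div (le_max_left n k)).trans_lt hn,
      (hF (max n k) k hk hB).2.2.mono (hsub hk ?_ hB)⟩
    omega
  · intro j hjG hj
    refine ⟨⋃ n ∈ Finset.range j, ⋃ k ∈ {k | k ≤ n + 1 ∧ 0 < k ∧ k ∉ badExponents G n}, F n k,
      ?_, ?_⟩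
    · refine (Finset.range j).finite_toSet.biUnion fun n _ =>
        ((Set.finite_Iic (n + 1)).subset fun k hk => hk.1).biUnion fun k hk =>
          (hF n k hk.2.1 hk.2.2).1
    · rintro r ⟨n, k, hk, hkn, hkB, hr⟩ hrE
      have hjn : j ≤ n := by
        by_contra! hlt
        exact hrE (Set.mem_biUnion (Finset.mem_coe.2 (Finset.mem_range.2 hlt))
          (Set.mem_biUnion (show k ∈ {k | k ≤ n + 1 ∧ 0 < k ∧ k ∉ badExponents G n} from
            ⟨hkn, hk, hkB⟩) hr))
      exact ((hF n k hk hkB).2.1 r hr).2.2 j (mem_badExponents.2 ⟨⟨hj, hjn⟩, hjG⟩)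

end PowerRecurrence

theorem statement2 (G : Set ℕ) (hG : ∀ g ∈ G, 0 < g) :
    ∃ R : Set ℕ, R.Infinite ∧ (∀ r ∈ R, 0 < r) ∧
      ∀ k : ℕ, 0 < k →
        (IsSetOfMultRecurrence 1 ((fun r : ℕ => (r : ℤ) ^ k) '' R) ↔ k ∈ G) := by
  obtain ⟨R, hinf, hpos, hrec, hnot⟩ := PowerRecurrence.exists_set_powers G
  refine ⟨R, hinf, hpos, fun k hk => ⟨fun h => ?_, fun hkG => ?_⟩⟩
  · by_contra hkG
    obtain ⟨E, hE, hRE⟩ := hnot k hkG hk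
    obtain ⟨δ, hδ, hM⟩ := PowerRecurrence.exists_le_norm_expo_sub_one
      (M := (fun r => r ^ k) '' R) (hE.image fun r => r ^ k)
      (by rintro _ ⟨r, hr, rfl⟩; exact pow_pos (hpos r hr) k)
      (by
        rintro _ ⟨r, hr, rfl⟩ hrE
        simpa using hRE r hr fun h => hrE ⟨r, h, rfl⟩)
    obtain ⟨T, A, hT, hA, hA0, hempty⟩ := PowerRecurrence.exists_rotation_inter_eq_empty hδ hM
    obtain ⟨_, ⟨r, hr, rfl⟩, -, hr0⟩ := h UnitAddCircle inferInstance AddCircle.haarAddCircle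
      inferInstance T hT A hA hA0
    simp only [← Nat.cast_pow] at hr0
    rw [PowerRecurrence.iInter_range_two_zpow_preimage, hempty _ ⟨r, hr, rfl⟩,
      measure_empty] at hr0
    exact lt_irrefl _ hr0
  · intro X _ μ _ T hT A hA hA0
    obtain ⟨ε, hε, hεA, h⟩ := hrec k hkG hk (μ.real A)
      (ENNReal.toReal_pos hA0.ne' (measure_ne_top μ A))
    obtain ⟨r, hr, hr0⟩ := h.exists_measure_inter_pos hT hA hε hεA
    refine ⟨(r : ℤ) ^ k, ⟨r, hr, rfl⟩, pow_ne_zero k (by exact_mod_cast (hpos r hr).ne'), ?_⟩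
    simp only [← Nat.cast_pow]
    rwa [PowerRecurrence.iInter_range_two_zpow_preimage]
end

section
/- Let ℓ be a positive integer, let R be a set of ℓ-recurrence, and let p be a polynomial with integer coefficients, zero constant term, and degree at most ℓ. Then for every real number α and every ε > 0 there exists a nonzero r ∈ R such that the fractional part {p(r)·α} lies in [0,ε] ∪ [1−ε,1). -/
open Filter MeasureTheory

/-- A map `ℤ → M` with constant `d`-th unit difference `c` has constant `d`-th difference
`r ^ d • c` for the step `r`. -/
theorem fwdDiff_iterate_eq_pow_smul {M : Type*} [AddCommGroup M] (r : ℤ) (d : ℕ) :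
    ∀ (f : ℤ → M) (c : M), (∀ n, (fwdDiff 1)^[d] f n = c) →
      ∀ n, (fwdDiff r)^[d] f n = r ^ d • c := by
  induction d with
  | zero => simp
  | succ d ih =>
    intro f c hf
    set g := (fwdDiff r)^[d] f with hg
    have hstep (n : ℤ) : g (n + 1) - g n = r ^ d • c := by
      rw [← ih (fwdDiff 1 f) c hf n, hg]
      simp only [fwdDiff_iter_eq_sum_shift, ← Finset.sum_sub_distrib, ← smul_sub, fwdDiff,
        add_right_comm]
    have hlin (n : ℤ) : g n = g 0 + n • (r ^ d • c) := by
      induction n using Int.induction_on with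
      | zero => simp
      | succ i hi =>
        rw [eq_add_of_sub_eq (hstep i), hi]
        module
      | pred i hi =>
        have h := hstep (-i - 1)
        rw [sub_add_cancel, hi] at h
        rw [← sub_eq_zero] at h ⊢
        rw [← neg_eq_zero, ← h]
        module
    intro n
    rw [Function.iterate_succ_apply', fwdDiff, ← hg, hlin (n + r), hlin n]
    module

theorem norm_fwdDiff_iterate_le {M : Type*} [SeminormedAddCommGroup M] (f : ℤ → M) (r : ℤ)
    (d : ℕ) (n : ℤ) {δ : ℝ} (hf : ∀ k ≤ d, ‖f (n + k * r)‖ ≤ δ) :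
    ‖(fwdDiff r)^[d] f n‖ ≤ 2 ^ d * δ := by
  rw [fwdDiff_iter_eq_sum_shift]
  calc _ ≤ ∑ k ∈ Finset.range (d + 1), (d.choose k : ℝ) * δ := by
        refine norm_sum_le_of_le _ fun k hk ↦ ?_
        have hk' := hf k (Nat.lt_succ_iff.mp (Finset.mem_range.mp hk))
        refine (norm_zsmul_le _ _).trans ?_
        rw [nsmul_eq_mul]
        refine mul_le_mul (le_of_eq ?_) hk' (norm_nonneg _) (by positivity)
        simp
    _ = 2 ^ d * δ := by
        rw [← Finset.sum_mul]
        exact_mod_cast congrArg (fun m : ℕ ↦ (m : ℝ) * δ) (Nat.sum_range_choose d)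

namespace SkewTorus

/-- The endomorphism `(x₀, x₁, x₂, …) ↦ (x₀, x₁ + x₀, x₂ + x₁, …)` of the infinite torus. -/
def shear : (ℕ → UnitAddCircle) →+ (ℕ → UnitAddCircle) where
  toFun x
    | 0 => x 0
    | j + 1 => x (j + 1) + x j
  map_zero' := by ext j; cases j <;> simp
  map_add' x y := by
    ext j
    cases j with
    | zero => rfl
    | succ j => exact add_add_add_comm _ _ _ _

/-- The inverse of `shear`. -/
def shearInv (x : ℕ → UnitAddCircle) : ℕ → UnitAddCircle
  | 0 => x 0
  | j + 1 => x (j + 1) - shearInv x j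

theorem shear_shearInv (x : ℕ → UnitAddCircle) : shear (shearInv x) = x := by
  ext j
  cases j with
  | zero => rfl
  | succ j => exact sub_add_cancel _ _

theorem shearInv_shear (x : ℕ → UnitAddCircle) : shearInv (shear x) = x := by
  ext j
  induction j with
  | zero => rfl
  | succ j ih =>
    change x (j + 1) + x j - shearInv (shear x) j = _
    rw [ih, add_sub_cancel_right]

theorem continuous_shear : Continuous shear := by
  refine continuous_pi fun j ↦ ?_
  cases j with
  | zero => exact continuous_apply 0
  | succ j => exact (continuous_apply (j + 1)).add (continuous_apply j)

theorem continuous_shearInv : Continuous shearInv := by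
  refine continuous_pi fun j ↦ ?_
  induction j with
  | zero => exact continuous_apply 0
  | succ j ih => exact (continuous_apply (j + 1)).sub ih

/-- `shear` as a homeomorphism. -/
def shearHomeomorph : (ℕ → UnitAddCircle) ≃ₜ (ℕ → UnitAddCircle) where
  toFun := shear
  invFun := shearInv
  left_inv := shearInv_shear
  right_inv := shear_shearInv
  continuous_toFun := continuous_shear
  continuous_invFun := continuous_shearInv

/-- The skew map `(x₀, x₁, x₂, …) ↦ (x₀ + β, x₁ + x₀, x₂ + x₁, …)` of the infinite torus. -/
noncomputable def skew (β : UnitAddCircle) : (ℕ → UnitAddCircle) ≃ᵐ (ℕ → UnitAddCircle) :=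
  (shearHomeomorph.trans (Homeomorph.addLeft (Pi.single 0 β))).toMeasurableEquiv

theorem skew_apply_zero (β : UnitAddCircle) (x : ℕ → UnitAddCircle) :
    skew β x 0 = β + x 0 := by
  change (Pi.single 0 β : ℕ → UnitAddCircle) 0 + x 0 = _
  simp

theorem skew_apply_succ (β : UnitAddCircle) (x : ℕ → UnitAddCircle) (j : ℕ) :
    skew β x (j + 1) = x (j + 1) + x j := by
  change (Pi.single 0 β : ℕ → UnitAddCircle) (j + 1) + (x (j + 1) + x j) = _
  simp

theorem measurePreserving_skew (β : UnitAddCircle) (μ : Measure (ℕ → UnitAddCircle))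
    [μ.IsAddHaarMeasure] : MeasurePreserving (skew β) μ μ :=
  (measurePreserving_add_left μ (Pi.single 0 β)).comp
    (AddMonoidHom.measurePreserving continuous_shear shearHomeomorph.surjective rfl)

theorem fwdDiff_iterate_skew (β : UnitAddCircle) (x : ℕ → UnitAddCircle) (j : ℕ) (n : ℤ) :
    (fwdDiff 1)^[j + 1] (fun m : ℤ ↦ ((skew β).toEquiv ^ m) x j) n = β := by
  have hsucc (m : ℤ) : ((skew β).toEquiv ^ (m + 1)) x = skew β (((skew β).toEquiv ^ m) x) := by
    rw [add_comm, zpow_one_add]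
    rfl
  induction j generalizing n with
  | zero => simp [fwdDiff, hsucc, skew_apply_zero]
  | succ j ih =>
    have hdiff : fwdDiff 1 (fun m : ℤ ↦ ((skew β).toEquiv ^ m) x (j + 1)) =
        fun m : ℤ ↦ ((skew β).toEquiv ^ m) x j := by
      funext m
      simp [fwdDiff, hsucc, skew_apply_succ]
    rw [Function.iterate_succ_apply, hdiff, ih n]

theorem norm_pow_smul_le (β : UnitAddCircle) (x : ℕ → UnitAddCircle) (r : ℤ) (j : ℕ) {δ : ℝ}
    (hx : ∀ k ≤ j + 1, ‖((skew β).toEquiv ^ ((k : ℤ) * r)) x j‖ ≤ δ) :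
    ‖r ^ (j + 1) • β‖ ≤ 2 ^ (j + 1) * δ := by
  rw [← fwdDiff_iterate_eq_pow_smul r (j + 1) _ β (fwdDiff_iterate_skew β x j) 0]
  exact norm_fwdDiff_iterate_le _ _ _ _ fun k hk ↦ by simpa using hx k hk

end SkewTorus

/-- Along a set of `ℓ`-recurrence, `r β, r² β, …, r ^ ℓ β` are simultaneously close to `0` modulo
`1`. -/
theorem IsSetOfMultRecurrence.exists_norm_pow_smul_le {ℓ : ℕ} {R : Set ℤ}
    (hR : IsSetOfMultRecurrence ℓ R) (β : UnitAddCircle) {δ : ℝ} (hδ : 0 < δ) :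
    ∃ r ∈ R, r ≠ 0 ∧ ∀ j < ℓ, ‖r ^ (j + 1) • β‖ ≤ 2 ^ (j + 1) * δ := by
  let μ : Measure (ℕ → UnitAddCircle) := Measure.addHaarMeasure ⊤
  have hμ : IsProbabilityMeasure μ := ⟨Measure.addHaarMeasure_self⟩
  let A : Set (ℕ → UnitAddCircle) := (Set.Iio ℓ).pi fun _ ↦ Metric.ball 0 δ
  have hA : IsOpen A := isOpen_set_pi (Set.finite_Iio ℓ) fun _ _ ↦ Metric.isOpen_ball
  obtain ⟨r, hrR, hr0, hr⟩ := hR _ _ μ hμ (SkewTorus.skew β) (SkewTorus.measurePreserving_skew β μ)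
    A hA.measurableSet (hA.measure_pos μ ⟨0, fun _ _ ↦ Metric.mem_ball_self hδ⟩)
  obtain ⟨x, hx⟩ := nonempty_of_measure_ne_zero hr.ne'
  refine ⟨r, hrR, hr0, fun j hj ↦ SkewTorus.norm_pow_smul_le β x r j fun k hk ↦ ?_⟩
  have hk' := Set.mem_iInter₂.mp hx k (Finset.mem_range.mpr (by omega)) j hj
  exact (mem_ball_zero_iff.mp hk').le

theorem fract_mem_of_norm_le {x ε : ℝ} (h : ‖(x : UnitAddCircle)‖ ≤ ε) :
    Int.fract x ∈ Set.Icc 0 ε ∪ Set.Ico (1 - ε) 1 := by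
  rw [UnitAddCircle.norm_eq, abs_sub_round_eq_min, min_le_iff] at h
  rcases h with h | h
  · exact Or.inl ⟨Int.fract_nonneg x, h⟩
  · exact Or.inr ⟨by linarith, Int.fract_lt_one x⟩

theorem statement8 (ℓ : ℕ) (hℓ : 0 < ℓ) (R : Set ℤ)
    (hR : IsSetOfMultRecurrence ℓ R)
    (p : Polynomial ℤ) (hp0 : p.coeff 0 = 0) (hpdeg : p.natDegree ≤ ℓ)
    (α : ℝ) (ε : ℝ) (hε : 0 < ε) :
    ∃ r ∈ R, r ≠ 0 ∧
      Int.fract (((p.eval r : ℤ) : ℝ) * α) ∈ Set.Icc 0 ε ∪ Set.Ico (1 - ε) 1 := by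
  set C : ℝ := ∑ j ∈ Finset.range ℓ, ‖p.coeff (j + 1)‖ * 2 ^ (j + 1)
  have hC0 : 0 ≤ C := by positivity
  obtain ⟨r, hrR, hr0, hr⟩ :=
    hR.exists_norm_pow_smul_le (α : UnitAddCircle) (δ := ε / (C + 1)) (by positivity)
  refine ⟨r, hrR, hr0, fract_mem_of_norm_le ?_⟩
  have heval : (((p.eval r : ℤ) : ℝ) * α : ℝ) = (p.eval r) • α := (zsmul_eq_mul _ _).symm
  rw [heval, AddCircle.coe_zsmul, Polynomial.eval_eq_sum_range' (Nat.lt_succ_of_le hpdeg),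
    Finset.sum_range_succ', hp0, zero_mul, add_zero, Finset.sum_smul]
  calc _ ≤ ∑ j ∈ Finset.range ℓ, ‖p.coeff (j + 1)‖ * 2 ^ (j + 1) * (ε / (C + 1)) := by
        refine norm_sum_le_of_le _ fun j hj ↦ ?_
        rw [mul_smul, mul_assoc]
        exact (norm_zsmul_le _ _).trans
          (mul_le_mul_of_nonneg_left (hr j (Finset.mem_range.mp hj)) (norm_nonneg _))
    _ = C * (ε / (C + 1)) := by rw [← Finset.sum_mul]
    _ ≤ ε := by
        rw [mul_div_assoc', div_le_iff₀ (by positivity)]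
        nlinarith
end

section
/- Let (r_n)_{n∈ℕ} be a sequence of positive integers satisfying: (i) for every irrational α the sequence (r_n·α) is uniformly distributed mod 1, i.e. for every nonzero integer m one has (1/N)·Σ_{n=1}^N e(m·r_n·α) → 0 as N → ∞; and (ii) for every d ∈ ℕ the set {n ∈ ℕ : d divides r_n} has positive upper density. Then the set R = {r₁, r₂, …} is a set of recurrence. -/
open Filter MeasureTheory

/-- `e(x) = exp(2πix)`. -/
noncomputable def eFun (x : ℝ) : ℂ := Complex.exp (2 * Real.pi * Complex.I * x)

/-- The upper density of a set of natural numbers. -/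
noncomputable def upperDensityNat (S : Set ℕ) : ℝ :=
  letI := Classical.decPred fun n : ℕ => n ∈ S
  limsup (fun N : ℕ => (((Finset.range N).filter fun n => n ∈ S).card : ℝ) / N) atTop

theorem eFun_intCast (k : ℤ) : eFun k = 1 := by
  rw [eFun, Complex.exp_eq_one_iff]
  exact ⟨k, by push_cast; ring⟩

theorem eFun_natCast_mul (k : ℕ) (x : ℝ) : eFun (k * x) = eFun x ^ k := by
  rw [eFun, eFun, ← Complex.exp_nat_mul]
  congr 1
  push_cast
  ring

theorem exists_irrational_eFun_eq {z : ℂ} (hz : ‖z‖ = 1) (h : ∀ m : ℕ, 0 < m → z ^ m ≠ 1) :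
    ∃ α : ℝ, Irrational α ∧ eFun α = z := by
  have he : eFun (z.arg / (2 * Real.pi)) = z := by
    have : z = Complex.exp (z.arg * Complex.I) := by
      conv_lhs => rw [← Complex.norm_mul_exp_arg_mul_I z, hz]
      simp
    conv_rhs => rw [this]
    rw [eFun]
    congr 1
    push_cast
    field_simp
  refine ⟨_, ?_, he⟩
  rintro ⟨q, hq⟩
  refine h q.den q.den_pos ?_
  rw [← he, ← hq, ← eFun_natCast_mul, ← eFun_intCast q.num]
  congr 1
  exact_mod_cast q.den_mul_eq_num

theorem IsPrimitiveRoot.sum_pow_pow_eq_ite {ζ : ℂ} {d : ℕ} (hζ : IsPrimitiveRoot ζ d) (k : ℕ) :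
    ∑ j ∈ Finset.range d, (ζ ^ j) ^ k = if d ∣ k then (d : ℂ) else 0 := by
  simp_rw [← pow_mul, mul_comm _ k, pow_mul]
  split_ifs with h
  · simp [(hζ.pow_eq_one_iff_dvd k).2 h]
  · rw [geom_sum_eq (fun h1 => h ((hζ.pow_eq_one_iff_dvd k).1 h1)), ← pow_mul, mul_comm k, pow_mul,
      hζ.pow_eq_one]
    simp

theorem tendsto_average_pow {r : ℕ → ℕ}
    (h_ud : ∀ α : ℝ, Irrational α →
      Tendsto (fun N : ℕ => (N : ℂ)⁻¹ * ∑ n ∈ Finset.range N, eFun ((r n : ℝ) * α)) atTop (nhds 0))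
    {z : ℂ} (hz : ‖z‖ = 1) (h : ∀ m : ℕ, 0 < m → z ^ m ≠ 1) :
    Tendsto (fun N : ℕ => (N : ℂ)⁻¹ * ∑ n ∈ Finset.range N, z ^ r n) atTop (nhds 0) := by
  obtain ⟨α, hα, rfl⟩ := exists_irrational_eFun_eq hz h
  simpa only [eFun_natCast_mul] using h_ud α hα

theorem tendsto_average_pow_of_dvd {r : ℕ → ℕ}
    (h_ud : ∀ α : ℝ, Irrational α →
      Tendsto (fun N : ℕ => (N : ℂ)⁻¹ * ∑ n ∈ Finset.range N, eFun ((r n : ℝ) * α)) atTop (nhds 0))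
    {d : ℕ} (hd : 0 < d) {z : ℂ} (hz : ‖z‖ = 1) (h : ∀ m : ℕ, 0 < m → z ^ m ≠ 1) :
    Tendsto (fun N : ℕ => (N : ℂ)⁻¹ * ∑ n ∈ Finset.range N, if d ∣ r n then z ^ r n else 0)
      atTop (nhds 0) := by
  obtain ⟨ζ, hζ⟩ : ∃ ζ : ℂ, IsPrimitiveRoot ζ d := ⟨_, Complex.isPrimitiveRoot_exp d hd.ne'⟩
  have hd' : (d : ℂ) ≠ 0 := by exact_mod_cast hd.ne'
  have key : ∀ j : ℕ, Tendsto (fun N : ℕ => (N : ℂ)⁻¹ *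
      ∑ n ∈ Finset.range N, (z * ζ ^ j) ^ r n) atTop (nhds 0) := fun j => by
    refine tendsto_average_pow h_ud ?_ fun m hm hm1 => h (m * d) (Nat.mul_pos hm hd) ?_
    · simp [hz, hζ.norm'_eq_one hd.ne']
    · have : ((z * ζ ^ j) ^ m) ^ d = 1 := by rw [hm1, one_pow]
      rwa [← pow_mul, mul_pow, ← pow_mul, ← mul_assoc, pow_mul' ζ, hζ.pow_eq_one, one_pow,
        mul_one] at this
  have hsum := (tendsto_finsetSum (Finset.range d) fun j _ => key j).const_mul (d : ℂ)⁻¹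
  simp only [Finset.sum_const_zero, mul_zero] at hsum
  refine hsum.congr fun N => ?_
  rw [← Finset.mul_sum, Finset.sum_comm, mul_left_comm]
  congr 1
  rw [Finset.mul_sum]
  refine Finset.sum_congr rfl fun n _ => ?_
  simp_rw [mul_pow]
  rw [← Finset.mul_sum, hζ.sum_pow_pow_eq_ite]
  split_ifs
  · field_simp
  · simp

/-- The complex numbers that are roots of unity, but not `d`-th roots of unity. -/
def rootsOfUnityExcept (d : ℕ) : Set ℂ := {z | (∃ m : ℕ, 0 < m ∧ z ^ m = 1) ∧ z ^ d ≠ 1}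

theorem measurableSet_isRootOfUnity : MeasurableSet {z : ℂ | ∃ m : ℕ, 0 < m ∧ z ^ m = 1} := by
  have : {z : ℂ | ∃ m : ℕ, 0 < m ∧ z ^ m = 1} = ⋃ m : ℕ, ⋃ _ : 0 < m, {z : ℂ | z ^ m = 1} := by
    ext z
    simp
  rw [this]
  exact .iUnion fun m => .iUnion fun _ =>
    (isClosed_eq (continuous_pow m) continuous_const).measurableSet

theorem measurableSet_rootsOfUnityExcept (d : ℕ) : MeasurableSet (rootsOfUnityExcept d) :=
  measurableSet_isRootOfUnity.inter
    (isClosed_eq (continuous_pow d) continuous_const).measurableSet.compl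

theorem exists_measureReal_rootsOfUnityExcept_lt (σ : Measure ℂ) [IsFiniteMeasure σ] {ε : ℝ}
    (hε : 0 < ε) : ∃ d : ℕ, 0 < d ∧ σ.real (rootsOfUnityExcept d) < ε := by
  have hanti : Antitone fun k : ℕ => rootsOfUnityExcept k.factorial := by
    rintro k l hkl z ⟨hz, hl⟩
    refine ⟨hz, fun hk => hl ?_⟩
    obtain ⟨c, hc⟩ := Nat.factorial_dvd_factorial hkl
    rw [hc, pow_mul, hk, one_pow]
  have hempty : ⋂ k : ℕ, rootsOfUnityExcept k.factorial = ∅ := by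
    refine Set.eq_empty_of_forall_notMem fun z hz => ?_
    rw [Set.mem_iInter] at hz
    obtain ⟨m, hm, hm1⟩ := (hz 0).1
    obtain ⟨c, hc⟩ := Nat.dvd_factorial hm le_rfl
    exact (hz m).2 (by rw [hc, pow_mul, hm1, one_pow])
  have hlim := tendsto_measure_iInter_atTop (μ := σ)
    (fun k => (measurableSet_rootsOfUnityExcept k.factorial).nullMeasurableSet) hanti
    ⟨0, measure_ne_top σ _⟩
  rw [hempty, measure_empty] at hlim
  have hlim' := (ENNReal.tendsto_toReal ENNReal.zero_ne_top).comp hlim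
  obtain ⟨k, hk⟩ := (hlim'.eventually_lt_const (u := ε) (by simpa using hε)).exists
  exact ⟨_, k.factorial_pos, hk⟩

/-- If the averages of `e(r n * α)` vanish for irrational `α`, and `σ` is a measure on the circle with
`∫ Re z ^ r n ∂σ = -c` for all `n`, where `c` exceeds the mass of the roots of unity of order not
dividing `d`, then `{n | d ∣ r n}` has density zero. -/
theorem tendsto_card_dvd_div {r : ℕ → ℕ}
    (h_ud : ∀ α : ℝ, Irrational α →
      Tendsto (fun N : ℕ => (N : ℂ)⁻¹ * ∑ n ∈ Finset.range N, eFun ((r n : ℝ) * α)) atTop (nhds 0))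
    {σ : Measure ℂ} [IsFiniteMeasure σ] (hσ : ∀ᵐ z ∂σ, ‖z‖ = 1) {c : ℝ}
    (hc : ∀ n, ∫ z, (z ^ r n).re ∂σ = -c) {d : ℕ} (hd : 0 < d)
    (hcd : σ.real (rootsOfUnityExcept d) < c) :
    Tendsto (fun N : ℕ => (((Finset.range N).filter fun n => d ∣ r n).card : ℝ) / N)
      atTop (nhds 0) := by
  set D : ℕ → ℝ := fun N => (((Finset.range N).filter fun n => d ∣ r n).card : ℝ) / N with hD
  have hD0 : ∀ N, 0 ≤ D N := fun N => by positivity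
  have hD1 : ∀ N, D N ≤ 1 := fun N => by
    refine div_le_one_of_le₀ ?_ (by positivity)
    exact_mod_cast (Finset.card_filter_le _ _).trans (Finset.card_range N).le
  have hDsum : ∀ N, D N = (N : ℝ)⁻¹ * ∑ n ∈ Finset.range N, if d ∣ r n then (1 : ℝ) else 0 :=
    fun N => by
      rw [hD, Finset.sum_boole]
      ring
  let g : ℕ → ℂ → ℝ := fun N z =>
    (N : ℝ)⁻¹ * ∑ n ∈ Finset.range N, if d ∣ r n then (z ^ r n).re else 0
  have hg_abs : ∀ N z, ‖z‖ = 1 → |g N z| ≤ D N := fun N z hz => by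
    rw [hDsum, abs_mul, abs_of_nonneg (by positivity : (0 : ℝ) ≤ (N : ℝ)⁻¹)]
    gcongr
    refine (Finset.abs_sum_le_sum_abs _ _).trans (Finset.sum_le_sum fun n _ => ?_)
    split_ifs
    · exact (Complex.abs_re_le_norm _).trans (by simp [hz])
    · simp
  have hg_meas : ∀ N, Measurable (g N) := fun N => by
    refine Measurable.const_mul (Finset.measurable_fun_sum (Finset.range N)
      (f := fun n (z : ℂ) => if d ∣ r n then (z ^ r n).re else 0) fun n _ => ?_) _
    split_ifs <;> fun_prop
  have hpow_int : ∀ k : ℕ, Integrable (fun z : ℂ => (z ^ k).re) σ := fun k =>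
    Integrable.of_bound (by fun_prop) 1 (hσ.mono fun z hz => by
      rw [Real.norm_eq_abs]
      exact (Complex.abs_re_le_norm _).trans (by simp [hz]))
  have hg_int : ∀ N, Integrable (g N) σ := fun N =>
    Integrable.of_bound (hg_meas N).aestronglyMeasurable (D N) (hσ.mono fun z hz => hg_abs N z hz)
  have hg_integral : ∀ N, ∫ z, g N z ∂σ = -c * D N := fun N => by
    rw [integral_const_mul, integral_finsetSum, hDsum, mul_left_comm]
    · congr 1
      rw [Finset.mul_sum]
      refine Finset.sum_congr rfl fun n _ => ?_
      split_ifs <;> simp [hc]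
    · intro n _
      split_ifs
      · exact hpow_int _
      · exact integrable_zero _ _ _
  let G : Set ℂ := {z : ℂ | ∃ m : ℕ, 0 < m ∧ z ^ m = 1}ᶜ
  have hG : MeasurableSet G := measurableSet_isRootOfUnity.compl
  have hlim : Tendsto (fun N => ∫ z, G.indicator (g N) z ∂σ) atTop (nhds 0) := by
    rw [← integral_zero ℂ ℝ (μ := σ)]
    refine tendsto_integral_of_dominated_convergence (fun _ => 1)
      (fun N => ((hg_meas N).indicator hG).aestronglyMeasurable) (integrable_const _)
      (fun N => hσ.mono fun z hz => ?_) (hσ.mono fun z hz => ?_)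
    · exact (norm_indicator_le_norm_self _ _).trans ((hg_abs N z hz).trans (hD1 N))
    · by_cases hzG : z ∈ G
      · simp only [Set.indicator_of_mem hzG]
        have hz' : ∀ m : ℕ, 0 < m → z ^ m ≠ 1 := fun m hm h1 => hzG ⟨m, hm, h1⟩
        have := (Complex.continuous_re.tendsto _).comp (tendsto_average_pow_of_dvd h_ud hd hz hz')
        refine this.congr fun N => ?_
        simp only [Function.comp_apply, g]
        rw [← Complex.ofReal_natCast, ← Complex.ofReal_inv, Complex.re_ofReal_mul, Complex.re_sum]
        congr 1
        refine Finset.sum_congr rfl fun n _ => ?_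
        split_ifs <;> simp
      · simp [Set.indicator_of_notMem hzG]
  have hbound : ∀ N, D N * (c - σ.real (rootsOfUnityExcept d)) ≤
      -∫ z, G.indicator (g N) z ∂σ := fun N => by
    have hE := measurableSet_rootsOfUnityExcept d
    have hE_int : Integrable ((rootsOfUnityExcept d).indicator fun _ => D N) σ :=
      (integrable_const _).indicator hE
    have hle : ∫ z, (G.indicator (g N) z - (rootsOfUnityExcept d).indicator (fun _ => D N) z) ∂σ ≤
        ∫ z, g N z ∂σ := by
      refine integral_mono_ae (((hg_int N).indicator hG).sub hE_int) (hg_int N)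
        (hσ.mono fun z hz => ?_)
      by_cases hzG : z ∈ G
      · have hzE : z ∉ rootsOfUnityExcept d := fun h => hzG h.1
        simp [hzG, hzE]
      · by_cases hzd : z ^ d = 1
        · have hzE : z ∉ rootsOfUnityExcept d := fun h => h.2 hzd
          have hgz : g N z = D N := by
            rw [hDsum]
            refine congrArg ((N : ℝ)⁻¹ * ·) (Finset.sum_congr rfl fun n _ => ?_)
            split_ifs with hn
            · obtain ⟨k, hk⟩ := hn
              simp [hk, pow_mul, hzd]
            · rfl
          simp [hzG, hzE, hgz, hD0 N]
        · have hzE : z ∈ rootsOfUnityExcept d := ⟨not_not.1 hzG, hzd⟩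
          simpa [hzG, hzE] using (abs_le.1 (hg_abs N z hz)).1
    rw [integral_sub ((hg_int N).indicator hG) hE_int, hg_integral,
      integral_indicator_const _ hE, smul_eq_mul] at hle
    linarith
  have hpos : 0 < c - σ.real (rootsOfUnityExcept d) := sub_pos.2 hcd
  have hlim' := hlim.neg.div_const (c - σ.real (rootsOfUnityExcept d))
  rw [neg_zero, zero_div] at hlim'
  exact squeeze_zero hD0 (fun N => (le_div_iff₀ hpos).2 (hbound N)) hlim'

open scoped CompactlySupported InnerProductSpace in
/-- The positive functional `g ↦ Re ⟪ξ, g(U) ξ⟫` on real continuous functions on the spectrum of a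
normal operator `U`. -/
noncomputable def spectralFunctional {H : Type*} [NormedAddCommGroup H] [InnerProductSpace ℂ H]
    [CompleteSpace H] (U : H →L[ℂ] H) (hU : IsStarNormal U) (ξ : H) :
    C_c(spectrum ℂ U, ℝ) →ₚ[ℝ] ℝ :=
  PositiveLinearMap.mk₀
    { toFun := fun g => (⟪ξ, cfcHom hU (⟨fun z => (g z : ℂ), by fun_prop⟩) ξ⟫_ℂ).re
      map_add' := fun g h => by
        rw [← Complex.add_re, ← inner_add_right, ← add_apply, ← map_add]
        congr 5
        ext z
        simp
      map_smul' := fun c g => by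
        have : (⟨fun z => ((c • g) z : ℂ), by fun_prop⟩ : C(spectrum ℂ U, ℂ)) =
            (c : ℂ) • (⟨fun z => (g z : ℂ), by fun_prop⟩ : C(spectrum ℂ U, ℂ)) := by
          ext z
          simp
        rw [this, map_smul, smul_apply, inner_smul_right]
        simp }
    (fun g hg => by
      let h : C(spectrum ℂ U, ℂ) := ⟨fun z => (√(g z) : ℂ), by fun_prop⟩
      have : (⟨fun z => (g z : ℂ), by fun_prop⟩ : C(spectrum ℂ U, ℂ)) = star h * h := by
        ext z
        have hz : 0 ≤ g z := hg z
        simp [h, ← Complex.ofReal_mul, Real.mul_self_sqrt hz]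
      simp only [LinearMap.coe_mk, AddHom.coe_mk]
      rw [this, map_mul, map_star, ContinuousLinearMap.star_eq_adjoint,
        show ∀ a b : H →L[ℂ] H, (a * b) ξ = a (b ξ) from fun _ _ => rfl,
        ContinuousLinearMap.adjoint_inner_right, inner_self_eq_norm_sq_to_K]
      norm_cast
      exact sq_nonneg _)

open scoped CompactlySupported InnerProductSpace in
/-- Spectral measures of unitary operators. -/
theorem exists_spectralMeasure {H : Type*} [NormedAddCommGroup H] [InnerProductSpace ℂ H]
    [CompleteSpace H] {U : H →L[ℂ] H} (hU : U ∈ unitary (H →L[ℂ] H)) (ξ : H) :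
    ∃ σ : Measure ℂ, IsFiniteMeasure σ ∧ (∀ᵐ z ∂σ, ‖z‖ = 1) ∧
      ∀ n : ℕ, ∫ z, (z ^ n).re ∂σ = (⟪ξ, (U ^ n) ξ⟫_ℂ).re := by
  have hN : IsStarNormal U := ⟨(Unitary.star_mul_self_of_mem hU).trans
    (Unitary.mul_star_self_of_mem hU).symm⟩
  have hS : ∀ z ∈ spectrum ℂ U, ‖z‖ = 1 := fun z hz => spectrum.norm_eq_one_of_unitary hU hz
  let ν := RealRMK.rieszMeasure (spectralFunctional U hN ξ)
  have hemb : MeasurableEmbedding (Subtype.val : spectrum ℂ U → ℂ) :=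
    MeasurableEmbedding.subtype_coe (spectrum.isClosed U).measurableSet
  have hfin : IsFiniteMeasure ν := by
    refine ⟨?_⟩
    let one : C_c(spectrum ℂ U, ℝ) := CompactlySupportedContinuousMap.continuousMapEquiv 1
    exact (RealRMK.rieszMeasure_le_of_eq_one (f := one) _ (fun _ => zero_le_one) isCompact_univ
      (fun _ _ => rfl)).trans_lt ENNReal.ofReal_lt_top
  refine ⟨ν.map Subtype.val, inferInstance, ?_, fun n => ?_⟩
  · rw [hemb.ae_map_iff]
    exact ae_of_all _ fun z => hS z z.2
  rw [hemb.integral_map]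
  let g : C_c(spectrum ℂ U, ℝ) := CompactlySupportedContinuousMap.continuousMapEquiv
    ⟨fun z => ((z : ℂ) ^ n).re, by fun_prop⟩
  refine (RealRMK.integral_rieszMeasure (spectralFunctional U hN ξ) g).trans ?_
  let w : C(spectrum ℂ U, ℂ) := (ContinuousMap.id ℂ).restrict (spectrum ℂ U) ^ n
  have hw : cfcHom hN w = U ^ n := by
    rw [map_pow, cfcHom_id]
  have hg : (⟨fun z => (g z : ℂ), by fun_prop⟩ : C(spectrum ℂ U, ℂ)) =
      (2⁻¹ : ℂ) • (w + star w) := by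
    ext z
    simp [g, w, Complex.re_eq_add_conj]
    ring
  change (⟪ξ, cfcHom hN (⟨fun z => (g z : ℂ), by fun_prop⟩) ξ⟫_ℂ).re = _
  rw [hg, map_smul, map_add, map_star, hw, ContinuousLinearMap.star_eq_adjoint,
    smul_apply, add_apply, inner_smul_right,
    inner_add_right, ContinuousLinearMap.adjoint_inner_right, ← inner_conj_symm ((U ^ n) ξ) ξ,
    Complex.add_conj]
  simp

/-- The correlations `μ(A ∩ T⁻ⁿA)`, minus `μ(A)²`, are the real parts of the Fourier coefficients of
a finite measure on the unit circle. -/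
theorem exists_measure_correlation {X : Type*} [MeasurableSpace X] (μ : Measure X)
    [IsProbabilityMeasure μ] (T : X ≃ᵐ X) (hT : MeasurePreserving T μ μ) {A : Set X}
    (hA : MeasurableSet A) :
    ∃ σ : Measure ℂ, IsFiniteMeasure σ ∧ (∀ᵐ z ∂σ, ‖z‖ = 1) ∧
      ∀ n : ℕ, μ.real (A ∩ (T^[n]) ⁻¹' A) = μ.real A ^ 2 + ∫ z, (z ^ n).re ∂σ := by
  let V : Lp ℂ 2 μ →ₗᵢ[ℂ] Lp ℂ 2 μ := Lp.compMeasurePreservingₗᵢ ℂ T hT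
  have hTs : MeasurePreserving T.symm μ μ := hT.symm T
  have hV : Function.Surjective V := fun g => by
    refine ⟨Lp.compMeasurePreserving T.symm hTs g, ?_⟩
    change Lp.compMeasurePreserving T hT (Lp.compMeasurePreserving T.symm hTs g) = g
    rw [← Lp.compMeasurePreserving_comp_apply]
    simp
  let E : Lp ℂ 2 μ ≃ₗᵢ[ℂ] Lp ℂ 2 μ := LinearIsometryEquiv.ofSurjective V hV
  let U := Unitary.linearIsometryEquiv.symm E
  let c : ℂ := μ.real A
  let f : Lp ℂ 2 μ := indicatorConstLp 2 hA (measure_ne_top μ A) 1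
  let u : Lp ℂ 2 μ := indicatorConstLp 2 MeasurableSet.univ (measure_ne_top μ _) 1
  obtain ⟨σ, hσ, h1, h⟩ := exists_spectralMeasure U.2 (f - c • u)
  refine ⟨σ, hσ, h1, fun n => ?_⟩
  have hpow : ∀ g : Lp ℂ 2 μ, ((U : Lp ℂ 2 μ →L[ℂ] Lp ℂ 2 μ) ^ n) g =
      Lp.compMeasurePreserving T^[n] (hT.iterate n) g := fun g => by
    rw [← Lp.compMeasurePreserving_iterate hT n]
    exact congrFun (hom_coe_pow (fun W : Lp ℂ 2 μ →L[ℂ] Lp ℂ 2 μ => (W : Lp ℂ 2 μ → Lp ℂ 2 μ)) rfl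
      (fun _ _ => rfl) _ n) g
  rw [h n, hpow, map_sub, show Lp.compMeasurePreserving T^[n] (hT.iterate n) (c • u) =
    c • Lp.compMeasurePreserving T^[n] (hT.iterate n) u from
      (Lp.compMeasurePreservingₗ ℂ T^[n] (hT.iterate n)).map_smul c u]
  simp only [f, u, Lp.indicatorConstLp_compMeasurePreserving, inner_sub_left, inner_sub_right,
    inner_smul_left, inner_smul_right, L2.inner_indicatorConstLp_one_indicatorConstLp_one]
  have hm : μ.real (T^[n] ⁻¹' A) = μ.real A :=
    (hT.iterate n).measureReal_preimage hA.nullMeasurableSet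
  simp [c, hm]
  ring

theorem statement10 (r : ℕ → ℕ) (hpos : ∀ n, 0 < r n)
    (h_ud : ∀ α : ℝ, Irrational α → ∀ m : ℤ, m ≠ 0 →
      Tendsto (fun N : ℕ => (N : ℂ)⁻¹ *
          ∑ n ∈ Finset.range N, eFun ((m : ℝ) * (r n : ℝ) * α))
        atTop (nhds 0))
    (h_div : ∀ d : ℕ, 0 < d → 0 < upperDensityNat {n : ℕ | d ∣ r n}) :
    IsSetOfMultRecurrence 1 (Set.range fun n => (r n : ℤ)) := by
  intro X _ μ _ T hT A hA hμA
  by_contra! hcon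
  obtain ⟨σ, _, hσ, hcorr⟩ := exists_measure_correlation μ T hT hA
  have hA0 : 0 < μ.real A := ENNReal.toReal_pos hμA.ne' (measure_ne_top μ A)
  obtain ⟨d, hd, hcd⟩ := exists_measureReal_rootsOfUnityExcept_lt σ (pow_pos hA0 2)
  have hc : ∀ n, ∫ z, (z ^ r n).re ∂σ = -μ.real A ^ 2 := fun n => by
    have h0 := hcon (r n) ⟨n, rfl⟩ (by exact_mod_cast (hpos n).ne')
    have hset : (⋂ i ∈ Finset.range (1 + 1), (⇑(T.toEquiv ^ ((i : ℤ) * (r n : ℤ)))) ⁻¹' A) =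
        A ∩ (T^[r n]) ⁻¹' A := by
      ext x
      have hx : (T.toEquiv ^ r n) x = T^[r n] x :=
        congrFun (Equiv.Perm.iterate_eq_pow T.toEquiv (r n)).symm x
      simp [Finset.range_add_one, hx, and_comm]
    have h1 : μ.real (A ∩ (T^[r n]) ⁻¹' A) = 0 := by
      rw [← hset, measureReal_def, nonpos_iff_eq_zero.1 h0, ENNReal.toReal_zero]
    linarith [hcorr (r n)]
  have hlim := tendsto_card_dvd_div (fun α hα => by simpa using h_ud α hα 1 one_ne_zero)
    hσ hc hd hcd
  refine (h_div d hd).ne' ?_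
  rw [upperDensityNat]
  convert hlim.limsup_eq
  exact Iff.rfl
end
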